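/- arXiv:1905.08001 — 2 statements merged into one kernel-verified Lean document; each statement's English description precedes it below -/
import Mathlib

section
/- For every multigraph F and all integers k ≥ 1 and K ≥ 1, there exist a constant D and an integer n0 such that every K-almost-regular graph G on n ≥ n0 vertices with minimum degree δ ≥ D·n^{1/(2k)} contains F^{2k-1} as a subgraph. -/
/-!
The number of paths of length `2 k` in a graph on `n` vertices whose degrees lie between `δ` and
`Δ = K δ` with `δ ≥ D n ^ (1 / (2 k))` is, up to constants, `n Δ ^ (2 k)`, hence far more than `n ^ 2`
when `D` is large. If the subdivision is absent, a positive proportion of these paths is shown to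
have a property that only `O(n ^ 2)` paths can have.

Call two vertices robustly linked (`Robust`) by length `ℓ` if they are joined by a path of length
`ℓ` avoiding any prescribed bounded set, and call a path clean (`Clean`) if no two of its
non-consecutive vertices are robustly linked by the length of the segment between them.

* There are boundedly many clean paths of given length between given ends (`clean_fixed_ends`): the
  ends not being robustly linked, all paths between them meet some bounded set, and one inducts.

* Conversely, if the subdivision is absent and clean paths of length `j ≤ k` have positive density,
  so do clean paths of length `2 j` (`step`). The clean `j`-paths contain trees of branching of order
  `Δ` from a positive proportion of the vertices (`exists_trees`). If at some root almost no two
  branches combine to a clean path of length `2 j`, a random sample of branches (`sampling`)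
  gives many disjoint, finitely branching systems of legs at that root such that any two legs with
  the same word from different systems carry a robustly linked pair
  (`exists_robust_of_not_clean`), at depths `b` and `c`, say. Ramsey's theorem and a pigeonhole
  argument over lines of words make `b` and `c` constant on a family of legs that share their
  initial parts up to a chosen depth `i₀` and are disjoint afterwards (`embed`).

* In such a homogeneous family the vertices at depth `i₀` of different systems can be joined by paths
  of length exactly `2 k` avoiding any bounded set (`link`): one walks down a leg from depth
  `i₀`, follows robust links of length `b + c` back and forth, and walks up another leg. The depth
  `i₀` is chosen, by division of `k + b` by `b + c`, so that the total length is right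
  (`exists_turn`). These vertices serve as branch vertices of a greedily embedded
  subdivision (`greedy`), a contradiction.

Applying `step` repeatedly, shortening the resulting paths when `2 j > j + 1`, gives a positive
density of clean paths first of length `k` (`dense`) and then of length `2 k`, which contradicts the
first point.
-/

open SimpleGraph

variable {V : Type*} [Fintype V] [DecidableEq V]

/-- The restriction of `p : ℕ → V` to `[0, ℓ]` is a path in `G`: consecutive vertices are
adjacent and all vertices `p 0, …, p ℓ` are distinct. -/
def PathSeq (G : SimpleGraph V) (ℓ : ℕ) (p : ℕ → V) : Prop :=
  (∀ i, i < ℓ → G.Adj (p i) (p (i + 1))) ∧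
  ∀ i j, i < j → j ≤ ℓ → p i ≠ p j

/-- `p` is padded beyond index `ℓ`; used so that each finite sequence corresponds to a
unique function `ℕ → V` when counting. -/
def PadSeq (ℓ : ℕ) (p : ℕ → V) : Prop := ∀ i, ℓ ≤ i → p i = p ℓ

/-- `f(ℓ, L) = L^(5^ℓ)`. -/
noncomputable def fBound (ℓ : ℕ) (L : ℝ) : ℝ := L ^ (5 ^ ℓ)

/-- The recursive notion of an `L`-good path of length `ℓ` (as a sequence `p 0, …, p ℓ`):
`p` is a path, every proper subpath is `L`-good, and the number of `L`-admissible paths of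
length `ℓ` from `p 0` to `p ℓ` is at most `f(ℓ, L)`. -/
def Good (G : SimpleGraph V) (L : ℝ) (ℓ : ℕ) (p : ℕ → V) : Prop :=
  (PathSeq G ℓ p ∧
    ∀ i j, i < j → j ≤ ℓ → ¬(i = 0 ∧ j = ℓ) → Good G L (j - i) (fun a => p (i + a))) ∧
  (Set.ncard {q : ℕ → V | q 0 = p 0 ∧ q ℓ = p ℓ ∧ PadSeq ℓ q ∧ PathSeq G ℓ q ∧
      ∀ i j, i < j → j ≤ ℓ → ¬(i = 0 ∧ j = ℓ) → Good G L (j - i) (fun a => q (i + a))} : ℝ)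
    ≤ fBound ℓ L
termination_by ℓ
decreasing_by all_goals omega

/-- `L`-admissible: a path all of whose proper subpaths are `L`-good. -/
def Admissible (G : SimpleGraph V) (L : ℝ) (ℓ : ℕ) (p : ℕ → V) : Prop :=
  PathSeq G ℓ p ∧
    ∀ i j, i < j → j ≤ ℓ → ¬(i = 0 ∧ j = ℓ) → Good G L (j - i) (fun a => p (i + a))

/-- There exist `N` pairwise internally vertex-disjoint paths of length `m` from `x` to `y`. -/
def ManyDisjointPaths (G : SimpleGraph V) (m : ℕ) (x y : V) (N : ℕ) : Prop :=
  ∃ P : Fin N → (ℕ → V),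
    (∀ a, PathSeq G m (P a) ∧ P a 0 = x ∧ P a m = y) ∧
    (∀ a b, a ≠ b → ∃ i, i ≤ m ∧ P a i ≠ P b i) ∧
    ∀ a b, a ≠ b → ∀ i j, 0 < i → i < m → 0 < j → j < m → P a i ≠ P b j

/-- A pair `(x, y)` of distinct vertices is `(i,j)`-rich (with parameters `k`, `h`, `K`, `δ`). -/
def Rich (G : SimpleGraph V) (k h : ℕ) (K δ : ℝ) (i j : ℕ) (x y : V) : Prop :=
  x ≠ y ∧
  ((2 * (i + j) * h * (2 * k + 1) + 2 * (i + 1) * j : ℕ) : ℝ) *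
      (K * δ) ^ ((i : ℤ) + (j : ℤ) - 1) <
    (Set.ncard {PQ : (ℕ → V) × (ℕ → V) |
      PathSeq G i PQ.1 ∧ PQ.1 0 = x ∧ PadSeq i PQ.1 ∧
      PathSeq G j PQ.2 ∧ PQ.2 0 = y ∧ PadSeq j PQ.2 ∧
      ManyDisjointPaths G (2 * k - i - j) (PQ.1 i) (PQ.2 j) ((h + 2) * (2 * k + 1) + 1)} : ℝ)

/-- `(x, y)` is an `(ℓ, L)`-bad pair: there is an `L`-admissible but not `L`-good path of
length `ℓ` from `x` to `y`. -/
def Bad (G : SimpleGraph V) (L : ℝ) (ℓ : ℕ) (x y : V) : Prop :=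
  ∃ p : ℕ → V, p 0 = x ∧ p ℓ = y ∧ Admissible G L ℓ p ∧ ¬ Good G L ℓ p

/-- `G` contains the `(s-1)`-subdivision of the multigraph on `Fin t` with multiplicity
function `m` as a subgraph: each parallel edge between `a < b` is replaced by a path of
length `s`, these paths being pairwise internally vertex-disjoint, with internal vertices
distinct from all branch vertices. -/
def ContainsMultiSubdiv (G : SimpleGraph V) (t : ℕ) (m : Fin t → Fin t → ℕ) (s : ℕ) : Prop :=
  ∃ (φ : Fin t → V) (π : (a : Fin t) → (b : Fin t) → Fin (m a b) → (ℕ → V)),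
    Function.Injective φ ∧
    (∀ a b, a < b → ∀ c, PathSeq G s (π a b c) ∧ π a b c 0 = φ a ∧ π a b c s = φ b) ∧
    (∀ a b, a < b → ∀ c, ∀ i, 0 < i → i < s → ∀ d, π a b c i ≠ φ d) ∧
    (∀ a b, a < b → ∀ a' b', a' < b' → ∀ (c : Fin (m a b)) (c' : Fin (m a' b')),
      (a, b, (c : ℕ)) ≠ (a', b', (c' : ℕ)) →
      ∀ i i', 0 < i → i < s → 0 < i' → i' < s → π a b c i ≠ π a' b' c' i')

/-- The number of vertices of `H = F^{2k-1}` where `F` is the multigraph on `Fin t` with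
multiplicity function `m`: the `t` branch vertices plus `2k - 1` internal vertices for each
edge (counted with multiplicity). -/
def nH (t k : ℕ) (m : Fin t → Fin t → ℕ) : ℕ :=
  t + (2 * k - 1) * ∑ p : Fin t × Fin t, if p.1 < p.2 then m p.1 p.2 else 0

/-- The minimum degree of `G`. -/
noncomputable def minDeg (G : SimpleGraph V) : ℕ :=
  sInf {d | ∃ v, (G.neighborSet v).ncard = d}

/-- The maximum degree of `G`. -/
noncomputable def maxDeg (G : SimpleGraph V) : ℕ :=
  sSup {d | ∃ v, (G.neighborSet v).ncard = d}

/-- Adjacency in the auxiliary graph `𝒢_ℓ(v)`: the `2k+1` vertices `u 0 = v, u 1, …, u k,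
u' 1, …, u' k` are all distinct and there exist `0 ≤ i, j ≤ k-1` such that the pair
`(u ℓ, u' ℓ)` is `(i,j)`-rich (symmetrised so that this defines a graph). -/
def AuxAdj (G : SimpleGraph V) (k h : ℕ) (K δ : ℝ) (ℓ : Fin (k + 1))
    (u u' : Fin (k + 1) → V) : Prop :=
  Function.Injective u ∧ Function.Injective u' ∧
  (∀ a b : Fin (k + 1), a ≠ 0 → b ≠ 0 → u a ≠ u' b) ∧
  ∃ i j : ℕ, i < k ∧ j < k ∧
    (Rich G k h K δ i j (u ℓ) (u' ℓ) ∨ Rich G k h K δ i j (u' ℓ) (u ℓ))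

/-- `r` satisfies the `k`-colour Ramsey property for `t`: every `k`-colouring of the edges of
the complete graph on `r` vertices contains a monochromatic complete graph on `t` vertices. -/
def RamseyProp (k t r : ℕ) : Prop :=
  ∀ χ : Fin r → Fin r → Fin k, (∀ a b, χ a b = χ b a) →
    ∃ (col : Fin k) (s : Finset (Fin r)), s.card = t ∧
      ∀ a ∈ s, ∀ b ∈ s, a ≠ b → χ a b = col

set_option linter.unusedSectionVars false

namespace SubdivProof

open Finset

/-! ### Paths avoiding a set, and robustly linked pairs -/

/-- There is a path of length `ℓ` from `u` to `w` none of whose internal vertices lies in `X`. -/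
def Conn (G : SimpleGraph V) (X : Finset V) (ℓ : ℕ) (u w : V) : Prop :=
  ∃ p : ℕ → V, PathSeq G ℓ p ∧ p 0 = u ∧ p ℓ = w ∧ ∀ i, 0 < i → i < ℓ → p i ∉ X

/-- The pair `(u, w)` is joined by a path of length `ℓ` whose interior avoids any prescribed set
of at most `B` vertices. -/
def Robust (G : SimpleGraph V) (B ℓ : ℕ) (u w : V) : Prop :=
  ∀ X : Finset V, X.card ≤ B → Conn G X ℓ u w

lemma PathSeq.ne {G : SimpleGraph V} {ℓ : ℕ} {p : ℕ → V} (hp : PathSeq G ℓ p) {i j : ℕ}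
    (hi : i ≤ ℓ) (hj : j ≤ ℓ) (h : i ≠ j) : p i ≠ p j := by
  rcases lt_or_gt_of_ne h with h | h
  · exact hp.2 i j h hj
  · exact (hp.2 j i h hi).symm

lemma PathSeq.reverse {G : SimpleGraph V} {ℓ : ℕ} {p : ℕ → V} (hp : PathSeq G ℓ p) :
    PathSeq G ℓ (fun i => p (ℓ - i)) := by
  refine ⟨fun i hi => ?_, fun i j hij hj => PathSeq.ne hp (by omega) (by omega) (by omega)⟩
  have := hp.1 (ℓ - (i + 1)) (by omega)
  rw [show ℓ - (i + 1) + 1 = ℓ - i by omega] at this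
  exact this.symm

lemma PathSeq.shift {G : SimpleGraph V} {ℓ a b : ℕ} {p : ℕ → V} (hp : PathSeq G ℓ p)
    (h : a + b ≤ ℓ) : PathSeq G b (fun i => p (a + i)) :=
  ⟨fun i hi => hp.1 (a + i) (by omega),
    fun i j hij hj => PathSeq.ne hp (by omega) (by omega) (by omega)⟩

lemma Conn.symm {G : SimpleGraph V} {X : Finset V} {ℓ : ℕ} {u w : V} (h : Conn G X ℓ u w) :
    Conn G X ℓ w u := by
  obtain ⟨p, hp, h0, hl, hX⟩ := h
  refine ⟨fun i => p (ℓ - i), PathSeq.reverse hp, by simpa using hl, by simpa using h0,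
    fun i hi hi' => hX _ (by omega) (by omega)⟩

lemma Robust.symm {G : SimpleGraph V} {B ℓ : ℕ} {u w : V} (h : Robust G B ℓ u w) :
    Robust G B ℓ w u := fun X hX => (h X hX).symm

/-- Concatenation of two sequences, the second one taking over after index `a`. -/
def cat (a : ℕ) (p q : ℕ → V) : ℕ → V := fun i => if i ≤ a then p i else q (i - a)

lemma PathSeq.append {G : SimpleGraph V} {a b : ℕ} {p q : ℕ → V} (hp : PathSeq G a p)
    (hq : PathSeq G b q) (h : p a = q 0)
    (hd : ∀ i j, i < a → 0 < j → j ≤ b → p i ≠ q j) : PathSeq G (a + b) (cat a p q) := by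
  refine ⟨fun i hi => ?_, fun i j hij hj => ?_⟩
  · unfold cat
    rcases lt_trichotomy i a with h1 | h1 | h1
    · rw [if_pos h1.le, if_pos (by omega)]; exact hp.1 i h1
    · subst h1
      rw [if_pos le_rfl, if_neg (by omega), h]
      simpa using hq.1 0 (by omega)
    · rw [if_neg (by omega), if_neg (by omega), show i + 1 - a = i - a + 1 by omega]
      exact hq.1 _ (by omega)
  · unfold cat
    by_cases h1 : j ≤ a
    · rw [if_pos (by omega), if_pos h1]; exact hp.2 i j hij h1
    · rw [if_neg h1]
      split_ifs with h2
      · rcases h2.lt_or_eq with h2 | h2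
        · exact hd i _ h2 (by omega) (by omega)
        · subst h2; rw [h]; exact hq.2 0 _ (by omega) (by omega)
      · exact hq.2 _ _ (by omega) (by omega)

/-- Prolonging a connection backwards by a fixed path `p`. -/
lemma Conn.cons {G : SimpleGraph V} {X : Finset V} {a b : ℕ} {p : ℕ → V} {z : V}
    (hp : PathSeq G a p) (hX : ∀ i, 0 < i → i ≤ a → p i ∉ X) (hz : ∀ i ≤ a, p i ≠ z)
    (hq : Conn G (X ∪ (range (a + 1)).image p) b (p a) z) : Conn G X (a + b) (p 0) z := by
  obtain ⟨q, hq, h0, hb, hqX⟩ := hq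
  have hb0 : b ≠ 0 := by rintro rfl; exact hz a le_rfl (h0.symm.trans hb)
  refine ⟨cat a p q, PathSeq.append hp hq h0.symm ?_, by simp [cat], ?_, ?_⟩
  · intro i j hi hj hjb heq
    rcases hjb.lt_or_eq with h | h
    · have := hqX j hj h
      simp only [mem_union, mem_image, mem_range, not_or, not_exists, not_and] at this
      exact this.2 i (by omega) heq
    · subst h; exact hz i hi.le (heq.trans hb)
  · unfold cat
    rw [if_neg (by omega), show a + b - a = b by omega, hb]
  · intro i hi hi'
    unfold cat
    split_ifs with h
    · exact hX i hi h
    · have := hqX (i - a) (by omega) (by omega)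
      simp only [mem_union, not_or] at this
      exact this.1

/-- Alternating chain of robust links: if every vertex of `L` is robustly linked to every vertex
of `R` and to `Z`, then from any vertex of `L` one reaches `Z` by `2 q + 1` links. -/
lemma chain {G : SimpleGraph V} {B ℓ : ℕ} (hℓ : 0 < ℓ) {L R : Finset V} {Z : V}
    (hLR : ∀ y ∈ L, ∀ r ∈ R, Robust G B ℓ y r) (hLZ : ∀ y ∈ L, Robust G B ℓ y Z)
    (hd : Disjoint L R) (hZ : Z ∉ L) (hL : B < L.card) (hR : B < R.card) (q : ℕ) :
    ∀ (X : Finset V), X.card + (q + 1) * (2 * ℓ + 3) ≤ B → ∀ y ∈ L,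
      Conn G X ((2 * q + 1) * ℓ) y Z := by
  induction q with
  | zero =>
    intro X hX y hy
    simpa using hLZ y hy X (by omega)
  | succ q ih =>
    intro X hX y hy
    have hX' : X.card + (q + 1) * (2 * ℓ + 3) + (2 * ℓ + 3) ≤ B := by
      calc _ = X.card + (q + 1 + 1) * (2 * ℓ + 3) := by ring
        _ ≤ B := hX
    have hpos : 0 < (q + 1) * (2 * ℓ + 3) := by positivity
    have hlow : 2 * ℓ + 3 ≤ (q + 1) * (2 * ℓ + 3) := Nat.le_mul_of_pos_left _ (by omega)
    have c1 : (insert Z X).card ≤ X.card + 1 := card_insert_le _ _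
    have c2 : (insert y (insert Z X)).card ≤ X.card + 2 := (card_insert_le _ _).trans (by omega)
    obtain ⟨r, hr, hr'⟩ : ∃ r ∈ R, r ∉ insert Z X :=
      exists_mem_notMem_of_card_lt_card (by omega)
    obtain ⟨y', hy', hy''⟩ : ∃ y' ∈ L, y' ∉ insert y (insert Z X) :=
      exists_mem_notMem_of_card_lt_card (by omega)
    simp only [mem_insert, not_or] at hr' hy''
    have hyr : ∀ y ∈ L, y ≠ r := fun y hy h => (Finset.disjoint_left.1 hd hy) (h ▸ hr)
    obtain ⟨p, hp, hp0, hpl, hpX⟩ := hLR y hy r hr (insert y' (insert Z X))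
      ((card_insert_le _ _).trans (by omega))
    have hpavoid : ∀ i ≤ ℓ, p i ≠ y' ∧ p i ≠ Z := by
      intro i hi
      rcases Nat.eq_zero_or_pos i with h | h
      · subst h; rw [hp0]; exact ⟨Ne.symm hy''.1, fun h => hZ (h ▸ hy)⟩
      · rcases hi.lt_or_eq with h' | h'
        · have := hpX i h h'
          simp only [mem_insert, not_or] at this
          exact ⟨this.1, this.2.1⟩
        · subst h'; rw [hpl]; exact ⟨(hyr y' hy').symm, hr'.1⟩
    set X1 := X ∪ (range (ℓ + 1)).image p with hX1
    have cX1 : X1.card ≤ X.card + (ℓ + 1) := by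
      refine (card_union_le _ _).trans ?_
      have := card_image_le (s := range (ℓ + 1)) (f := p)
      simp only [card_range] at this; omega
    obtain ⟨p', hp', hp0', hpl', hpX'⟩ := (hLR y' hy' r hr).symm (insert Z X1)
      ((card_insert_le _ _).trans (by omega))
    set X2 := X1 ∪ (range (ℓ + 1)).image p' with hX2
    have cX2 : X2.card ≤ X1.card + (ℓ + 1) := by
      refine (card_union_le _ _).trans ?_
      have := card_image_le (s := range (ℓ + 1)) (f := p')
      simp only [card_range] at this; omega
    have h3 : Conn G X2 ((2 * q + 1) * ℓ) y' Z := ih X2 (by omega) y' hy'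
    have h2 : Conn G X1 (ℓ + (2 * q + 1) * ℓ) r Z := by
      rw [← hp0']
      refine Conn.cons hp' ?_ ?_ (hpl' ▸ h3)
      · intro i hi hi'
        rcases hi'.lt_or_eq with h | h
        · have := hpX' i hi h
          simp only [mem_insert, not_or] at this
          exact this.2
        · subst h; rw [hpl', hX1]
          simp only [mem_union, mem_image, mem_range, not_or, not_exists, not_and]
          exact ⟨hy''.2.2, fun i hi => (hpavoid i (by omega)).1⟩
      · intro i hi
        rcases Nat.eq_zero_or_pos i with h | h
        · subst h; rw [hp0']; exact hr'.1
        · rcases hi.lt_or_eq with h' | h'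
          · have := hpX' i h h'
            simp only [mem_insert, not_or] at this
            exact this.1
          · subst h'; rw [hpl']; exact hy''.2.1
    have h1 : Conn G X (ℓ + (ℓ + (2 * q + 1) * ℓ)) y Z := by
      rw [← hp0]
      refine Conn.cons hp ?_ (fun i hi => (hpavoid i hi).2) (hpl ▸ h2)
      intro i hi hi'
      rcases hi'.lt_or_eq with h | h
      · have := hpX i hi h
        simp only [mem_insert, not_or] at this
        exact this.2.2
      · subst h; rw [hpl]; exact hr'.2
    convert h1 using 1
    ring

/-! ### Greedy embedding -/

/-- If branch vertices are pairwise connected by paths of length `s` avoiding any prescribed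
bounded set, the subdivision is found by embedding one edge at a time. -/
lemma greedy {G : SimpleGraph V} {t : ℕ} {m : Fin t → Fin t → ℕ} {s B : ℕ} (φ : Fin t → V)
    (hφ : Function.Injective φ)
    (hB : t + Fintype.card (Σ a : Fin t, Σ b : Fin t, Fin (m a b)) * (s + 1) ≤ B)
    (h : ∀ a b, a < b → ∀ X : Finset V, X.card ≤ B → Conn G X s (φ a) (φ b)) :
    ContainsMultiSubdiv G t m s := by
  have key : ∀ S : Finset (Σ a : Fin t, Σ b : Fin t, Fin (m a b)), (∀ e ∈ S, e.1 < e.2.1) →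
      ∃ π : (Σ a : Fin t, Σ b : Fin t, Fin (m a b)) → ℕ → V,
        (∀ e ∈ S, PathSeq G s (π e) ∧ π e 0 = φ e.1 ∧ π e s = φ e.2.1) ∧
        (∀ e ∈ S, ∀ i, 0 < i → i < s → ∀ d, π e i ≠ φ d) ∧
        (∀ e ∈ S, ∀ e' ∈ S, e ≠ e' → ∀ i i', 0 < i → i < s → 0 < i' → i' < s →
          π e i ≠ π e' i') := by
    intro S
    induction S using Finset.induction_on with
    | empty => exact fun _ => ⟨fun e _ => φ e.1, by simp, by simp, by simp⟩
    | insert e S he ih =>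
      intro hS
      obtain ⟨π, h1, h2, h3⟩ := ih (fun e' he' => hS e' (mem_insert_of_mem he'))
      set X : Finset V := univ.image φ ∪ S.biUnion (fun e' => (range (s + 1)).image (π e'))
      have hX : X.card ≤ B := by
        refine (card_union_le _ _).trans (le_trans (add_le_add ?_ ?_) hB)
        · exact card_image_le.trans (by simp)
        · refine card_biUnion_le.trans ((sum_le_card_nsmul _ _ (s + 1) fun e' _ => ?_).trans ?_)
          · exact card_image_le.trans (by simp)
          · rw [smul_eq_mul]
            exact Nat.mul_le_mul_right _ (card_le_univ S)
      obtain ⟨p, hp, hp0, hps, hpX⟩ := h e.1 e.2.1 (hS e (mem_insert_self _ _)) X hX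
      have hpφ : ∀ i, 0 < i → i < s → ∀ d, p i ≠ φ d := by
        intro i hi hi' d hd
        exact hpX i hi hi' (mem_union_left _ (mem_image.2 ⟨d, mem_univ _, hd.symm⟩))
      have hpπ : ∀ i, 0 < i → i < s → ∀ e' ∈ S, ∀ i' < s, p i ≠ π e' i' := by
        intro i hi hi' e' he' i' hi'' hh
        exact hpX i hi hi' (mem_union_right _ (mem_biUnion.2 ⟨e', he', mem_image.2
          ⟨i', mem_range.2 (by omega), hh.symm⟩⟩))
      have hne : ∀ e' ∈ S, e' ≠ e := fun e' he' h => he (h ▸ he')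
      refine ⟨Function.update π e p, ?_, ?_, ?_⟩
      · intro e' he'
        rcases mem_insert.1 he' with rfl | he'
        · simp only [Function.update_self]; exact ⟨hp, hp0, hps⟩
        · rw [Function.update_of_ne (hne e' he')]; exact h1 e' he'
      · intro e' he'
        rcases mem_insert.1 he' with rfl | he'
        · simpa only [Function.update_self] using hpφ
        · rw [Function.update_of_ne (hne e' he')]; exact h2 e' he'
      · intro e1 he1 e2 he2 hne12 i i' hi his hi' his'
        rcases mem_insert.1 he1 with he1' | he1'
        · rcases mem_insert.1 he2 with he2' | he2'
          · exact absurd (he1'.trans he2'.symm) hne12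
          · rw [he1', Function.update_self, Function.update_of_ne (hne e2 he2')]
            exact hpπ i hi his e2 he2' i' his'
        · rcases mem_insert.1 he2 with he2' | he2'
          · rw [he2', Function.update_self, Function.update_of_ne (hne e1 he1')]
            exact (hpπ i' hi' his' e1 he1' i his).symm
          · rw [Function.update_of_ne (hne e2 he2'), Function.update_of_ne (hne e1 he1')]
            exact h3 e1 he1' e2 he2' hne12 i i' hi his hi' his'
  obtain ⟨π, h1, h2, h3⟩ := key (univ.filter fun e => e.1 < e.2.1) (by simp)
  refine ⟨φ, fun a b c => π ⟨a, b, c⟩, hφ, ?_, ?_, ?_⟩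
  · intro a b hab c; exact h1 ⟨a, b, c⟩ (by simpa using hab)
  · intro a b hab c; exact h2 ⟨a, b, c⟩ (by simpa using hab)
  · intro a b hab a' b' hab' c c' hne
    refine h3 ⟨a, b, c⟩ (by simpa using hab) ⟨a', b', c'⟩ (by simpa using hab') ?_
    intro heq
    apply hne
    have := congrArg (fun e : (Σ a : Fin t, Σ b : Fin t, Fin (m a b)) =>
      (e.1, e.2.1, (e.2.2 : ℕ))) heq
    simpa using this

/-! ### Linking two branch vertices inside a homogeneous family of trees -/

/-- The depth `i₀` at which the branch vertices are placed. Half the required length is either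
`q (b + c) - i₀` (an odd number `2 q - 1` of robust links, with legs of lengths `b - i₀` and
`c - i₀`) or `q (b + c) + (c - i₀)` (an even number `2 q` of links, with two legs of length
`c - i₀`). -/
lemma exists_turn (k b c : ℕ) (hb : 1 ≤ b) (hbc : b ≤ c) (hc : c ≤ k) :
    ∃ i₀ q : ℕ, 1 ≤ i₀ ∧ i₀ ≤ c ∧ 1 ≤ q ∧
      ((i₀ ≤ b ∧ k + i₀ = q * (b + c)) ∨ k = q * (b + c) + (c - i₀)) := by
  have hq : 1 ≤ (k + b) / (b + c) := (Nat.one_le_div_iff (by omega)).2 (by omega)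
  have hr := Nat.mod_lt (k + b) (show b + c > 0 by omega)
  have hdm := Nat.div_add_mod' (k + b) (b + c)
  generalize (k + b) / (b + c) = q at *
  generalize (k + b) % (b + c) = r at *
  by_cases h : r < b
  · exact ⟨b - r, q, by omega, by omega, hq, Or.inl ⟨by omega, by omega⟩⟩
  · exact ⟨c - (r - b), q, by omega, by omega, hq, Or.inr (by omega)⟩

/-- `P i α` are the legs of tree number `i` on a line of words `α` branching at depth `i₀`. Depth
`b` of each tree is robustly linked to depth `c` of every later tree, for each `α`. The vertices at
depth `i₀` (which do not depend on `α`) of two trees with middle indices are joined by a path of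
length exactly `2 k` avoiding `X`: descend from both along the legs of a common `α` that avoids `X`,
then bounce between vertices of the `S₀` first and the `S₀` last trees along robust links. Passing
to another `α` is what makes the branch vertices reachable by many disjoint routes. -/
lemma link {G : SimpleGraph V} {B B₀ j k b c i₀ q S₀ t τ : ℕ} {P : ℕ → Fin τ → ℕ → V}
    (hb : 1 ≤ b) (hbc : b ≤ c) (hcj : c ≤ j) (hjk : j ≤ k) (hi₀ : 1 ≤ i₀) (hi₀c : i₀ ≤ c)
    (hq : 1 ≤ q)
    (hk : (i₀ ≤ b ∧ k + i₀ = q * (b + c)) ∨ k = q * (b + c) + (c - i₀))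
    (hP : ∀ i < 2 * S₀ + t, ∀ α, PathSeq G j (P i α))
    (hdist : ∀ i < 2 * S₀ + t, ∀ i' < 2 * S₀ + t, ∀ α α' d d', 1 ≤ d → d ≤ j → 1 ≤ d' → d' ≤ j →
      P i α d = P i' α' d' → i = i' ∧ d = d' ∧ (i₀ < d → α = α'))
    (hsame : ∀ i < 2 * S₀ + t, ∀ α α', ∀ d ≤ i₀, P i α d = P i α' d)
    (hrob : ∀ i i', i < i' → i' < 2 * S₀ + t → ∀ α, Robust G B (b + c) (P i α b) (P i' α c))
    (hB : B₀ + 20 * k ≤ B) (hS : B < S₀) (hτ : 2 * B₀ < τ) (α₀ : Fin τ)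
    (a a' : ℕ) (ha : S₀ ≤ a) (haa : a < a') (ha' : a' < S₀ + t) (X : Finset V)
    (hX : X.card ≤ B₀) : Conn G X (2 * k) (P a α₀ i₀) (P a' α₀ i₀) := by
  -- A letter `α` whose legs below `a` and `a'` avoid `X`: every vertex of `X` kills at most one
  -- letter for each of the two indices.
  obtain ⟨α, hα⟩ : ∃ α : Fin τ, ∀ d, i₀ < d → d ≤ j → P a α d ∉ X ∧ P a' α d ∉ X := by
    by_contra! hcon
    have hcon' : ∀ α : Fin τ, ∃ x : X ⊕ X, ∃ d, i₀ < d ∧ d ≤ j ∧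
        Sum.elim (fun y : X => P a α d = (y : V)) (fun y : X => P a' α d = (y : V)) x := by
      intro α
      obtain ⟨d, hd, hdj, h⟩ := hcon α
      by_cases h1 : P a α d ∈ X
      · exact ⟨Sum.inl ⟨_, h1⟩, d, hd, hdj, rfl⟩
      · exact ⟨Sum.inr ⟨_, h h1⟩, d, hd, hdj, rfl⟩
    choose x hx using hcon'
    have hinj : Function.Injective x := by
      intro α β hαβ
      obtain ⟨d, hd, hdj, h⟩ := hx α
      obtain ⟨d', hd', hdj', h'⟩ := hx β
      rw [hαβ] at h
      rcases hxβ : x β with y | y <;> rw [hxβ] at h h' <;>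
        simp only [Sum.elim_inl, Sum.elim_inr] at h h'
      · exact (hdist a (by omega) a (by omega) α β d d' (by omega) hdj (by omega) hdj'
          (h.trans h'.symm)).2.2 hd
      · exact (hdist a' (by omega) a' (by omega) α β d d' (by omega) hdj (by omega) hdj'
          (h.trans h'.symm)).2.2 hd
    have := Fintype.card_le_of_injective x hinj
    simp only [Fintype.card_fin, Fintype.card_sum, Fintype.card_coe] at this
    omega
  rw [hsame a (by omega) α₀ α i₀ le_rfl, hsame a' (by omega) α₀ α i₀ le_rfl]
  have hab : ∀ d d', 1 ≤ d → d ≤ j → 1 ≤ d' → d' ≤ j → P a α d ≠ P a' α d' := by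
    intro d d' h1 h2 h3 h4 h
    have := (hdist a (by omega) a' (by omega) α α d d' h1 h2 h3 h4 h).1
    omega
  -- Attaching the two legs.
  have legs : ∀ e e' len, i₀ ≤ e → e ≤ j → i₀ ≤ e' → e' ≤ j →
      (∀ X' : Finset V, X'.card ≤ B₀ + 2 * (k + 1) → Conn G X' len (P a α e) (P a' α e')) →
      Conn G X ((e - i₀) + ((e' - i₀) + len)) (P a α i₀) (P a' α i₀) := by
    intro e e' len he hej he' hej' h
    set X1 := X ∪ (range (e - i₀ + 1)).image (fun i => P a α (i₀ + i)) with hX1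
    have c1 : X1.card ≤ B₀ + (k + 1) := by
      refine (card_union_le _ _).trans (add_le_add hX (card_image_le.trans ?_))
      simp; omega
    have := h (X1 ∪ (range (e' - i₀ + 1)).image (fun i => P a' α (i₀ + i))) (by
      refine (card_union_le _ _).trans
        ((add_le_add c1 (card_image_le.trans (?_ : _ ≤ k + 1))).trans (by omega))
      simp; omega)
    have h2 := Conn.cons (G := G) (X := X1) (a := e' - i₀) (b := len)
      (p := fun i => P a' α (i₀ + i)) (z := P a α e)
      (PathSeq.shift (hP a' (by omega) α) (by omega)) ?_ ?_ (by
        simp only [show i₀ + (e' - i₀) = e' by omega]; exact this.symm)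
    · have h3 := Conn.cons (G := G) (X := X) (a := e - i₀) (b := e' - i₀ + len)
        (p := fun i => P a α (i₀ + i)) (z := P a' α i₀)
        (PathSeq.shift (hP a (by omega) α) (by omega)) ?_ ?_ (by
          simp only [show i₀ + (e - i₀) = e by omega]; simpa using h2.symm)
      · simpa using h3
      · intro i hi hi'
        exact (hα _ (by omega) (by omega)).1
      · intro i hi
        exact hab _ _ (by omega) (by omega) (by omega) (by omega)
    · intro i hi hi'
      rw [hX1]
      simp only [mem_union, mem_image, mem_range, not_or, not_exists, not_and]
      refine ⟨(hα _ (by omega) (by omega)).2, fun i' hi' => ?_⟩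
      exact hab _ _ (by omega) (by omega) (by omega) (by omega)
    · intro i hi
      exact (hab _ _ (by omega) (by omega) (by omega) (by omega)).symm
  -- Relay vertices: depth `b` in trees of small index, depth `c` in trees of large index.
  set L : Finset V := (range S₀).image (fun y => P y α b)
  set R : Finset V := (range S₀).image (fun y => P (S₀ + t + y) α c)
  have hLc : L.card = S₀ := by
    rw [card_image_of_injOn, card_range]
    intro x hx y hy hxy
    simp only [coe_range, Set.mem_Iio] at hx hy
    exact (hdist x (by omega) y (by omega) α α b b hb (by omega) hb (by omega) hxy).1
  have hRc : R.card = S₀ := by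
    rw [card_image_of_injOn, card_range]
    intro x hx y hy hxy
    simp only [coe_range, Set.mem_Iio] at hx hy
    have := (hdist _ (by omega) _ (by omega) α α c c (by omega) (by omega) (by omega)
      (by omega) hxy).1
    omega
  have hLR : ∀ y ∈ L, ∀ r ∈ R, Robust G B (b + c) y r := by
    intro y hy r hr
    obtain ⟨y, hy1, rfl⟩ := mem_image.1 hy
    obtain ⟨r, hr1, rfl⟩ := mem_image.1 hr
    rw [mem_range] at hy1 hr1
    exact hrob _ _ (by omega) (by omega) α
  have hLm : ∀ y ∈ L, ∀ i, S₀ ≤ i → i < 2 * S₀ + t → Robust G B (b + c) y (P i α c) := by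
    intro y hy i hi hi'
    obtain ⟨y, hy1, rfl⟩ := mem_image.1 hy
    rw [mem_range] at hy1
    exact hrob _ _ (by omega) (by omega) α
  have hLne : ∀ y ∈ L, ∀ i, S₀ ≤ i → i < 2 * S₀ + t → ∀ d, 1 ≤ d → d ≤ j → y ≠ P i α d := by
    intro y hy i hi hi' d hd hd' h
    obtain ⟨y, hy1, rfl⟩ := mem_image.1 hy
    rw [mem_range] at hy1
    have := (hdist _ (by omega) _ (by omega) α α _ _ hb (by omega) (by omega) (by omega) h).1
    omega
  have hqk : q * (b + c) ≤ 2 * k := by omega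
  have hq2 : q * 2 ≤ q * (b + c) := Nat.mul_le_mul_left _ (by omega)
  have hbc2 : b + c ≤ q * (b + c) := Nat.le_mul_of_pos_left _ (by omega)
  have hqq : q * (2 * (b + c) + 3) = 2 * (q * (b + c)) + 3 * q := by ring
  obtain ⟨q, rfl⟩ : ∃ q', q = q' + 1 := ⟨q - 1, by omega⟩
  rcases hk with ⟨hib, hk⟩ | hk
  -- First kind of turn: one leg ends at depth `b`, the other at depth `c`, with `2 q + 1` links.
  · have := legs b c ((2 * q + 1) * (b + c)) hib (by omega) hi₀c hcj ?_
    · convert this using 1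
      have : (q + 1) * (b + c) * 2 = (2 * q + 1) * (b + c) + (b + c) := by ring
      omega
    · intro X' hX'
      refine chain (B := B) (L := insert (P a α b) L) (R := R) (by omega) ?_ ?_ ?_ ?_ ?_ ?_ q X'
        (by omega) _ (mem_insert_self _ _)
      · intro y hy r hr
        rcases mem_insert.1 hy with rfl | hy
        · obtain ⟨r, hr1, rfl⟩ := mem_image.1 hr
          rw [mem_range] at hr1
          exact hrob _ _ (by omega) (by omega) α
        · exact hLR y hy r hr
      · intro y hy
        rcases mem_insert.1 hy with rfl | hy
        · exact hrob _ _ (by omega) (by omega) α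
        · exact hLm y hy _ (by omega) (by omega)
      · rw [Finset.disjoint_left]
        intro y hy hr
        obtain ⟨r, hr1, rfl⟩ := mem_image.1 hr
        rw [mem_range] at hr1
        rcases mem_insert.1 hy with h | hy
        · have := (hdist _ (by omega) _ (by omega) α α _ _ (by omega) (by omega) (by omega)
            (by omega) h).1
          omega
        · exact hLne _ hy _ (by omega) (by omega) c (by omega) (by omega) rfl
      · intro hy
        rcases mem_insert.1 hy with h | hy
        · exact hab b c (by omega) (by omega) (by omega) (by omega) h.symm
        · exact hLne _ hy _ (by omega) (by omega) c (by omega) (by omega) rfl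
      · exact (card_le_card (subset_insert _ _)).trans_lt' (by omega)
      · omega
  -- Second kind of turn: both legs end at depth `c`; one more link leads back to a vertex of `L`.
  · have := legs c c ((b + c) + (2 * q + 1) * (b + c)) hi₀c hcj hi₀c hcj ?_
    · convert this using 1
      have : (q + 1) * (b + c) * 2 = (b + c) + (2 * q + 1) * (b + c) := by ring
      omega
    · intro X' hX'
      have hZL : P a' α c ∉ L := fun hy =>
        hLne _ hy _ (by omega) (by omega) c (by omega) (by omega) rfl
      obtain ⟨y, hy, hyX⟩ : ∃ y ∈ L, y ∉ X' := exists_mem_notMem_of_card_lt_card (by omega)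
      obtain ⟨p, hp, hp0, hpl, hpX⟩ := (hLm y hy a (by omega) (by omega)).symm
        (insert (P a' α c) X') ((card_insert_le _ _).trans (by omega))
      rw [← hp0]
      refine Conn.cons hp ?_ ?_ ?_
      · intro i hi hi'
        rcases hi'.lt_or_eq with h | h
        · have := hpX i hi h
          simp only [mem_insert, not_or] at this
          exact this.2
        · subst h; rwa [hpl]
      · intro i hi
        rcases Nat.eq_zero_or_pos i with h | h
        · subst h; rw [hp0]
          exact hab _ _ (by omega) (by omega) (by omega) (by omega)
        · rcases hi.lt_or_eq with h' | h'
          · have := hpX i h h'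
            simp only [mem_insert, not_or] at this
            exact this.1
          · subst h'; rw [hpl]; exact hLne _ hy _ (by omega) (by omega) c (by omega) (by omega)
      · rw [hpl]
        refine chain (B := B) (L := L) (R := R) (by omega) hLR ?_ ?_ hZL (by omega) (by omega) q _
          ?_ _ hy
        · intro y hy
          exact hLm y hy _ (by omega) (by omega)
        · rw [Finset.disjoint_left]
          intro y hy hr
          obtain ⟨r, hr1, rfl⟩ := mem_image.1 hr
          rw [mem_range] at hr1
          exact hLne _ hy _ (by omega) (by omega) c (by omega) (by omega) rfl
        · have c1 : ((range (b + c + 1)).image p).card ≤ b + c + 1 := card_image_le.trans (by simp)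
          have c2 := card_union_le X' ((range (b + c + 1)).image p)
          omega

/-! ### Clean paths and their number -/

/-- A path is clean if no two of its vertices at distance at least two along the path are
robustly linked by paths of that length. -/
def Clean (G : SimpleGraph V) (B ℓ : ℕ) (p : ℕ → V) : Prop :=
  PathSeq G ℓ p ∧ ∀ s e, s + 2 ≤ e → e ≤ ℓ → ¬ Robust G B (e - s) (p s) (p e)

lemma Clean.shift {G : SimpleGraph V} {B ℓ a b : ℕ} {p : ℕ → V} (hp : Clean G B ℓ p)
    (h : a + b ≤ ℓ) : Clean G B b (fun i => p (a + i)) := by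
  refine ⟨PathSeq.shift hp.1 h, fun s e hse he => ?_⟩
  have := hp.2 (a + s) (a + e) (by omega) (by omega)
  rwa [show a + e - (a + s) = e - s by omega] at this

lemma Clean.initial {G : SimpleGraph V} {B ℓ b : ℕ} {p : ℕ → V} (hp : Clean G B ℓ p)
    (h : b ≤ ℓ) : Clean G B b p := by
  simpa using Clean.shift (a := 0) hp (by omega : 0 + b ≤ ℓ)

/-- The restriction of a sequence to its first `ℓ + 1` terms. -/
def restr (ℓ : ℕ) (p : ℕ → V) : Fin (ℓ + 1) → V := fun i => p i

/-- The number of sequences of length `ℓ` (that is, with `ℓ + 1` terms) occurring as initial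
segments of members of `S`. -/
noncomputable def cnt (ℓ : ℕ) (S : Set (ℕ → V)) : ℕ := (restr ℓ '' S).ncard

lemma restr_eq_iff {ℓ : ℕ} {p q : ℕ → V} : restr ℓ p = restr ℓ q ↔ ∀ i ≤ ℓ, p i = q i := by
  constructor
  · intro h i hi
    exact congrFun h ⟨i, by omega⟩
  · intro h
    funext i
    exact h i (by omega)

lemma cnt_mono {ℓ : ℕ} {S T : Set (ℕ → V)} (h : S ⊆ T) : cnt ℓ S ≤ cnt ℓ T :=
  Set.ncard_le_ncard (Set.image_mono h) (Set.toFinite _)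

/-- If one piece of data determines another on `S`, it takes at least as many values. -/
lemma ncard_image_le_of_det {α β γ : Type*} {S : Set α} {r : α → β} {s : α → γ}
    (h : ∀ x ∈ S, ∀ y ∈ S, s x = s y → r x = r y) (hf : (s '' S).Finite) :
    (r '' S).ncard ≤ (s '' S).ncard := by
  rcases S.eq_empty_or_nonempty with rfl | hS
  · simp
  have h1 : ∀ b : β, ∃ c : γ, b ∈ r '' S → ∃ x ∈ S, r x = b ∧ s x = c := by
    intro b
    by_cases hb : b ∈ r '' S
    · obtain ⟨x, hx, rfl⟩ := hb
      exact ⟨s x, fun _ => ⟨x, hx, rfl, rfl⟩⟩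
    · exact ⟨(s hS.some), fun h => absurd h hb⟩
  choose f hf' using h1
  refine Set.ncard_le_ncard_of_injOn f ?_ ?_ hf
  · intro b hb
    obtain ⟨x, hx, _, h2⟩ := hf' b hb
    exact ⟨x, hx, h2⟩
  · intro b hb b' hb' hbb
    obtain ⟨x, hx, h1, h2⟩ := hf' b hb
    obtain ⟨x', hx', h1', h2'⟩ := hf' b' hb'
    rw [← h1, ← h1']
    exact h x hx x' hx' (by rw [h2, h2', hbb])

lemma cnt_le_mul {ℓ a b : ℕ} {S A C : Set (ℕ → V)} (f g : (ℕ → V) → ℕ → V)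
    (hf : ∀ p ∈ S, f p ∈ A) (hg : ∀ p ∈ S, g p ∈ C)
    (h : ∀ p ∈ S, ∀ q ∈ S, restr a (f p) = restr a (f q) → restr b (g p) = restr b (g q) →
      restr ℓ p = restr ℓ q) : cnt ℓ S ≤ cnt a A * cnt b C := by
  unfold cnt
  rw [← Set.ncard_prod]
  refine (ncard_image_le_of_det (s := fun p => (restr a (f p), restr b (g p))) ?_
    (Set.toFinite _)).trans (Set.ncard_le_ncard ?_ (Set.toFinite _))
  · intro p hp q hq hpq
    simp only [Prod.mk.injEq] at hpq
    exact h p hp q hq hpq.1 hpq.2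
  · rintro _ ⟨p, hp, rfl⟩
    exact ⟨⟨_, hf p hp, rfl⟩, ⟨_, hg p hp, rfl⟩⟩

lemma cnt_biUnion_le {ι : Type*} (s : Finset ι) (ℓ : ℕ) (S : ι → Set (ℕ → V)) :
    cnt ℓ (⋃ i ∈ s, S i) ≤ ∑ i ∈ s, cnt ℓ (S i) := by
  classical
  induction s using Finset.induction_on with
  | empty => simp [cnt]
  | insert a s ha ih =>
    rw [sum_insert ha, Finset.set_biUnion_insert]
    unfold cnt at *
    rw [Set.image_union]
    exact (Set.ncard_union_le _ _).trans (by omega)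

/-- The number of clean paths of given length with given ends is bounded: if one exists, its
ends are not robustly linked, so every path of this length between them has an internal vertex in
some fixed bounded set, and splits there into two shorter clean paths. -/
lemma clean_fixed_ends (B : ℕ) (ℓ : ℕ) : 1 ≤ ℓ → ∃ g : ℕ, ∀ (V : Type) [Fintype V]
    [DecidableEq V] (G : SimpleGraph V) (u w : V),
      cnt ℓ {p : ℕ → V | Clean G B ℓ p ∧ p 0 = u ∧ p ℓ = w} ≤ g := by
  induction ℓ using Nat.strong_induction_on with
  | _ ℓ ih =>
  intro hℓ
  rcases hℓ.eq_or_lt with rfl | hℓ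
  · refine ⟨1, fun V _ _ G u w => ?_⟩
    unfold cnt
    rw [Set.ncard_le_one (Set.toFinite _)]
    rintro _ ⟨p, ⟨-, hp0, hp1⟩, rfl⟩ _ ⟨q, ⟨-, hq0, hq1⟩, rfl⟩
    rw [restr_eq_iff]
    intro i hi
    interval_cases i
    · rw [hp0, hq0]
    · rw [hp1, hq1]
  · have : ∀ i, ∃ g : ℕ, i ∈ Ioo 0 ℓ → ∀ (V : Type) [Fintype V]
        [DecidableEq V] (G : SimpleGraph V) (u w : V),
        cnt i {p : ℕ → V | Clean G B i p ∧ p 0 = u ∧ p i = w} ≤ g := by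
      intro i
      by_cases hi : i ∈ Ioo 0 ℓ
      · rw [mem_Ioo] at hi
        obtain ⟨g, hg⟩ := ih i hi.2 hi.1
        exact ⟨g, fun _ => hg⟩
      · exact ⟨0, fun h => absurd h hi⟩
    choose g hg using this
    refine ⟨B * ∑ i ∈ Ioo 0 ℓ, g i * g (ℓ - i), fun V _ _ G u w => ?_⟩
    set S := {p : ℕ → V | Clean G B ℓ p ∧ p 0 = u ∧ p ℓ = w}
    rcases S.eq_empty_or_nonempty with h0 | ⟨p₀, hp₀⟩
    · rw [h0]; simp [cnt]
    have hrob : ¬ Robust G B ℓ u w := by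
      have := hp₀.1.2 0 ℓ (by omega) le_rfl
      rwa [hp₀.2.1, hp₀.2.2, Nat.sub_zero] at this
    unfold Robust at hrob
    push Not at hrob
    obtain ⟨X, hXB, hX⟩ := hrob
    have hcov : S ⊆ ⋃ x ∈ X, ⋃ i ∈ Ioo 0 ℓ, {p ∈ S | p i = x} := by
      intro p hp
      by_contra hcon
      simp only [Set.mem_iUnion, not_exists] at hcon
      refine hX ⟨p, hp.1.1, hp.2.1, hp.2.2, fun i hi hi' hpi => ?_⟩
      exact hcon (p i) hpi i (mem_Ioo.2 ⟨hi, hi'⟩) ⟨hp, rfl⟩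
    refine (cnt_mono hcov).trans ((cnt_biUnion_le _ _ _).trans ?_)
    refine (sum_le_card_nsmul X _ (∑ i ∈ Ioo 0 ℓ, g i * g (ℓ - i)) fun x _ => ?_).trans
      (Nat.mul_le_mul_right _ hXB)
    refine (cnt_biUnion_le _ _ _).trans (sum_le_sum fun i hi => ?_)
    have hi' := mem_Ioo.1 hi
    refine le_trans ?_ (Nat.mul_le_mul (hg i hi V G u x)
      (hg (ℓ - i) (mem_Ioo.2 ⟨by omega, by omega⟩) V G x w))
    refine cnt_le_mul (fun p => p) (fun p a => p (i + a)) ?_ ?_ ?_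
    · rintro p ⟨hp, hpi⟩
      exact ⟨Clean.initial hp.1 hi'.2.le, hp.2.1, hpi⟩
    · rintro p ⟨hp, hpi⟩
      refine ⟨Clean.shift hp.1 (by omega), by simpa using hpi, ?_⟩
      simp only [show i + (ℓ - i) = ℓ by omega]
      exact hp.2.2
    · intro p _ q _ h1 h2
      rw [restr_eq_iff] at *
      intro a ha
      rcases le_total a i with h | h
      · exact h1 a h
      · have := h2 (a - i) (by omega)
        simpa only [show i + (a - i) = a by omega] using this

lemma clean_total {B ℓ g : ℕ} {V : Type} [Fintype V] [DecidableEq V] {G : SimpleGraph V}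
    (hg : ∀ u w : V, cnt ℓ {p : ℕ → V | Clean G B ℓ p ∧ p 0 = u ∧ p ℓ = w} ≤ g) :
    cnt ℓ {p : ℕ → V | Clean G B ℓ p} ≤ Fintype.card V ^ 2 * g := by
  have hcov : {p : ℕ → V | Clean G B ℓ p} ⊆ ⋃ uw ∈ (univ : Finset (V × V)),
      {p : ℕ → V | Clean G B ℓ p ∧ p 0 = uw.1 ∧ p ℓ = uw.2} := by
    intro p hp
    simp only [Set.mem_iUnion]
    exact ⟨(p 0, p ℓ), mem_univ _, hp, rfl, rfl⟩
  refine (cnt_mono hcov).trans ((cnt_biUnion_le _ _ _).trans ?_)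
  refine (sum_le_card_nsmul _ _ g fun x _ => hg _ _).trans ?_
  simp [sq]

/-- Extending by one vertex: if every member of `S` has at most `m` continuations in `S` after
its first `d + 1` vertices, passing to length `d + 1` multiplies the count by at most `m`. -/
lemma cnt_ext {d m : ℕ} {S T : Set (ℕ → V)} (hST : S ⊆ T)
    (h : ∀ p ∈ S, {w | ∃ q ∈ S, (∀ i ≤ d, q i = p i) ∧ q (d + 1) = w}.ncard ≤ m) :
    cnt (d + 1) S ≤ cnt d T * m := by
  classical
  refine le_trans ?_ (Nat.mul_le_mul_right m (cnt_mono hST))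
  unfold cnt
  have hfin := Set.toFinite (restr (d + 1) '' S)
  have hfin' := Set.toFinite (restr d '' S)
  rw [Set.ncard_eq_toFinset_card _ hfin, Set.ncard_eq_toFinset_card _ hfin']
  rw [mul_comm]
  refine card_le_mul_card_image_of_maps_to (f := fun x : Fin (d + 2) → V => fun i : Fin (d + 1) =>
    x i.castSucc) ?_ m ?_
  · intro x hx
    simp only [Set.Finite.mem_toFinset] at hx ⊢
    obtain ⟨p, hp, rfl⟩ := hx
    exact ⟨p, hp, rfl⟩
  · intro y hy
    simp only [Set.Finite.mem_toFinset] at hy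
    obtain ⟨p, hp, rfl⟩ := hy
    refine le_trans ?_ (h p hp)
    rw [← Set.ncard_coe_finset]
    refine Set.ncard_le_ncard_of_injOn (fun x => x (Fin.last _)) ?_ ?_ (Set.toFinite _)
    · intro x hx
      simp only [coe_filter, Set.Finite.mem_toFinset, Set.mem_ofPred_eq] at hx
      obtain ⟨⟨q, hq, rfl⟩, hx⟩ := hx
      exact ⟨q, hq, restr_eq_iff.1 hx, rfl⟩
    · intro x hx x' hx' hxx
      simp only [coe_filter, Set.Finite.mem_toFinset, Set.mem_ofPred_eq] at hx hx'
      funext i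
      refine Fin.lastCases hxx (fun i => ?_) i
      exact congrFun (hx.2.trans hx'.2.symm) i

/-! ### Trees of paths inside a dense family of paths -/

lemma cnt_ext_degree {G : SimpleGraph V} {Δ d : ℕ} (hΔ : ∀ v, (G.neighborSet v).ncard ≤ Δ)
    {S T : Set (ℕ → V)} (hS : ∀ p ∈ S, PathSeq G (d + 1) p) (hST : S ⊆ T) :
    cnt (d + 1) S ≤ cnt d T * Δ := by
  refine cnt_ext hST fun p _ => (Set.ncard_le_ncard ?_ (Set.toFinite _)).trans (hΔ (p d))
  rintro w ⟨q, hq, hqp, rfl⟩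
  have := (hS q hq).1 d (by omega)
  rwa [hqp d le_rfl] at this

lemma cnt_pathSeq_le {G : SimpleGraph V} {Δ : ℕ} (hΔ : ∀ v, (G.neighborSet v).ncard ≤ Δ)
    (d : ℕ) : cnt d {p | PathSeq G d p} ≤ Fintype.card V * Δ ^ d := by
  induction d with
  | zero =>
    unfold cnt
    refine (Set.ncard_le_ncard (Set.subset_univ _) (Set.toFinite _)).trans ?_
    rw [Set.ncard_univ, Nat.card_eq_fintype_card]
    simp
  | succ d ih =>
    refine (cnt_ext_degree hΔ (T := {p | PathSeq G d p}) (fun p hp => hp) ?_).trans ?_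
    · intro p hp
      simpa using PathSeq.shift (a := 0) (b := d) hp (by omega)
    · rw [pow_succ, ← mul_assoc]
      exact Nat.mul_le_mul_right _ ih

lemma cnt_clean_succ_le {G : SimpleGraph V} {B Δ : ℕ} (hΔ : ∀ v, (G.neighborSet v).ncard ≤ Δ)
    (d : ℕ) : cnt (d + 1) {p | Clean G B (d + 1) p} ≤ cnt d {p | Clean G B d p} * Δ :=
  cnt_ext_degree hΔ (fun _ hp => hp.1) fun _ hp => Clean.initial hp (by omega)

/-- `T` encodes an `M`-ary tree of depth `j` of sequences starting at `v`: a word gives a branch,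
two branches agree as long as their words do, and the children of a node are distinct. -/
structure IsTree {j M : ℕ} (v : V) (T : (Fin j → Fin M) → ℕ → V) : Prop where
  root : ∀ w, T w 0 = v
  agree : ∀ w w' : Fin j → Fin M, ∀ d ≤ j, (∀ i : Fin j, (i : ℕ) < d → w i = w' i) →
    T w d = T w' d
  branch : ∀ w w' : Fin j → Fin M, ∀ d : Fin j, (∀ i < d, w i = w' i) → w d ≠ w' d →
    T w (d + 1) ≠ T w' (d + 1)

/-- A dense family `Q` of paths contains, from linearly many starting vertices, full trees of large
branching: repeatedly discard the paths having few extensions. -/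
lemma exists_trees {G : SimpleGraph V} {Δ M : ℕ} (hΔ : ∀ v, (G.neighborSet v).ncard ≤ Δ)
    (hΔ1 : 1 ≤ Δ) (j : ℕ) : ∀ (c : ℝ) (Q : Set (ℕ → V)), (∀ p ∈ Q, PathSeq G j p) →
      c * Fintype.card V * (Δ : ℝ) ^ j ≤ cnt j Q → (M : ℝ) * 2 ^ j ≤ c * Δ →
      ∃ V' : Finset V, c * Fintype.card V ≤ 2 ^ j * V'.card ∧
        ∀ v ∈ V', ∃ T : (Fin j → Fin M) → ℕ → V, IsTree v T ∧ ∀ w, T w ∈ Q := by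
  classical
  induction j with
  | zero =>
    intro c Q hQ hc hM
    refine ⟨univ.filter fun v => ∃ p ∈ Q, p 0 = v, ?_, ?_⟩
    · refine (le_trans (by simp) hc).trans ?_
      rw [pow_zero, one_mul, Nat.cast_le, ← Set.ncard_coe_finset]
      unfold cnt
      refine Set.ncard_le_ncard_of_injOn (fun x => x 0) ?_ ?_ (Set.toFinite _)
      · rintro _ ⟨p, hp, rfl⟩
        simpa using ⟨p, hp, rfl⟩
      · intro x _ y _ hxy
        funext i
        rw [show i = 0 from Fin.fin_one_eq_zero i]
        exact hxy
    · intro v hv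
      simp only [mem_filter, mem_univ, true_and] at hv
      obtain ⟨p, hp, hpv⟩ := hv
      refine ⟨fun _ => p, ⟨fun _ => hpv, fun w w' d hd _ => rfl, fun w w' d => d.elim0⟩,
        fun _ => hp⟩
  | succ j ih =>
    intro c Q hQ hc hM
    set ext : (ℕ → V) → Set V := fun p => {w | ∃ q ∈ Q, (∀ i ≤ j, q i = p i) ∧ q (j + 1) = w}
      with hext
    set Q' : Set (ℕ → V) := {p | PathSeq G j p ∧ M ≤ (ext p).ncard} with hQ'
    have hpre : ∀ p ∈ Q, PathSeq G j p := fun p hp => by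
      simpa using PathSeq.shift (a := 0) (b := j) (hQ p hp) (by omega)
    have h1 : cnt (j + 1) {p ∈ Q | p ∉ Q'} ≤ cnt j {p | PathSeq G j p} * M := by
      refine cnt_ext (fun p hp => hpre p hp.1) fun p hp => ?_
      have : (ext p).ncard < M := by
        by_contra h
        exact hp.2 ⟨hpre p hp.1, not_lt.1 h⟩
      refine (Set.ncard_le_ncard ?_ (Set.toFinite _)).trans this.le
      rintro w ⟨q, hq, h⟩
      exact ⟨q, hq.1, h⟩
    have h2 : cnt (j + 1) {p ∈ Q | p ∈ Q'} ≤ cnt j Q' * Δ :=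
      cnt_ext_degree hΔ (fun p hp => hQ p hp.1) fun p hp => hp.2
    have h3 : cnt (j + 1) Q ≤ cnt (j + 1) {p ∈ Q | p ∉ Q'} + cnt (j + 1) {p ∈ Q | p ∈ Q'} := by
      have : Q = {p ∈ Q | p ∉ Q'} ∪ {p ∈ Q | p ∈ Q'} := by
        ext p
        simp only [Set.mem_union, Set.mem_ofPred_eq]
        tauto
      conv_lhs => rw [this]
      unfold cnt
      rw [Set.image_union]
      exact Set.ncard_union_le _ _
    have h4 : cnt (j + 1) Q ≤ Fintype.card V * Δ ^ j * M + cnt j Q' * Δ :=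
      h3.trans (add_le_add (h1.trans (Nat.mul_le_mul_right _ (cnt_pathSeq_le hΔ j))) h2)
    have h5 : (cnt (j + 1) Q : ℝ) ≤ Fintype.card V * (Δ : ℝ) ^ j * M + cnt j Q' * Δ := by
      exact_mod_cast h4
    have hM' : (M : ℝ) ≤ c / 2 * Δ := by
      have h2j : (1 : ℝ) ≤ 2 ^ j := one_le_pow₀ (by norm_num)
      have : (M : ℝ) * 2 ≤ M * 2 ^ (j + 1) := by
        rw [pow_succ]
        exact mul_le_mul_of_nonneg_left (by linarith) (Nat.cast_nonneg _)
      linarith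
    have hΔ0 : (0 : ℝ) < Δ := by exact_mod_cast hΔ1
    obtain ⟨V', hV', hT⟩ := ih (c / 2) Q' (fun p hp => hp.1) (by
      have h6 : Fintype.card V * (Δ : ℝ) ^ j * M ≤ Fintype.card V * (Δ : ℝ) ^ j * (c / 2 * Δ) :=
        mul_le_mul_of_nonneg_left hM' (by positivity)
      rw [pow_succ] at hc
      have : c / 2 * Fintype.card V * (Δ : ℝ) ^ j * Δ ≤ cnt j Q' * Δ := by linarith
      exact le_of_mul_le_mul_right this hΔ0) (by rw [pow_succ] at hM; linarith)
    refine ⟨V', by rw [pow_succ]; linarith, fun v hv => ?_⟩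
    obtain ⟨T, hTree, hTQ⟩ := hT v hv
    have he : ∀ w, ∃ e : Fin M → V, Function.Injective e ∧ ∀ a, e a ∈ ext (T w) := by
      intro w
      have hf := Set.toFinite (ext (T w))
      have hcard : (univ : Finset (Fin M)).card ≤ hf.toFinset.card := by
        rw [← Set.ncard_eq_toFinset_card _ hf]
        simpa using (hTQ w).2
      obtain ⟨f⟩ : Nonempty (Fin M ↪ hf.toFinset) :=
        Function.Embedding.nonempty_of_card_le (by
          rwa [Fintype.card_coe, Fintype.card_fin, ← card_fin M])
      exact ⟨fun a => f a, fun a b hab => f.injective (Subtype.ext hab),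
        fun a => hf.mem_toFinset.1 (f a).2⟩
    choose e heinj he using he
    choose q hqQ hqT hqe using he
    have hinit : ∀ w w' : Fin (j + 1) → Fin M, ∀ d : ℕ,
        (∀ i : Fin (j + 1), (i : ℕ) < d → w i = w' i) →
        ∀ i : Fin j, (i : ℕ) < d →
          Fin.init (α := fun _ => Fin M) w i = Fin.init (α := fun _ => Fin M) w' i :=
      fun w w' d h i hi => h i.castSucc (by simpa using hi)
    refine ⟨fun w => q (Fin.init w) (w (Fin.last j)), ⟨?_, ?_, ?_⟩, fun w => hqQ _ _⟩
    · intro w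
      rw [hqT _ _ 0 (by omega)]
      exact hTree.root _
    · intro w w' d hd h
      rcases hd.lt_or_eq with hd | rfl
      · rw [hqT _ _ d (by omega), hqT _ _ d (by omega)]
        exact hTree.agree _ _ d (by omega) (hinit w w' d h)
      · have : w = w' := funext fun i => h i i.2
        rw [this]
    · intro w w' d h hne
      induction d using Fin.lastCases with
      | last =>
        have : Fin.init (α := fun _ => Fin M) w = Fin.init (α := fun _ => Fin M) w' :=
          funext fun i => h i.castSucc (Fin.castSucc_lt_last i)
        simp only [Fin.val_last]
        rw [hqe, hqe, this]
        exact fun hh => hne (heinj _ hh)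
      | cast d =>
        simp only [Fin.val_castSucc]
        rw [hqT _ _ _ (by omega), hqT _ _ _ (by omega)]
        exact hTree.branch _ _ d (fun i hi => h i.castSucc (by simpa using hi)) hne

/-! ### Ramsey-type lemmas -/

lemma ramsey_aux (C : Type) [Fintype C] [Nonempty C] (L : ℕ) : ∃ N, ∀ (χ : ℕ → ℕ → C)
    (S : Finset ℕ), N ≤ S.card → ∃ (f : ℕ → ℕ) (g : ℕ → C), (∀ i < L, f i ∈ S) ∧
      ∀ i i', i < i' → i' < L → f i < f i' ∧ χ (f i) (f i') = g i := by
  classical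
  induction L with
  | zero => exact ⟨0, fun χ S _ => ⟨id, fun _ => Classical.arbitrary C, by simp, by simp⟩⟩
  | succ L ih =>
    obtain ⟨N, hN⟩ := ih
    refine ⟨Fintype.card C * N + 1, fun χ S hS => ?_⟩
    have hne : S.Nonempty := card_pos.1 (by omega)
    set x := S.min' hne
    have hx : x ∈ S := min'_mem _ _
    obtain ⟨κ, -, hκ⟩ := exists_le_card_fiber_of_mul_le_card_of_maps_to (s := S.erase x)
      (t := (univ : Finset C)) (f := χ x) (n := N) (fun _ _ => mem_univ _) univ_nonempty
      (by rw [card_erase_of_mem hx, card_univ]; omega)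
    obtain ⟨f, g, hf, hg⟩ := hN χ _ hκ
    simp only [mem_filter, mem_erase] at hf
    refine ⟨fun i => Nat.casesOn i x f, fun i => Nat.casesOn i κ g, ?_, ?_⟩
    · rintro (_ | i) hi
      · exact hx
      · exact (hf i (by omega)).1.2
    · rintro (_ | i) (_ | i') hii hi'
      · omega
      · have := hf i' (by omega)
        exact ⟨lt_of_le_of_ne (min'_le _ _ this.1.2) (Ne.symm this.1.1), this.2⟩
      · omega
      · exact hg i i' (by omega) (by omega)

/-- Ramsey's theorem for finite colourings of the increasing pairs of an initial segment. -/
lemma ramsey (C : Type) [Fintype C] [Nonempty C] (s : ℕ) : ∃ N, ∀ χ : Fin N → Fin N → C,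
    ∃ (f : ℕ → Fin N) (κ : C), ∀ i i', i < i' → i' < s → f i < f i' ∧ χ (f i) (f i') = κ := by
  classical
  obtain ⟨N, hN⟩ := ramsey_aux C (Fintype.card C * s + 1)
  refine ⟨N + 1, fun χ => ?_⟩
  obtain ⟨f, g, hf, hg⟩ := hN (fun a b => χ (Fin.ofNat _ a) (Fin.ofNat _ b)) (range (N + 1))
    (by simp)
  obtain ⟨κ, -, hκ⟩ := exists_le_card_fiber_of_mul_le_card_of_maps_to
    (s := range (Fintype.card C * s + 1)) (t := (univ : Finset C)) (f := g) (n := s)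
    (fun _ _ => mem_univ _) univ_nonempty (by rw [card_range, card_univ]; omega)
  set S := (range (Fintype.card C * s + 1)).filter fun x => g x = κ
  obtain ⟨S', hS', hc⟩ := exists_subset_card_eq hκ
  set e := S'.orderEmbOfFin hc
  have he : ∀ x, e x < Fintype.card C * s + 1 ∧ g (e x) = κ := by
    intro x
    have := hS' (S'.orderEmbOfFin_mem hc x)
    simpa [S] using this
  refine ⟨fun i => if h : i < s then Fin.ofNat _ (f (e ⟨i, h⟩)) else 0, κ, ?_⟩
  intro i i' hii hi'
  have hi : i < s := by omega
  simp only [hi, hi', dif_pos]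
  have h1 := hg (e ⟨i, hi⟩) (e ⟨i', hi'⟩) (e.strictMono (by simpa using hii)) (he _).1
  have h2 := hf _ (he ⟨i, hi⟩).1
  have h3 := hf _ (he ⟨i', hi'⟩).1
  rw [mem_range] at h2 h3
  refine ⟨?_, h1.2.trans (he _).2⟩
  rw [Fin.lt_def]
  simp only [Fin.ofNat_eq_cast, Fin.val_natCast]
  rw [Nat.mod_eq_of_lt h2, Nat.mod_eq_of_lt h3]
  exact h1.1

/-- If every colour is assigned a coordinate direction, any colouring of a large grid has a line
parallel to the direction of some colour on which that colour occurs many times. -/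
lemma exists_line {ι C : Type} [Fintype ι] [DecidableEq ι] [Fintype C] {A τ : ℕ} (dir : C → ι)
    (hA : Fintype.card C * τ < A) (col : (ι → Fin A) → C) :
    ∃ (κ : C) (l : ι → Fin A) (e : Fin τ → Fin A), Function.Injective e ∧
      ∀ α, col (Function.update l (dir κ) (e α)) = κ := by
  classical
  by_contra! hcon
  have h1 : ∀ κ l, (univ.filter fun α => col (Function.update l (dir κ) α) = κ).card ≤ τ := by
    intro κ l
    by_contra! h
    obtain ⟨e⟩ : Nonempty (Fin τ ↪ (univ.filter fun α => col (Function.update l (dir κ) α) = κ)) :=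
      Function.Embedding.nonempty_of_card_le (by
        rw [Fintype.card_coe, Fintype.card_fin]; exact h.le)
    obtain ⟨α, hα⟩ := hcon κ l (fun α => e α) fun a b hab => e.injective (Subtype.ext hab)
    have := (e α).2
    rw [mem_filter] at this
    exact hα this.2
  have h2 : ∀ κ, (univ.filter fun l => col l = κ).card * A ≤ Fintype.card (ι → Fin A) * τ := by
    intro κ
    have : (univ.filter fun x : (ι → Fin A) × Fin A =>
        col (Function.update x.1 (dir κ) x.2) = κ).card ≤ Fintype.card (ι → Fin A) * τ := by
      rw [card_eq_sum_card_fiberwise (f := Prod.fst) (t := univ) (fun _ _ => mem_univ _)]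
      refine (sum_le_card_nsmul _ _ τ fun l _ => ?_).trans (by simp)
      refine le_trans ?_ (h1 κ l)
      refine card_le_card_of_injOn Prod.snd ?_ ?_
      · rintro ⟨l', α⟩ hx
        simp only [coe_filter, mem_filter, mem_univ, true_and, Set.mem_ofPred_eq] at hx ⊢
        rw [← hx.2]; exact hx.1
      · rintro ⟨l1, α1⟩ hx ⟨l2, α2⟩ hy hxy
        simp only [coe_filter, mem_filter, mem_univ, true_and, Set.mem_ofPred_eq] at hx hy
        exact Prod.ext (hx.2.trans hy.2.symm) hxy
    refine le_trans ?_ this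
    calc _ = ((univ.filter fun l => col l = κ) ×ˢ (univ : Finset (Fin A))).card := by simp
      _ ≤ _ := by
        refine card_le_card_of_injOn
          (fun x => (Function.update x.1 (dir κ) x.2, x.1 (dir κ))) ?_ ?_
        · rintro ⟨l, β⟩ hx
          simp at hx ⊢
          exact hx
        · rintro ⟨l, β⟩ - ⟨l', β'⟩ - h
          simp only [Prod.mk.injEq] at h ⊢
          refine ⟨?_, by simpa using congrFun h.1 (dir κ)⟩
          have := congrArg (fun f => Function.update f (dir κ) (l (dir κ))) h.1
          simp only [Function.update_idem, Function.update_eq_self] at this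
          rw [h.2] at this
          simpa using this
  have h3 : Fintype.card (ι → Fin A) * A ≤ Fintype.card (ι → Fin A) * (Fintype.card C * τ) := by
    calc Fintype.card (ι → Fin A) * A = (∑ κ, (univ.filter fun l => col l = κ).card) * A := by
          rw [← card_univ, card_eq_sum_card_fiberwise (f := col) (t := univ)
            (fun _ _ => mem_univ _)]
      _ ≤ ∑ _κ : C, Fintype.card (ι → Fin A) * τ := by
          rw [sum_mul]; exact sum_le_sum fun κ _ => h2 κ
      _ = _ := by simp; ring
  have h4 : 0 < Fintype.card (ι → Fin A) := by
    have : Nonempty (Fin A) := ⟨⟨0, by omega⟩⟩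
    exact Fintype.card_pos
  have := Nat.le_of_mul_le_mul_left h3 h4
  omega

/-! ### Choosing generic branches of a tree -/

/-- Resampling one coordinate: an event is rare if, on it, the value of the coordinate `u` is
determined by the others. -/
lemma card_event_le {I : Type} [Fintype I] [DecidableEq I] {M : ℕ} (E : Finset (I → Fin M)) (u : I)
    (h : ∀ σ ∈ E, ∀ σ' ∈ E, (∀ x ≠ u, σ x = σ' x) → σ u = σ' u) :
    E.card * M ≤ Fintype.card (I → Fin M) := by
  calc E.card * M = (E ×ˢ (univ : Finset (Fin M))).card := by simp
    _ ≤ (univ : Finset (I → Fin M)).card := by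
      refine card_le_card_of_injOn (fun x => Function.update x.1 u x.2) (fun _ _ => mem_univ _) ?_
      rintro ⟨σ, a⟩ hx ⟨σ', a'⟩ hy hxy
      simp only [coe_product, Set.mem_prod, mem_coe] at hx hy hxy
      have h1 : ∀ x ≠ u, σ x = σ' x := fun x hx => by
        simpa [Function.update_of_ne hx] using congrFun hxy x
      have h2 := h σ hx.1 σ' hy.1 h1
      refine Prod.ext (funext fun x => ?_) (by simpa using congrFun hxy u)
      by_cases hx : x = u
      · rw [hx]; exact h2
      · exact h1 x hx
    _ = _ := card_univ

/-- Independence of distinct coordinates: prescribing the values on the range of an injection `f`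
to lie in `C` has probability `|C| / M ^ |ι|`. -/
lemma card_event_le' {I ι : Type} [Fintype I] [DecidableEq I] [Fintype ι] [DecidableEq ι] {M : ℕ}
    (f : ι → I) (hf : Function.Injective f) (C : Finset (ι → Fin M)) :
    (univ.filter fun σ : I → Fin M => σ ∘ f ∈ C).card * M ^ Fintype.card ι ≤
      C.card * Fintype.card (I → Fin M) := by
  calc _ = ((univ.filter fun σ : I → Fin M => σ ∘ f ∈ C) ×ˢ
        (univ : Finset (ι → Fin M))).card := by simp
    _ ≤ (C ×ˢ (univ : Finset (I → Fin M))).card := by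
      refine card_le_card_of_injOn (fun x => (x.1 ∘ f, Function.extend f x.2 x.1)) ?_ ?_
      · rintro ⟨σ, x⟩ hx
        simp at hx ⊢
        exact hx
      · rintro ⟨σ, x⟩ - ⟨σ', x'⟩ - h
        simp only [Prod.mk.injEq] at h ⊢
        refine ⟨funext fun y => ?_, funext fun y => ?_⟩
        · by_cases hy : ∃ z, f z = y
          · obtain ⟨z, rfl⟩ := hy
            exact congrFun h.1 z
          · have := congrFun h.2 y
            rwa [Function.extend_apply' _ _ _ hy, Function.extend_apply' _ _ _ hy] at this
        · have := congrFun h.2 (f y)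
          rwa [hf.extend_apply, hf.extend_apply] at this
    _ = _ := by rw [card_product, card_univ]

/-- The word obtained from `l` by replacing its letters from position `e` on by `0`. -/
def trunc {J A : ℕ} [NeZero A] (e : ℕ) (l : Fin J → Fin A) : Fin J → Fin A :=
  fun x => if (x : ℕ) < e then l x else 0

lemma trunc_eq_iff {J A : ℕ} [NeZero A] {e : ℕ} {l l' : Fin J → Fin A} :
    trunc e l = trunc e l' ↔ ∀ x : Fin J, (x : ℕ) < e → l x = l' x := by
  constructor
  · intro h x hx
    simpa [trunc, hx] using congrFun h x
  · intro h
    funext x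
    unfold trunc
    split_ifs with hx
    · exact h x hx
    · rfl

/-- Random sampling inside a tree: one can choose `N` systems of branches, each indexed by words
over an alphabet of size `A`, such that all non-root vertices are distinct except for those forced
to coincide by the tree structure, and such that no two branches from different systems with the
same index form a pair in a given sparse set `CP`. -/
lemma sampling (j N A : ℕ) [NeZero A] : ∃ Z : ℕ, ∀ M ≥ Z, ∀ (V : Type) (v : V)
    (T : (Fin j → Fin M) → ℕ → V), IsTree v T →
    ∀ CP : Finset ((Fin j → Fin M) × (Fin j → Fin M)), CP.card * Z ≤ M ^ (2 * j) →
    ∃ W : Fin N → (Fin (j + 1) → Fin A) → Fin j → Fin M,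
      (∀ i l l', ∀ d ≤ j, (∀ x : Fin (j + 1), (x : ℕ) < d → l x = l' x) →
        T (W i l) d = T (W i l') d) ∧
      (∀ i i' l l' d d', 1 ≤ d → d ≤ j → 1 ≤ d' → d' ≤ j → T (W i l) d = T (W i' l') d' →
        i = i' ∧ d = d' ∧ ∀ x : Fin (j + 1), (x : ℕ) < d → l x = l' x) ∧
      ∀ i i' l, i ≠ i' → (W i l, W i' l) ∉ CP := by
  classical
  set Wd := Fin (j + 1) → Fin A
  set I := Fin N × Fin j × Wd
  set Ev := ((I × I) ⊕ (Fin N × Fin N × Wd))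
  refine ⟨Fintype.card Ev + 1, fun M hM V v T hT CP hCP => ?_⟩
  have hM0 : 0 < M := by omega
  -- `Ev` indexes the unwanted events, each of probability at most `1 / (|Ev| + 1)`.
  -- A sample `σ` assigns a letter to each node; branches follow the letters of their nodes.
  set nd : Fin N → Wd → Fin j → I := fun i l d => (i, d, trunc (d + 1) l) with hnd
  have hndeq : ∀ {i i' l l' d d'}, nd i l d = nd i' l' d' →
      i = i' ∧ d = d' ∧ trunc (d + 1) l = trunc (d' + 1) l' := by
    intro i i' l l' d d' h
    exact ⟨congrArg (fun x : Fin N × Fin j × Wd => x.1) h,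
      congrArg (fun x : Fin N × Fin j × Wd => x.2.1) h,
      congrArg (fun x : Fin N × Fin j × Wd => x.2.2) h⟩
  set W : (I → Fin M) → Fin N → Wd → Fin j → Fin M := fun σ i l d => σ (nd i l d) with hW
  set bad : Ev → Finset (I → Fin M) := fun ev => univ.filter fun σ =>
    match ev with
    | Sum.inl ((i, d, l), (i', d', l')) => d' ≤ d ∧ nd i l d ≠ nd i' l' d' ∧
        T (W σ i l) (d + 1) = T (W σ i' l') (d' + 1)
    | Sum.inr (i, i', l) => i ≠ i' ∧ (W σ i l, W σ i' l) ∈ CP with hbad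
  have hbd : ∀ ev, (bad ev).card * (Fintype.card Ev + 1) ≤ Fintype.card (I → Fin M) := by
    rintro (⟨⟨i, d, l⟩, ⟨i', d', l'⟩⟩ | ⟨i, i', l⟩)
    · refine (Nat.mul_le_mul_left _ hM).trans (card_event_le _ (nd i l d) ?_)
      intro σ hσ σ' hσ' h
      simp only [hbad, mem_filter, mem_univ, true_and] at hσ hσ'
      obtain ⟨hd, hne, h1⟩ := hσ
      obtain ⟨-, -, h2⟩ := hσ'
      by_contra hcon
      have h3 : T (W σ i' l') (d' + 1) = T (W σ' i' l') (d' + 1) := by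
        refine hT.agree _ _ _ (by omega) fun x hx => h _ ?_
        intro heq
        have hx4 := (hndeq heq).2.1
        have : x = d' := le_antisymm (Fin.le_def.2 (by omega)) (hx4.symm ▸ hd)
        rw [this] at heq
        exact hne heq.symm
      refine hT.branch (W σ i l) (W σ' i l) d (fun x hx => h _ ?_) hcon
        (h1.trans (h3.trans h2.symm))
      intro heq
      exact hx.ne (hndeq heq).2.1
    · by_cases hii : i = i'
      · have : bad (Sum.inr (i, i', l)) = ∅ := by
          simp [hbad, hii]
        rw [this]; simp
      · have h1 := card_event_le' (M := M) (Sum.elim (nd i l) (nd i' l)) (by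
          rintro (x | x) (y | y) hxy
          · rw [(hndeq hxy).2.1]
          · exact absurd (hndeq hxy).1 hii
          · exact absurd (hndeq hxy).1.symm hii
          · rw [(hndeq hxy).2.1])
          (CP.image fun xy => Sum.elim xy.1 xy.2)
        rw [Fintype.card_sum, Fintype.card_fin, ← two_mul] at h1
        have h2 : (bad (Sum.inr (i, i', l))).card ≤ (univ.filter fun σ : I → Fin M =>
            σ ∘ (Sum.elim (nd i l) (nd i' l)) ∈ CP.image fun xy => Sum.elim xy.1 xy.2).card := by
          refine card_le_card fun σ hσ => ?_
          simp only [hbad, mem_filter, mem_univ, true_and] at hσ ⊢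
          exact mem_image.2 ⟨_, hσ.2, by rw [Sum.comp_elim]; rfl⟩
        have h3 := (Nat.mul_le_mul_right _ h2).trans
          (h1.trans (Nat.mul_le_mul_right _ card_image_le))
        refine Nat.le_of_mul_le_mul_right (c := M ^ (2 * j)) ?_ (by positivity)
        calc _ = (bad (Sum.inr (i, i', l))).card * M ^ (2 * j) * (Fintype.card Ev + 1) := by ring
          _ ≤ CP.card * Fintype.card (I → Fin M) * (Fintype.card Ev + 1) :=
              Nat.mul_le_mul_right _ h3
          _ = CP.card * (Fintype.card Ev + 1) * Fintype.card (I → Fin M) := by ring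
          _ ≤ M ^ (2 * j) * Fintype.card (I → Fin M) := Nat.mul_le_mul_right _ hCP
          _ = _ := mul_comm _ _
  obtain ⟨σ, hσ⟩ : ∃ σ, ∀ ev, σ ∉ bad ev := by
    by_contra! hcon
    have h1 : Fintype.card (I → Fin M) ≤ ∑ ev, (bad ev).card := by
      rw [← card_univ]
      refine (card_le_card fun σ _ => ?_).trans card_biUnion_le
      obtain ⟨ev, hev⟩ := hcon σ
      exact mem_biUnion.2 ⟨ev, mem_univ _, hev⟩
    have h2 : (∑ ev, (bad ev).card) * (Fintype.card Ev + 1) ≤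
        Fintype.card Ev * Fintype.card (I → Fin M) := by
      rw [sum_mul]
      exact (sum_le_card_nsmul _ _ _ fun ev _ => hbd ev).trans (by simp)
    have h3 : 0 < Fintype.card (I → Fin M) := by
      have : Nonempty (Fin M) := ⟨⟨0, hM0⟩⟩
      exact Fintype.card_pos
    have h4 := (Nat.mul_le_mul_right (Fintype.card Ev + 1) h1).trans h2
    rw [mul_comm (Fintype.card Ev), mul_add] at h4
    omega
  refine ⟨W σ, ?_, ?_, ?_⟩
  · intro i l l' d hd h
    refine hT.agree _ _ _ hd fun x hx => ?_
    simp only [hW, hnd]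
    rw [trunc_eq_iff.2 fun y hy => h y (by omega)]
  · intro i i' l l' d d' hd hdj hd' hdj' heq
    obtain ⟨d, rfl⟩ : ∃ d0, d = d0 + 1 := ⟨d - 1, by omega⟩
    obtain ⟨d', rfl⟩ : ∃ d0, d' = d0 + 1 := ⟨d' - 1, by omega⟩
    have hnn : nd i l ⟨d, hdj⟩ = nd i' l' ⟨d', hdj'⟩ := by
      rcases le_total d' d with h | h
      · have := hσ (Sum.inl ((i, ⟨d, hdj⟩, l), (i', ⟨d', hdj'⟩, l')))
        simp only [hbad, mem_filter, mem_univ, true_and] at this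
        by_contra hne
        exact this ⟨h, hne, heq⟩
      · have := hσ (Sum.inl ((i', ⟨d', hdj'⟩, l'), (i, ⟨d, hdj⟩, l)))
        simp only [hbad, mem_filter, mem_univ, true_and] at this
        by_contra hne
        exact this ⟨h, Ne.symm hne, heq.symm⟩
    obtain ⟨rfl, h1, h⟩ := hndeq hnn
    obtain rfl : d = d' := by simpa using h1
    exact ⟨rfl, rfl, trunc_eq_iff.1 h⟩
  · intro i i' l hii hmem
    have := hσ (Sum.inr (i, i', l))
    simp only [hbad, mem_filter, mem_univ, true_and] at this
    exact this ⟨hii, hmem⟩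

/-! ### Doubling the length of clean paths -/

/-- Form of `exists_turn` for an unordered pair of depths, encoded by a colour `κ` whose entries are
the depths minus one. -/
lemma turn_or (k j : ℕ) (hjk : j ≤ k) (κ : Fin j × Fin j) : ∃ i₀ q : ℕ, 1 ≤ i₀ ∧
    i₀ ≤ max (κ.1 : ℕ) κ.2 + 1 ∧ 1 ≤ q ∧
      ((i₀ ≤ min (κ.1 : ℕ) κ.2 + 1 ∧
          k + i₀ = q * (min (κ.1 : ℕ) κ.2 + 1 + (max (κ.1 : ℕ) κ.2 + 1))) ∨
        k = q * (min (κ.1 : ℕ) κ.2 + 1 + (max (κ.1 : ℕ) κ.2 + 1)) +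
          (max (κ.1 : ℕ) κ.2 + 1 - i₀)) :=
  exists_turn k _ _ (by omega) (by omega) (by omega)

/-- A large enough generic family of systems of clean legs from a common root, any two of which with
the same index are robustly linked somewhere, yields the desired subdivision. By Ramsey's
theorem the depths of the linked vertices depend only on the word, and then `exists_line` finds
many words, differing in a single letter, with the same depths. Words have `j + 1` letters, the
vertex at depth `d` depending on the first `d` of them only, so that letter number `i₀`,
counting from `0`, is irrelevant up to depth
`i₀`; the last letter is a dummy, needed when `i₀ = j`. -/
lemma embed (t : ℕ) (m : Fin t → Fin t → ℕ) (k j B B₀ : ℕ) (hj : 1 ≤ j) (hjk : j ≤ k)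
    (hB₀ : t + Fintype.card (Σ a : Fin t, Σ b : Fin t, Fin (m a b)) * (2 * k + 1) ≤ B₀)
    (hB : B₀ + 20 * k ≤ B) : ∃ N A : ℕ, 0 < A ∧
    ∀ (V : Type) [Fintype V] [DecidableEq V] (G : SimpleGraph V)
      (P : Fin N → (Fin (j + 1) → Fin A) → ℕ → V),
      (∀ i l, PathSeq G j (P i l)) →
      (∀ i l l', ∀ d ≤ j, (∀ x : Fin (j + 1), (x : ℕ) < d → l x = l' x) → P i l d = P i l' d) →
      (∀ i i' l l' d d', 1 ≤ d → d ≤ j → 1 ≤ d' → d' ≤ j → P i l d = P i' l' d' →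
        i = i' ∧ d = d' ∧ ∀ x : Fin (j + 1), (x : ℕ) < d → l x = l' x) →
      (∀ i i' l, i ≠ i' → ∃ b c, 1 ≤ b ∧ b ≤ j ∧ 1 ≤ c ∧ c ≤ j ∧
        Robust G B (b + c) (P i l b) (P i' l c)) →
      ContainsMultiSubdiv G t m (2 * k) := by
  set C := Fin j × Fin j
  have hC : Nonempty C := ⟨⟨⟨0, hj⟩, ⟨0, hj⟩⟩⟩
  set τ := 2 * B₀ + 1 with hτ
  set S₀ := B + 1 with hS₀
  set s := 2 * S₀ + t with hs
  set A := Fintype.card C * τ + 1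
  choose i₀ q hi₀ hi₀c hq hturn using turn_or k j hjk
  have hi₀j : ∀ κ, i₀ κ < j + 1 := fun κ => by have := hi₀c κ; omega
  obtain ⟨N, hN⟩ := ramsey ((Fin (j + 1) → Fin A) → C) s
  refine ⟨N, A, by omega, fun V _ _ G P hP hagree hdist hpair => ?_⟩
  have hpair' : ∀ i i' l, ∃ κ : C, i ≠ i' →
      Robust G B (κ.1 + 1 + (κ.2 + 1)) (P i l (κ.1 + 1)) (P i' l (κ.2 + 1)) := by
    intro i i' l
    by_cases h : i = i'
    · exact ⟨Classical.arbitrary C, fun h' => absurd h h'⟩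
    · obtain ⟨b, c, hb, hbj, hc, hcj, hr⟩ := hpair i i' l h
      refine ⟨⟨⟨b - 1, by omega⟩, ⟨c - 1, by omega⟩⟩, fun _ => ?_⟩
      simpa only [show b - 1 + 1 = b by omega, show c - 1 + 1 = c by omega] using hr
  choose χ hχ using hpair'
  obtain ⟨f, g, hf⟩ := hN χ
  obtain ⟨κ, l, e, he, hl⟩ := exists_line (τ := τ) (fun κ => ⟨i₀ κ, hi₀j κ⟩ : C → Fin (j + 1))
    (Nat.lt_succ_self _) g
  set wd : Fin τ → Fin (j + 1) → Fin A := fun α =>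
    Function.update l ⟨i₀ κ, hi₀j κ⟩ (e α) with hwd
  have hrob : ∀ i i', i < i' → i' < s → ∀ α, Robust G B (κ.1 + 1 + (κ.2 + 1))
      (P (f i) (wd α) (κ.1 + 1)) (P (f i') (wd α) (κ.2 + 1)) := by
    intro i i' hii hi' α
    obtain ⟨h1, h2⟩ := hf i i' hii hi'
    have := hχ (f i) (f i') (wd α) h1.ne
    rwa [h2, hl α] at this
  -- If the first depth exceeds the second one, the order of the systems is reversed.
  obtain ⟨F, hF, hrob⟩ : ∃ F : ℕ → Fin N, (∀ i < s, ∀ i' < s, F i = F i' → i = i') ∧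
      ∀ i i', i < i' → i' < s → ∀ α,
        Robust G B (min (κ.1 : ℕ) κ.2 + 1 + (max (κ.1 : ℕ) κ.2 + 1))
          (P (F i) (wd α) (min (κ.1 : ℕ) κ.2 + 1))
          (P (F i') (wd α) (max (κ.1 : ℕ) κ.2 + 1)) := by
    have hinj : ∀ i < s, ∀ i' < s, f i = f i' → i = i' := by
      intro i hi i' hi' h
      rcases lt_trichotomy i i' with h' | h' | h'
      · exact absurd h (hf i i' h' hi').1.ne
      · exact h'
      · exact absurd h.symm (hf i' i h' hi).1.ne
    rcases le_total (κ.1 : ℕ) κ.2 with h | h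
    · refine ⟨f, hinj, ?_⟩
      rw [min_eq_left h, max_eq_right h]
      exact hrob
    · refine ⟨fun i => f (s - 1 - i), fun i hi i' hi' hii => ?_, ?_⟩
      · have := hinj _ (by omega) _ (by omega) hii
        omega
      · rw [min_eq_right h, max_eq_left h]
        intro i i' hii hi' α
        have := (hrob (s - 1 - i') (s - 1 - i) (by omega) (by omega) α).symm
        rwa [add_comm] at this
  have hα₀ : 0 < τ := by omega
  have hdist' : ∀ i < s, ∀ i' < s, ∀ α α' d d', 1 ≤ d → d ≤ j → 1 ≤ d' → d' ≤ j →
      P (F i) (wd α) d = P (F i') (wd α') d' → i = i' ∧ d = d' ∧ (i₀ κ < d → α = α') := by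
    intro i hi i' hi' α α' d d' h1 h2 h3 h4 h
    obtain ⟨h5, h6, h7⟩ := hdist _ _ _ _ d d' h1 h2 h3 h4 h
    refine ⟨hF i hi i' hi' h5, h6, fun hd => he ?_⟩
    simpa [hwd] using h7 ⟨i₀ κ, hi₀j κ⟩ hd
  have hκj : max (κ.1 : ℕ) κ.2 + 1 ≤ j := by have := κ.1.2; have := κ.2.2; omega
  refine greedy (B := B₀) (fun a => P (F (S₀ + a)) (wd ⟨0, hα₀⟩) (i₀ κ)) ?_ hB₀ ?_
  · intro a a' haa
    have := (hdist' (S₀ + a) (by omega) (S₀ + a') (by omega) _ _ _ _ (hi₀ κ)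
      ((hi₀c κ).trans hκj) (hi₀ κ) ((hi₀c κ).trans hκj) haa).1
    exact Fin.ext (by omega)
  · intro a a' haa X hX
    exact link (P := fun i α => P (F i) (wd α)) (by omega) (by omega) hκj hjk (hi₀ κ)
      (hi₀c κ) (hq κ) (hturn κ) (fun i _ α => hP _ _) hdist'
      (fun i _ α α' d hd => hagree _ _ _ _ (hd.trans ((hi₀c κ).trans hκj)) fun x hx => by
        have hne : x ≠ ⟨i₀ κ, hi₀j κ⟩ := by
          rintro rfl
          simp only at hx
          omega
        simp only [hwd, Function.update_of_ne hne])
      hrob hB (by omega) (by omega) ⟨0, hα₀⟩ (S₀ + a) (S₀ + a') (by omega)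
      (by have := Fin.lt_def.1 haa; omega) (by omega) X hX

lemma IsTree.eq_of_agree {j M : ℕ} {v : V} {T : (Fin j → Fin M) → ℕ → V} (hT : IsTree v T)
    {w w' : Fin j → Fin M} (h : ∀ d ≤ j, T w d = T w' d) : w = w' := by
  have : ∀ n (hn : n < j), w ⟨n, hn⟩ = w' ⟨n, hn⟩ := by
    intro n
    induction n using Nat.strong_induction_on with
    | _ n ih =>
      intro hn
      by_contra hne
      exact hT.branch w w' ⟨n, hn⟩ (fun i hi => ih i hi i.2) hne (h (n + 1) hn)
  exact funext fun i => this i i.2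

/-- The walk going from the end of `p` back to its start, then along `q`. -/
def vee (j : ℕ) (p q : ℕ → V) : ℕ → V := cat j (fun i => p (j - i)) q

lemma vee_left {j : ℕ} {p q : ℕ → V} {i : ℕ} (hi : i ≤ j) : vee j p q i = p (j - i) := by
  simp [vee, cat, hi]

lemma vee_right {j : ℕ} {p q : ℕ → V} (h : p 0 = q 0) {i : ℕ} (hi : j ≤ i) :
    vee j p q i = q (i - j) := by
  rcases hi.eq_or_lt with rfl | hi
  · simp [vee, cat, h]
  · simp [vee, cat, not_le.2 hi]

/-- If two clean legs meeting only at their common root do not form a clean path, then a pair of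
vertices on different legs is robustly linked. -/
lemma exists_robust_of_not_clean {G : SimpleGraph V} {B j : ℕ} {p q : ℕ → V}
    (hp : Clean G B j p) (hq : Clean G B j q) (h0 : p 0 = q 0)
    (hd : ∀ d d', 1 ≤ d → d ≤ j → 1 ≤ d' → d' ≤ j → p d ≠ q d')
    (hnot : ¬ Clean G B (2 * j) (vee j p q)) :
    ∃ b c, 1 ≤ b ∧ b ≤ j ∧ 1 ≤ c ∧ c ≤ j ∧ Robust G B (b + c) (p b) (q c) := by
  have hpath : PathSeq G (2 * j) (vee j p q) := by
    rw [two_mul]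
    exact PathSeq.append (PathSeq.reverse hp.1) hq.1 (by simpa using h0)
      fun i i' hi hi' hi'' => hd _ _ (by omega) (by omega) (by omega) hi''
  unfold Clean at hnot
  rw [not_and] at hnot
  have := hnot hpath
  push Not at this
  obtain ⟨s, e, hse, he, hr⟩ := this
  rcases le_or_gt e j with h1 | h1
  · exfalso
    rw [vee_left (by omega), vee_left h1] at hr
    refine hp.2 (j - e) (j - s) (by omega) (by omega) ?_
    rw [show j - s - (j - e) = e - s by omega]
    exact hr.symm
  rcases le_or_gt j s with h2 | h2
  · exfalso
    rw [vee_right h0 h2, vee_right h0 h1.le] at hr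
    refine hq.2 (s - j) (e - j) (by omega) (by omega) ?_
    rwa [show e - j - (s - j) = e - s by omega]
  · rw [vee_left h2.le, vee_right h0 h1.le] at hr
    refine ⟨j - s, e - j, by omega, by omega, by omega, by omega, ?_⟩
    rwa [show j - s + (e - j) = e - s by omega]

/-- In a graph without the subdivision, a positive density of clean paths of length `j ≤ k` forces
a positive density of clean paths of length `2 j`. -/
lemma step (t : ℕ) (m : Fin t → Fin t → ℕ) (k j B B₀ : ℕ) (hj : 1 ≤ j) (hjk : j ≤ k)
    (hB₀ : t + Fintype.card (Σ a : Fin t, Σ b : Fin t, Fin (m a b)) * (2 * k + 1) ≤ B₀)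
    (hB : B₀ + 20 * k ≤ B) (c : ℝ) (hc : 0 < c) : ∃ c' > (0 : ℝ), ∃ Δ₀ : ℕ,
    ∀ (V : Type) [Fintype V] [DecidableEq V] (G : SimpleGraph V) (Δ : ℕ),
      (∀ v, (G.neighborSet v).ncard ≤ Δ) → Δ₀ ≤ Δ → ¬ ContainsMultiSubdiv G t m (2 * k) →
      c * Fintype.card V * (Δ : ℝ) ^ j ≤ cnt j {p | Clean G B j p} →
      c' * Fintype.card V * (Δ : ℝ) ^ (2 * j) ≤ cnt (2 * j) {p | Clean G B (2 * j) p} := by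
  classical
  obtain ⟨N, A, hA, hembed⟩ := embed t m k j B B₀ hj hjk hB₀ hB
  have : NeZero A := ⟨hA.ne'⟩
  obtain ⟨Z, hZ⟩ := sampling j N A
  refine ⟨c / 2 ^ j * (c / 2 ^ j / 2) ^ (2 * j) / (Z + 1), by positivity,
    ⌈(Z + 2) / (c / 2 ^ j)⌉₊ + 1, ?_⟩
  intro V _ _ G Δ hΔ hΔ₀ hG hdense
  set x : ℝ := c / 2 ^ j * Δ with hx
  have hc2 : 0 < c / 2 ^ j := by positivity
  have hxZ : (Z : ℝ) + 2 ≤ x := by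
    have h1 : (Z + 2) / (c / 2 ^ j) ≤ (Δ : ℝ) :=
      (Nat.le_ceil _).trans (by exact_mod_cast (by omega : ⌈(Z + 2) / (c / 2 ^ j)⌉₊ ≤ Δ))
    rw [div_le_iff₀ hc2] at h1
    linarith
  have hZ0 : (0 : ℝ) ≤ Z := Nat.cast_nonneg _
  set M := ⌊x⌋₊ with hM
  have hMle : (M : ℝ) ≤ x := Nat.floor_le (by linarith)
  have hMge : x / 2 ≤ M := by
    have := Nat.lt_floor_add_one x
    linarith
  have hMZ : M ≥ Z := Nat.le_floor (by linarith)
  obtain ⟨V', hV', hT⟩ := exists_trees (M := M) hΔ (by omega) j c {p | Clean G B j p}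
    (fun p hp => hp.1) hdense (by
      calc (M : ℝ) * 2 ^ j ≤ x * 2 ^ j := by gcongr
        _ = c * Δ := by rw [hx]; field_simp)
  have hT' : ∀ v, ∃ T : (Fin j → Fin M) → ℕ → V, v ∈ V' →
      IsTree v T ∧ ∀ w, Clean G B j (T w) := by
    intro v
    by_cases hv : v ∈ V'
    · obtain ⟨T, hT⟩ := hT v hv
      exact ⟨T, fun _ => hT⟩
    · exact ⟨fun _ _ => v, fun h => absurd h hv⟩
  choose T hT using hT'
  set CP : V → Finset ((Fin j → Fin M) × (Fin j → Fin M)) := fun v =>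
    univ.filter fun ww => Clean G B (2 * j) (vee j (T v ww.1) (T v ww.2)) with hCP
  -- At every root a positive proportion of the pairs of branches forms a clean path.
  have hmany : ∀ v ∈ V', M ^ (2 * j) ≤ (CP v).card * Z := by
    intro v hv
    by_contra! hlt
    obtain ⟨hTv, hTc⟩ := hT v hv
    obtain ⟨W, hW1, hW2, hW3⟩ := hZ M hMZ V v (T v) hTv (CP v) hlt.le
    refine hG (hembed V G (fun i l => T v (W i l)) (fun i l => (hTc _).1) hW1 hW2 ?_)
    intro i i' l hii
    refine exists_robust_of_not_clean (hTc _) (hTc _) (by rw [hTv.root, hTv.root]) ?_ ?_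
    · intro d d' h1 h2 h3 h4 h
      exact hii (hW2 i i' l l d d' h1 h2 h3 h4 h).1
    · have := hW3 i i' l hii
      simpa only [hCP, mem_filter, mem_univ, true_and] using this
  -- These paths are distinct: the middle vertex and the two halves can be recovered.
  have hcount : ∑ v ∈ V', (CP v).card ≤ cnt (2 * j) {p | Clean G B (2 * j) p} := by
    rw [← card_sigma, ← Set.ncard_coe_finset]
    unfold cnt
    refine Set.ncard_le_ncard_of_injOn
      (fun y => restr (2 * j) (vee j (T y.1 y.2.1) (T y.1 y.2.2))) ?_ ?_ (Set.toFinite _)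
    · rintro ⟨v, w, w'⟩ hy
      simp only [coe_sigma, Set.mem_sigma_iff, mem_coe, hCP, mem_filter, mem_univ, true_and] at hy
      exact ⟨_, hy.2, rfl⟩
    · rintro ⟨v, w, w'⟩ hy ⟨v2, w2, w2'⟩ hy2 heq
      simp only [coe_sigma, Set.mem_sigma_iff, mem_coe] at hy hy2
      have hr := restr_eq_iff.1 heq
      have hTv := (hT v hy.1).1
      have hTv2 := (hT v2 hy2.1).1
      obtain rfl : v = v2 := by
        have := hr j (by omega)
        rw [vee_left le_rfl, vee_left le_rfl, Nat.sub_self] at this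
        rwa [hTv.root, hTv2.root] at this
      have e1 : w = w2 := hTv.eq_of_agree fun d hd => by
        have := hr (j - d) (by omega)
        rwa [vee_left (by omega), vee_left (by omega), show j - (j - d) = d by omega] at this
      have e2 : w' = w2' := hTv.eq_of_agree fun d hd => by
        have := hr (j + d) (by omega)
        rwa [vee_right (by rw [hTv.root, hTv.root]) (by omega),
          vee_right (by rw [hTv.root, hTv.root]) (by omega),
          show j + d - j = d by omega] at this
      rw [e1, e2]
  have h1 : V'.card * M ^ (2 * j) ≤ cnt (2 * j) {p | Clean G B (2 * j) p} * Z := by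
    refine le_trans ?_ (Nat.mul_le_mul_right _ hcount)
    rw [sum_mul]
    exact card_nsmul_le_sum _ _ _ hmany
  have h2 : (V'.card : ℝ) * (M : ℝ) ^ (2 * j) ≤ cnt (2 * j) {p | Clean G B (2 * j) p} * Z := by
    exact_mod_cast h1
  have h3 : c / 2 ^ j * Fintype.card V ≤ V'.card := by
    rw [div_mul_eq_mul_div, div_le_iff₀ (by positivity)]
    linarith
  have h4 : (x / 2) ^ (2 * j) ≤ (M : ℝ) ^ (2 * j) :=
    pow_le_pow_left₀ (by linarith) hMge _
  have h5 : c / 2 ^ j * Fintype.card V * (x / 2) ^ (2 * j) ≤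
      cnt (2 * j) {p | Clean G B (2 * j) p} * Z :=
    (mul_le_mul h3 h4 (by positivity) (Nat.cast_nonneg _)).trans h2
  rw [div_mul_eq_mul_div, div_mul_eq_mul_div, div_le_iff₀ (by positivity)]
  have h6 : (x / 2) ^ (2 * j) = (c / 2 ^ j / 2) ^ (2 * j) * (Δ : ℝ) ^ (2 * j) := by
    rw [hx, ← mul_pow]; ring
  rw [h6] at h5
  have h7 : (0 : ℝ) ≤ cnt (2 * j) {p | Clean G B (2 * j) p} := Nat.cast_nonneg _
  nlinarith

/-! ### Density of clean paths of length `k` -/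

lemma cnt_clean_add_le {G : SimpleGraph V} {B Δ : ℕ} (hΔ : ∀ v, (G.neighborSet v).ncard ≤ Δ)
    (d e : ℕ) : cnt (d + e) {p | Clean G B (d + e) p} ≤ cnt d {p | Clean G B d p} * Δ ^ e := by
  induction e with
  | zero => simp
  | succ e ih =>
    refine (cnt_clean_succ_le hΔ (d + e)).trans ?_
    rw [pow_succ, ← mul_assoc]
    exact Nat.mul_le_mul_right _ ih

lemma le_cnt_clean_one {G : SimpleGraph V} {B δ : ℕ} (hδ : ∀ v, δ ≤ (G.neighborSet v).ncard) :
    Fintype.card V * δ ≤ cnt 1 {p | Clean G B 1 p} := by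
  classical
  have h1 : Fintype.card V * δ ≤ ((univ : Finset V).sigma fun v => G.neighborFinset v).card := by
    rw [card_sigma, ← card_univ, ← smul_eq_mul]
    refine card_nsmul_le_sum _ _ _ fun v _ => (hδ v).trans ?_
    rw [← Set.ncard_coe_finset, SimpleGraph.coe_neighborFinset]
  refine h1.trans ?_
  rw [← Set.ncard_coe_finset]
  unfold cnt
  refine Set.ncard_le_ncard_of_injOn
    (fun y => restr 1 (fun i => if i = 0 then y.1 else y.2)) ?_ ?_ (Set.toFinite _)
  · rintro ⟨v, w⟩ hy
    have hadj : G.Adj v w := by simpa using hy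
    refine ⟨_, ⟨⟨fun i hi => ?_, fun i j hij hj => ?_⟩, fun s e hse he => by omega⟩, rfl⟩
    · obtain rfl : i = 0 := by omega
      simpa using hadj
    · obtain rfl : i = 0 := by omega
      obtain rfl : j = 1 := by omega
      simpa using hadj.ne
  · rintro ⟨v, w⟩ - ⟨v', w'⟩ - h
    have hr := restr_eq_iff.1 h
    have e1 : v = v' := by simpa using hr 0 (by omega)
    have e2 : w = w' := by simpa using hr 1 le_rfl
    rw [e1, e2]

/-- In a graph without the subdivision whose edges (clean paths of length `1`) have density `c₁`,
clean paths of every length `j ≤ k` have positive density: pass from `j` to `2 j` by `step` and drop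
the last `j - 1` vertices. -/
lemma dense (t : ℕ) (m : Fin t → Fin t → ℕ) (k B B₀ : ℕ)
    (hB₀ : t + Fintype.card (Σ a : Fin t, Σ b : Fin t, Fin (m a b)) * (2 * k + 1) ≤ B₀)
    (hB : B₀ + 20 * k ≤ B) (c₁ : ℝ) (hc₁ : 0 < c₁) (j : ℕ) (hj : 1 ≤ j) :
    j ≤ k → ∃ c > (0 : ℝ), ∃ Δ₀ : ℕ,
    ∀ (V : Type) [Fintype V] [DecidableEq V] (G : SimpleGraph V) (Δ : ℕ),
      (∀ v, (G.neighborSet v).ncard ≤ Δ) → Δ₀ ≤ Δ → ¬ ContainsMultiSubdiv G t m (2 * k) →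
      c₁ * Fintype.card V * (Δ : ℝ) ^ 1 ≤ cnt 1 {p | Clean G B 1 p} →
      c * Fintype.card V * (Δ : ℝ) ^ j ≤ cnt j {p | Clean G B j p} := by
  induction j, hj using Nat.le_induction with
  | base => exact fun _ => ⟨c₁, hc₁, 0, fun V _ _ G Δ _ _ _ h => h⟩
  | succ j hj ih =>
    intro hjk
    obtain ⟨c, hc, Δ₀, h⟩ := ih (by omega)
    obtain ⟨c', hc', Δ₁, h'⟩ := step t m k j B B₀ hj (by omega) hB₀ hB c hc
    refine ⟨c', hc', max (Δ₀ + 1) Δ₁, fun V _ _ G Δ hΔ hle hG h1 => ?_⟩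
    have hle1 := (le_max_left _ _).trans hle
    have h2 := h' V G Δ hΔ ((le_max_right _ _).trans hle) hG (h V G Δ hΔ (by omega) hG h1)
    have h3 := cnt_clean_add_le (B := B) hΔ (j + 1) (j - 1)
    rw [show j + 1 + (j - 1) = 2 * j by omega] at h3
    have h4 : (cnt (2 * j) {p | Clean G B (2 * j) p} : ℝ) ≤
        cnt (j + 1) {p | Clean G B (j + 1) p} * (Δ : ℝ) ^ (j - 1) := by exact_mod_cast h3
    have hΔ0 : (0 : ℝ) < (Δ : ℝ) ^ (j - 1) := by
      have : (0 : ℝ) < Δ := by exact_mod_cast (by omega : 0 < Δ)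
      positivity
    refine le_of_mul_le_mul_right ?_ hΔ0
    rw [mul_assoc, ← pow_add, show j + 1 + (j - 1) = 2 * j by omega]
    exact h2.trans h4

lemma minDeg_le (G : SimpleGraph V) (v : V) : minDeg G ≤ (G.neighborSet v).ncard :=
  Nat.sInf_le ⟨v, rfl⟩

lemma le_maxDeg (G : SimpleGraph V) (v : V) : (G.neighborSet v).ncard ≤ maxDeg G := by
  refine le_csSup ⟨Fintype.card V, ?_⟩ ⟨v, rfl⟩
  rintro _ ⟨w, rfl⟩
  rw [← Nat.card_eq_fintype_card, ← Set.ncard_univ]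
  exact Set.ncard_le_ncard (Set.subset_univ _) (Set.toFinite _)

end SubdivProof

/-- For every multigraph `F` and integers `k, K ≥ 1` there exist a constant
`D` and `n₀` such that every `K`-almost-regular graph `G` on `n ≥ n₀` vertices with minimum
degree `δ ≥ D · n^{1/(2k)}` contains `F^{2k-1}` as a subgraph. -/
theorem multigraph_subdivision_in_almost_regular
    (t : ℕ) (m : Fin t → Fin t → ℕ)
    (hsymm : ∀ a b, m a b = m b a) (hirr : ∀ a, m a a = 0)
    (k K : ℕ) (hk : 1 ≤ k) (hK : 1 ≤ K) :
    ∃ (D : ℝ) (n0 : ℕ), 0 < D ∧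
      ∀ n : ℕ, n0 ≤ n → ∀ G : SimpleGraph (Fin n),
        maxDeg G ≤ K * minDeg G →
        D * (n : ℝ) ^ ((1 : ℝ) / (2 * k)) ≤ (minDeg G : ℝ) →
        ContainsMultiSubdiv G t m (2 * k) := by
  -- The number of vertices to be avoided while embedding one edge greedily.
  set B₀ := t + Fintype.card (Σ a : Fin t, Σ b : Fin t, Fin (m a b)) * (2 * k + 1) with hB₀
  have hK0 : (0 : ℝ) < K := by exact_mod_cast hK
  obtain ⟨c, hc, Δ₀, h1⟩ := SubdivProof.dense t m k (B₀ + 20 * k) B₀ hB₀.ge le_rfl (1 / K)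
    (by positivity) k hk le_rfl
  obtain ⟨c', hc', Δ₁, h2⟩ := SubdivProof.step t m k k (B₀ + 20 * k) B₀ hk le_rfl hB₀.ge le_rfl c hc
  obtain ⟨g, hg⟩ := SubdivProof.clean_fixed_ends (B₀ + 20 * k) (2 * k) (by omega)
  refine ⟨Δ₀ + Δ₁ + g / c' + 1, 1, by positivity, fun n hn G hreg hδ => ?_⟩
  by_contra hG
  have hgc : 0 ≤ (g : ℝ) / c' := by positivity
  have hn1 : (1 : ℝ) ≤ n := by exact_mod_cast hn
  set D : ℝ := Δ₀ + Δ₁ + g / c' + 1 with hD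
  have hD1 : 1 ≤ D := by
    have : (0 : ℝ) ≤ (Δ₀ : ℝ) + Δ₁ := by positivity
    linarith
  have hδD : D ≤ minDeg G :=
    (le_mul_of_one_le_right (by linarith) (Real.one_le_rpow hn1 (by positivity))).trans hδ
  have hδpow : D * n ≤ (minDeg G : ℝ) ^ (2 * k) := by
    have h3 : (D * (n : ℝ) ^ ((1 : ℝ) / (2 * k))) ^ (2 * k) ≤ (minDeg G : ℝ) ^ (2 * k) :=
      pow_le_pow_left₀ (by positivity) hδ _
    have h4 : ((n : ℝ) ^ ((1 : ℝ) / (2 * k))) ^ (2 * k) = n := by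
      have := Real.rpow_inv_natCast_pow (x := (n : ℝ)) (by positivity) (n := 2 * k) (by omega)
      rw [one_div]
      push_cast at this
      exact this
    rw [mul_pow, h4] at h3
    refine le_trans ?_ h3
    gcongr
    exact le_self_pow₀ hD1 (by omega)
  set Δ := K * minDeg G with hΔ
  have hΔδ : minDeg G ≤ Δ := Nat.le_mul_of_pos_left _ hK
  have hdeg : ∀ v, (G.neighborSet v).ncard ≤ Δ := fun v => (SubdivProof.le_maxDeg G v).trans hreg
  have hΔge : Δ₀ + Δ₁ ≤ Δ := by
    refine le_trans ?_ hΔδ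
    have : (Δ₀ : ℝ) + Δ₁ ≤ minDeg G := by linarith
    exact_mod_cast this
  have hone : 1 / (K : ℝ) * Fintype.card (Fin n) * (Δ : ℝ) ^ 1 ≤
      SubdivProof.cnt 1 {p | SubdivProof.Clean G (B₀ + 20 * k) 1 p} := by
    have h3 := SubdivProof.le_cnt_clean_one (B := B₀ + 20 * k) (SubdivProof.minDeg_le G)
    refine le_trans (le_of_eq ?_) (Nat.cast_le.2 h3)
    rw [hΔ]
    push_cast
    field_simp
  have hlow := h2 (Fin n) G Δ hdeg (by omega) hG (h1 (Fin n) G Δ hdeg (by omega) hG hone)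
  have hup := SubdivProof.clean_total (fun u w => hg (Fin n) G u w)
  rw [Fintype.card_fin] at hlow hup
  have hup' : (SubdivProof.cnt (2 * k) {p | SubdivProof.Clean G (B₀ + 20 * k) (2 * k) p} : ℝ) ≤
      (n : ℝ) ^ 2 * g := by exact_mod_cast hup
  have h5 : (minDeg G : ℝ) ^ (2 * k) ≤ (Δ : ℝ) ^ (2 * k) := by gcongr
  have h6 : c' * n * (D * n) ≤ (n : ℝ) ^ 2 * g :=
    (mul_le_mul_of_nonneg_left (hδpow.trans h5) (by positivity)).trans (hlow.trans hup')
  have h7 : c' * D ≤ g := by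
    refine le_of_mul_le_mul_left (a := (n : ℝ) ^ 2) ?_ (by positivity)
    linarith
  have h8 : c' * (g / c') = g := by field_simp
  have h9 : 0 < c' * ((Δ₀ : ℝ) + Δ₁ + 1) := by positivity
  rw [hD] at h7
  linarith
end

section
/- Let F be a multigraph, let k ≥ 1 and K ≥ 1 be integers, and let H = F^{2k-1}. There exists a constant L0, depending only on |V(H)|, k and K, such that for all L ≥ L0 the following holds: if G is an H-free K-almost-regular graph on n vertices (n sufficiently large) with minimum degree δ ≥ L^{100^k·|V(H)|}, then the number of paths of length k in G that are not L-good is at most 4(k+1)²K^k · n·δ^k/L. -/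
/-!
Suppose that more paths of length `k` than claimed fail to be `L`-good. A shortest subpath that is
not good is admissible, so by pigeonhole over the position of that subpath (`card_not_good_le`),
some length `l` with `2 ≤ l ≤ k` has more than `4 n Δ ^ l / L` admissible paths that are not good,
where `Δ = K δ`. With `γ = ⌊f(l - 1, L)⌋`, every pair of ends of such a path is joined by at least
`γ ^ 5` of them, whereas, all proper subpaths being good, at most `γ ^ 2` of these pass through a
given vertex at a given position, and at most `γ` tails `p 1, …, p l` have prescribed ends
(`lt_card_badF_ends`, `card_badF_through`, `card_badF_tails`). It remains to find `F^{2k-1}`, the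
multigraph with every edge subdivided into a path of length `2k` (`contains_of_many_paths`).

Deleting few paths yields a `RichFamily`, in which moreover each tail extends to members with many
different first vertices (`exists_clean`). Then a tail can be made longer by any even number while
avoiding any small set (`RichFamily.exists_long_path`): step from `p 1` to a fresh first vertex and
follow a fresh member from there to `p l`.

Call `y` an apex of `w, w'` if internally disjoint tails lead from `w` and from `w'` to `y`. If two
vertices have more than `c Δ ^ (l - 2)` apexes, then for a suitable constant `c` some apex is not
cut off by a given bounded set of vertices, so the two vertices are joined by paths of length `2k`
avoiding that set, obtained by concatenating a lengthened tail with a tail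
(`RichFamily.exists_connection`). Pairs of members with common ends whose second vertices have fewer
apexes are rare, by counting: such a pair amounts to a cycle of length `2l`, determined by the first
vertex, its two neighbours, an apex, and two of the at most `γ` tails each
(`RichFamily.sum_light_le`). Hence there are `t` members with common ends whose second vertices
pairwise have many apexes (`RichFamily.exists_selection`). These second vertices serve as branch
vertices, and the connecting paths are embedded greedily (`exists_disjoint_family`).
-/

open SimpleGraph

variable {V : Type*} [Fintype V] [DecidableEq V]

/-! ### Operations on vertex sequences -/

/-- The sequence `v, p 0, p 1, …`. -/
def consSeq (v : V) (p : ℕ → V) : ℕ → V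
  | 0 => v
  | i + 1 => p i

theorem PathSeq.cons {G : SimpleGraph V} {l : ℕ} {p : ℕ → V} (hp : PathSeq G l p) {v : V}
    (hv : G.Adj v (p 0)) (hne : ∀ i, i ≤ l → v ≠ p i) : PathSeq G (l + 1) (consSeq v p) := by
  refine ⟨?_, ?_⟩
  · rintro (_ | i) hi
    · exact hv
    · exact hp.1 i (by omega)
  · rintro (_ | i) (_ | j) hij hj
    · omega
    · exact hne j (by omega)
    · omega
    · exact hp.2 i j (by omega) (by omega)

theorem PathSeq.sub {G : SimpleGraph V} {l : ℕ} {p : ℕ → V} (hp : PathSeq G l p) {i j : ℕ}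
    (hj : i + j ≤ l) : PathSeq G j (fun a => p (i + a)) :=
  ⟨fun a ha => hp.1 (i + a) (by omega), fun a b hab hb => hp.2 _ _ (by omega) (by omega)⟩

theorem PathSeq.reverse {G : SimpleGraph V} {l : ℕ} {p : ℕ → V} (hp : PathSeq G l p) :
    PathSeq G l (fun a => p (l - a)) := by
  refine ⟨fun i hi => ?_, fun i j hij hj => ?_⟩
  · have := hp.1 (l - (i + 1)) (by omega)
    rw [show l - (i + 1) + 1 = l - i by omega] at this
    exact this.symm
  · exact (hp.2 (l - j) (l - i) (by omega) (by omega)).symm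

theorem PathSeq.append {G : SimpleGraph V} {a b : ℕ} {p q : ℕ → V} (hp : PathSeq G a p)
    (hq : PathSeq G b q) (hpq : p a = q 0)
    (hd : ∀ i j, i ≤ a → 0 < j → j ≤ b → p i ≠ q j) :
    PathSeq G (a + b) (fun i => if i ≤ a then p i else q (i - a)) := by
  refine ⟨fun i hi => ?_, fun i j hij hj => ?_⟩
  · dsimp only
    rcases lt_trichotomy i a with h | h | h
    · rw [if_pos h.le, if_pos (by omega)]
      exact hp.1 i h
    · subst h
      rw [if_pos le_rfl, if_neg (by omega), hpq, show i + 1 - i = 0 + 1 by omega]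
      exact hq.1 0 (by omega)
    · rw [if_neg (by omega), if_neg (by omega), show i + 1 - a = i - a + 1 by omega]
      exact hq.1 _ (by omega)
  · dsimp only
    by_cases h : i ≤ a
    · by_cases h' : j ≤ a
      · rw [if_pos h, if_pos h']
        exact hp.2 i j hij h'
      · rw [if_pos h, if_neg h']
        exact hd i _ h (by omega) (by omega)
    · rw [if_neg h, if_neg (by omega)]
      exact hq.2 _ _ (by omega) (by omega)

/-! ### Counting walks -/

open Classical in
/-- The neighbourhood of `v`, as a finset. -/
noncomputable def nb (G : SimpleGraph V) (v : V) : Finset V := Finset.univ.filter (G.Adj v)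

open Classical in
/-- The padded sequences tracing a walk of length `l` that starts at `v`. -/
noncomputable def walkF (G : SimpleGraph V) : ℕ → V → Finset (ℕ → V)
  | 0, v => {fun _ => v}
  | l + 1, v => (nb G v).biUnion fun w => (walkF G l w).image (consSeq v)

theorem card_walkF (G : SimpleGraph V) {Δ : ℕ} (hΔ : ∀ v, (nb G v).card ≤ Δ) (l : ℕ) (v : V) :
    (walkF G l v).card ≤ Δ ^ l := by
  classical
  induction l generalizing v with
  | zero => simp [walkF]
  | succ l ih =>
    rw [walkF, pow_succ']
    refine (Finset.card_biUnion_le_card_mul _ _ (Δ ^ l) fun w _ => ?_).trans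
      (Nat.mul_le_mul_right _ (hΔ v))
    exact Finset.card_image_le.trans (ih w)

theorem mem_walkF (G : SimpleGraph V) (l : ℕ) (q : ℕ → V) (hpad : PadSeq l q)
    (hadj : ∀ i, i < l → G.Adj (q i) (q (i + 1))) : q ∈ walkF G l (q 0) := by
  classical
  induction l generalizing q with
  | zero =>
    simp only [walkF, Finset.mem_singleton]
    funext i
    exact hpad i (Nat.zero_le _)
  | succ l ih =>
    simp only [walkF, Finset.mem_biUnion, Finset.mem_image]
    refine ⟨q 1, by simpa [nb] using hadj 0 (by omega), fun i => q (i + 1), ?_, ?_⟩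
    · exact ih (fun i => q (i + 1)) (fun i hi => hpad (i + 1) (by omega))
        (fun i hi => hadj (i + 1) (by omega))
    · funext i
      cases i <;> rfl

/-- The vertices at the end of a walk of length `l` that starts at `u`. -/
theorem exists_endpoints (G : SimpleGraph V) {Δ : ℕ} (hΔ : ∀ v, (nb G v).card ≤ Δ) (l : ℕ)
    (u : V) : ∃ E : Finset V, E.card ≤ Δ ^ l ∧ ∀ (p : ℕ → V), p 0 = u →
      (∀ i, i < l → G.Adj (p i) (p (i + 1))) → p l ∈ E := by
  classical
  refine ⟨(walkF G l u).image (fun q => q l),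
    Finset.card_image_le.trans (card_walkF G hΔ l u), fun p hp hadj => ?_⟩
  refine Finset.mem_image.2 ⟨fun a => p (min a l), ?_, by simp⟩
  have := mem_walkF G l (fun a => p (min a l)) (fun i hi => by simp [hi]) (fun i hi => by
    have := hadj i hi
    simpa [min_eq_left hi.le, min_eq_left (show i + 1 ≤ l from hi)] using this)
  simpa [hp] using this

/-! ### Auxiliary counting lemmas -/

open Classical in
/-- Cleaning: a finite set whose `β`-fibres are large and whose image under `α` is small contains a
large subset all of whose nonempty fibres, under both maps, are large. The subset maximises
`2|A| - 2a|α(A)| - b|β(A)|`: deleting a small fibre would increase this quantity. -/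
theorem exists_clean.{u} {ι X Y : Type u} (A₀ : Finset ι) (α : ι → X) (β : ι → Y) (a b : ℕ)
    (hα : 4 * (a * (A₀.image α).card) ≤ A₀.card)
    (hβ : ∀ q ∈ A₀, b ≤ (A₀.filter fun q' => β q' = β q).card) :
    ∃ A ⊆ A₀, A₀.card ≤ 4 * A.card ∧
      (∀ q ∈ A, a ≤ (A.filter fun q' => α q' = α q).card) ∧
      ∀ q ∈ A, b ≤ 2 * (A.filter fun q' => β q' = β q).card := by
  let Φ : Finset ι → ℤ := fun A =>
    2 * (A.card : ℤ) - 2 * a * ((A.image α).card : ℤ) - b * ((A.image β).card : ℤ)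
  obtain ⟨A, hA, hmax⟩ := Finset.exists_max_image A₀.powerset Φ ⟨A₀, Finset.mem_powerset_self _⟩
  rw [Finset.mem_powerset] at hA
  have hβ' : b * (A₀.image β).card ≤ A₀.card := by
    rw [mul_comm]
    rw [Finset.card_eq_sum_card_image β A₀]
    rw [← smul_eq_mul]
    refine Finset.card_nsmul_le_sum _ _ _ fun y hy => ?_
    obtain ⟨q, hq, rfl⟩ := Finset.mem_image.1 hy
    exact hβ q hq
  -- Deleting one fibre removes one point from the image.
  have hdel : ∀ {Z : Type u} (g : ι → Z) (q : ι), q ∈ A →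
      ((A.filter fun q' => g q' ≠ g q).image g).card + 1 ≤ (A.image g).card := by
    intro Z g q hq
    rw [← Finset.card_erase_add_one (Finset.mem_image_of_mem g hq)]
    gcongr
    intro z hz
    obtain ⟨q', hq', rfl⟩ := Finset.mem_image.1 hz
    rw [Finset.mem_filter] at hq'
    exact Finset.mem_erase.2 ⟨hq'.2, Finset.mem_image_of_mem g hq'.1⟩
  have hle : ∀ {Z : Type u} (g : ι → Z) (s : ι → Prop),
      ((A.filter s).image g).card ≤ (A.image g).card := fun g s =>
    Finset.card_le_card (Finset.image_subset_image (Finset.filter_subset _ _))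
  refine ⟨A, hA, ?_, fun q hq => ?_, fun q hq => ?_⟩
  · have h := hmax A₀ (Finset.mem_powerset_self _)
    simp only [Φ] at h
    zify at hα hβ' ⊢
    have h1 : (0 : ℤ) ≤ 2 * a * ((A.image α).card : ℤ) := by positivity
    have h2 : (0 : ℤ) ≤ b * ((A.image β).card : ℤ) := by positivity
    linarith
  · by_contra! hlt
    have h := hmax (A.filter fun q' => α q' ≠ α q)
      (Finset.mem_powerset.2 ((Finset.filter_subset _ _).trans hA))
    have h1 := hdel α q hq
    have h2 := hle β (fun q' => α q' ≠ α q)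
    have h3 := Finset.card_filter_add_card_filter_not (s := A) (fun q' => α q' = α q)
    simp only [Φ] at h
    zify at h1 h2 h3 hlt
    simp only [ne_eq] at h h1 h2
    nlinarith
  · by_contra! hlt
    have h := hmax (A.filter fun q' => β q' ≠ β q)
      (Finset.mem_powerset.2 ((Finset.filter_subset _ _).trans hA))
    have h1 := hdel β q hq
    have h2 := hle α (fun q' => β q' ≠ β q)
    have h3 := Finset.card_filter_add_card_filter_not (s := A) (fun q' => β q' = β q)
    simp only [Φ] at h
    zify at h1 h2 h3 hlt
    simp only [ne_eq] at h h1 h2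
    nlinarith

open Classical in
/-- Greedy choice of an ordered independent set for a relation of small out-degree. -/
theorem exists_indep {ι : Type*} (R : ι → ι → Prop) (d t : ℕ) (S : Finset ι)
    (hd : ∀ a ∈ S, (S.filter (R a)).card ≤ d) (hS : t * (d + 1) ≤ S.card) :
    ∃ f : Fin t → ι, (∀ i, f i ∈ S) ∧ ∀ i j, i < j → ¬ R (f i) (f j) := by
  induction t generalizing S with
  | zero => exact ⟨Fin.elim0, fun i => i.elim0, fun i => i.elim0⟩
  | succ t ih =>
    have hpos : 0 < S.card := by nlinarith
    obtain ⟨a, ha⟩ := Finset.card_pos.1 hpos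
    have h1 := hd a ha
    have h2 := Finset.card_filter_add_card_filter_not (s := S) (R a)
    obtain ⟨f, hf, hR⟩ := ih (S.filter fun b => ¬ R a b)
      (fun c hc => (Finset.card_le_card
        (Finset.filter_subset_filter _ (Finset.filter_subset _ _))).trans
        (hd c (Finset.mem_filter.1 hc).1)) (by nlinarith)
    refine ⟨Fin.cons a f, fun i => ?_, fun i j hij => ?_⟩
    · refine Fin.cases ha (fun i => ?_) i
      exact (Finset.mem_filter.1 (hf i)).1
    · induction i using Fin.cases with
      | zero =>
        induction j using Fin.cases with
        | zero => exact absurd hij (lt_irrefl _)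
        | succ j => simpa using (Finset.mem_filter.1 (hf j)).2
      | succ i =>
        induction j using Fin.cases with
        | zero => exact absurd hij (Fin.not_lt_zero _)
        | succ j => simpa using hR i j (Fin.succ_lt_succ_iff.1 hij)

/-- Greedy embedding: if each request `e` can be served by a sequence avoiding any given bounded
set of vertices, then all requests can be served simultaneously by sequences that avoid `U₀` and
each other. -/
theorem exists_disjoint_family {E : Type*} [Fintype E] (T : E → (ℕ → V) → Prop) (s : ℕ)
    (U₀ : Finset V)
    (h : ∀ e, ∀ U : Finset V, U₀ ⊆ U → U.card ≤ U₀.card + (s + 1) * Fintype.card E →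
      ∃ q, T e q ∧ ∀ i, 0 < i → i < s → q i ∉ U) :
    ∃ π : E → ℕ → V, (∀ e, T e (π e)) ∧ (∀ e i, 0 < i → i < s → π e i ∉ U₀) ∧
      ∀ e e', e ≠ e' → ∀ i i', 0 < i → i < s → 0 < i' → i' < s → π e i ≠ π e' i' := by
  classical
  suffices H : ∀ D : Finset E, ∃ π : E → ℕ → V, (∀ e ∈ D, T e (π e)) ∧
      (∀ e ∈ D, ∀ i, 0 < i → i < s → π e i ∉ U₀) ∧
      ∀ e ∈ D, ∀ e' ∈ D, e ≠ e' → ∀ i i', 0 < i → i < s → 0 < i' → i' < s →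
        π e i ≠ π e' i' by
    obtain ⟨π, h1, h2, h3⟩ := H Finset.univ
    exact ⟨π, fun e => h1 e (Finset.mem_univ _), fun e => h2 e (Finset.mem_univ _),
      fun e e' => h3 e (Finset.mem_univ _) e' (Finset.mem_univ _)⟩
  intro D
  induction D using Finset.induction_on with
  | empty =>
    by_cases hE : Nonempty E
    · obtain ⟨e⟩ := hE
      obtain ⟨q, -, -⟩ := h e U₀ subset_rfl (by omega)
      exact ⟨fun _ => q, by simp, by simp, by simp⟩
    · exact ⟨fun e => absurd ⟨e⟩ hE, by simp, by simp, by simp⟩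
  | insert e D he ih =>
    obtain ⟨π, h1, h2, h3⟩ := ih
    obtain ⟨q, hq, hqU⟩ := h e
      (U₀ ∪ D.biUnion fun e' => (Finset.range (s + 1)).image (π e')) Finset.subset_union_left (by
        refine (Finset.card_union_le _ _).trans (Nat.add_le_add_left ?_ _)
        refine (Finset.card_biUnion_le_card_mul _ _ (s + 1) fun e' _ => ?_).trans ?_
        · exact Finset.card_image_le.trans (by simp)
        · rw [mul_comm]
          exact Nat.mul_le_mul_left _ (Finset.card_le_univ _))
    have hU : ∀ i, 0 < i → i < s → q i ∉ U₀ := fun i hi his hmem =>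
      hqU i hi his (Finset.mem_union_left _ hmem)
    have hD : ∀ e' ∈ D, ∀ i i', 0 < i → i < s → i' < s → q i ≠ π e' i' := by
      intro e' he' i i' hi his hi' heq
      refine hqU i hi his (Finset.mem_union_right _ (Finset.mem_biUnion.2 ⟨e', he', ?_⟩))
      exact Finset.mem_image.2 ⟨i', Finset.mem_range.2 (by omega), heq.symm⟩
    have hne : ∀ e' ∈ D, e' ≠ e := fun e' he' h => he (h ▸ he')
    refine ⟨Function.update π e q, ?_, ?_, ?_⟩
    · intro e' he'
      rcases Finset.mem_insert.1 he' with rfl | he'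
      · simpa using hq
      · rw [Function.update_of_ne (hne e' he')]
        exact h1 e' he'
    · intro e' he'
      rcases Finset.mem_insert.1 he' with rfl | he'
      · simpa using hU
      · rw [Function.update_of_ne (hne e' he')]
        exact h2 e' he'
    · intro e₁ he₁ e₂ he₂ h12 i i' hi his hi' his'
      rcases Finset.mem_insert.1 he₁ with rfl | hD₁ <;>
        rcases Finset.mem_insert.1 he₂ with h | hD₂
      · exact absurd h.symm h12
      · rw [Function.update_self, Function.update_of_ne (hne _ hD₂)]
        exact hD _ hD₂ i i' hi his his'
      · subst h
        rw [Function.update_self, Function.update_of_ne (hne _ hD₁)]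
        exact (hD _ hD₁ i' i hi' his' his).symm
      · rw [Function.update_of_ne (hne _ hD₁), Function.update_of_ne (hne _ hD₂)]
        exact h3 _ hD₁ _ hD₂ h12 i i' hi his hi' his'

/-! ### Rich families of paths and their flexibility -/

/-- The sequence `p 1, p 2, …`. -/
def tl (p : ℕ → V) : ℕ → V := fun i => p (i + 1)

open Classical in
/-- A family `A` of padded paths of length `l` in which every path has many companions (sharing its
last `l` vertices, or sharing both ends), while few members share both ends and a further
vertex, and few tails `p 1, …, p l` share both ends. -/
structure RichFamily (G : SimpleGraph V) (l γ h : ℕ) (A : Finset (ℕ → V)) : Prop where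
  pad : ∀ q ∈ A, PadSeq l q
  path : ∀ q ∈ A, PathSeq G l q
  heads : ∀ q ∈ A, h ≤ (A.filter fun q' => tl q' = tl q).card
  ends : ∀ q ∈ A, γ ^ 5 ≤ 2 * (A.filter fun q' => q' 0 = q 0 ∧ q' l = q l).card
  through : ∀ x y u j, 0 < j → j < l →
    (A.filter fun q => q 0 = x ∧ q l = y ∧ q j = u).card ≤ γ ^ 2
  tails : ∀ w y, ((A.filter fun q => q 1 = w ∧ q l = y).image tl).card ≤ γ

theorem RichFamily.exists_head {G : SimpleGraph V} {l γ h : ℕ} {A : Finset (ℕ → V)}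
    (hA : RichFamily G l γ h A) {q : ℕ → V} (hq : q ∈ A) (U : Finset V) (hU : U.card < h) :
    ∃ q' ∈ A, tl q' = tl q ∧ q' 0 ∉ U := by
  classical
  by_contra! hcon
  have h1 := hA.heads q hq
  have h2 : (A.filter fun q' => tl q' = tl q).card ≤ U.card := by
    refine Finset.card_le_card_of_injOn (fun q' => q' 0) (fun q' hq' => ?_) ?_
    · have := Finset.mem_filter.1 hq'
      exact hcon q' this.1 this.2
    · intro a ha b hb hab
      have ha := (Finset.mem_filter.1 ha).2
      have hb := (Finset.mem_filter.1 hb).2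
      funext i
      cases i with
      | zero => exact hab
      | succ i => exact congrFun (ha.trans hb.symm) i
  omega

/-- A member can be rerouted around a small set `U`: there are at least `γ ^ 5 / 2` members with the
same ends, of which at most `l γ ^ 2` pass through any given vertex of `U`. -/
theorem RichFamily.exists_avoiding {G : SimpleGraph V} {l γ h : ℕ} {A : Finset (ℕ → V)}
    (hA : RichFamily G l γ h A) {q : ℕ → V} (hq : q ∈ A) (U : Finset V)
    (hU : 2 * (U.card * l * γ ^ 2) < γ ^ 5) :
    ∃ q' ∈ A, q' 0 = q 0 ∧ q' l = q l ∧ ∀ i, 0 < i → i < l → q' i ∉ U := by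
  classical
  by_contra! hcon
  have h1 := hA.ends q hq
  have h2 : (A.filter fun q' => q' 0 = q 0 ∧ q' l = q l) ⊆
      (U ×ˢ (Finset.range l).filter (0 < ·)).biUnion fun uj =>
        A.filter fun q' => q' 0 = q 0 ∧ q' l = q l ∧ q' uj.2 = uj.1 := by
    intro q' hq'
    obtain ⟨h1, h2, h3⟩ := Finset.mem_filter.1 hq'
    obtain ⟨i, hi, hil, hiU⟩ := hcon q' h1 h2 h3
    simp only [Finset.mem_biUnion, Finset.mem_product, Finset.mem_filter, Finset.mem_range]
    exact ⟨(q' i, i), ⟨hiU, hil, hi⟩, h1, h2, h3, rfl⟩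
  have h3 := (Finset.card_le_card h2).trans
    (Finset.card_biUnion_le_card_mul _ _ (γ ^ 2) fun uj huj => by
      simp only [Finset.mem_product, Finset.mem_filter, Finset.mem_range] at huj
      exact hA.through _ _ _ _ huj.2.2 huj.2.1)
  rw [Finset.card_product] at h3
  have h4 : ((Finset.range l).filter (0 < ·)).card ≤ l := by
    simpa using Finset.card_filter_le (Finset.range l) (0 < ·)
  have h5 : U.card * ((Finset.range l).filter (0 < ·)).card * γ ^ 2 ≤ U.card * l * γ ^ 2 := by
    gcongr
  omega

/-- The tail of a member of a rich family can be replaced by a path with the same ends that is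
longer by any even number and avoids a given small set: walk from `q 1` to a fresh `p₀` such that
`p₀, q 1, …, q l` is in the family, then follow a fresh member from `p₀` to `q l`, and iterate on
the tail of that member. -/
theorem RichFamily.exists_long_path {G : SimpleGraph V} {l γ h : ℕ} {A : Finset (ℕ → V)}
    (hA : RichFamily G l γ h A) (hl : 2 ≤ l) (hγ : 2 * (h * l * γ ^ 2) < γ ^ 5) (r : ℕ) :
    ∀ (U : Finset V) (q : ℕ → V), q ∈ A → U.card + 2 * r < h →
      (∀ i, 0 < i → i ≤ l → q i ∉ U) →
      ∃ p, PathSeq G (l - 1 + 2 * r) p ∧ p 0 = q 1 ∧ p (l - 1 + 2 * r) = q l ∧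
        ∀ i, i ≤ l - 1 + 2 * r → p i ∉ U := by
  classical
  induction r with
  | zero =>
    intro U q hq _ hqU
    refine ⟨fun a => q (1 + a), (hA.path q hq).sub (by omega), rfl, ?_, fun i hi => ?_⟩
    · simp only [mul_zero, add_zero]
      congr 1
      omega
    · exact hqU _ (by omega) (by omega)
  | succ r ih =>
    intro U q hq hU hqU
    obtain ⟨s, hs, hsq, hs0⟩ := hA.exists_head hq U (by omega)
    have hsq' : ∀ i, 0 < i → s i = q i := fun i hi => by
      have := congrFun hsq (i - 1)
      simpa [tl, Nat.sub_add_cancel hi] using this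
    have hspath := hA.path s hs
    let U' := insert (s 0) (insert (q 1) U)
    have hU'c : U'.card ≤ U.card + 2 :=
      (Finset.card_insert_le _ _).trans (Nat.succ_le_succ (Finset.card_insert_le _ _))
    obtain ⟨q', hq', h0, hl', hav⟩ := hA.exists_avoiding hs U' (by
      have : U'.card * l * γ ^ 2 ≤ h * l * γ ^ 2 := by gcongr; omega
      omega)
    have hav' : ∀ i, 0 < i → i ≤ l → q' i ∉ U' := by
      intro i hi hil
      rcases hil.lt_or_eq with hlt | rfl
      · exact hav i hi hlt
      · rw [hl']
        simp only [U', Finset.mem_insert, not_or]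
        refine ⟨(hspath.2 0 i hi le_rfl).symm, ?_, ?_⟩
        · rw [← hsq' 1 one_pos]
          exact (hspath.2 1 i (by omega) le_rfl).symm
        · rw [hsq' i hi]
          exact hqU i hi le_rfl
    obtain ⟨p, hp, hp0, hpl, hpU⟩ := ih U' q' hq' (by omega) hav'
    simp only [U', Finset.mem_insert, not_or] at hpU
    have hc1 : PathSeq G (l - 1 + 2 * r + 1) (consSeq (s 0) p) :=
      hp.cons (by rw [hp0, ← h0]; exact (hA.path q' hq').1 0 (by omega))
        fun i hi => Ne.symm (hpU i hi).1
    have hs1 : s 1 = q 1 := hsq' 1 one_pos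
    have hc2 : PathSeq G (l - 1 + 2 * r + 1 + 1) (consSeq (q 1) (consSeq (s 0) p)) := by
      refine hc1.cons ?_ ?_
      · rw [← hs1]
        exact (hspath.1 0 (by omega)).symm
      · rintro (_ | i) hi
        · rw [← hs1]
          exact (hspath.2 0 1 one_pos (by omega)).symm
        · exact Ne.symm (hpU i (by omega)).2.1
    refine ⟨_, hc2, rfl, ?_, ?_⟩
    · rw [show l - 1 + 2 * (r + 1) = l - 1 + 2 * r + 1 + 1 by ring]
      simp only [consSeq]
      rw [hpl, hl', hsq' l (by omega)]
    · rintro (_ | _ | i) hi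
      · exact hqU 1 one_pos (by omega)
      · exact hs0
      · exact (hpU i (by omega)).2.2

open Classical in
/-- The common ends of internally disjoint pairs of tails, from members of `A`, that start at `w`
and at `w'`. -/
noncomputable def apexes (A : Finset (ℕ → V)) (l : ℕ) (w w' : V) : Finset V :=
  Finset.univ.filter fun y => ∃ P ∈ A, ∃ P' ∈ A, P 1 = w ∧ P' 1 = w' ∧ P l = y ∧ P' l = y ∧
    ∀ i j, 0 < i → i < l → 0 < j → j < l → P i ≠ P' j

/-- Two vertices with many apexes are joined by a path of any even length `2 k ≥ 2 l` avoiding a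
given small set: a vertex of the set destroys few apexes, and one of the two tails into a surviving apex
can be lengthened. -/
theorem RichFamily.exists_connection {G : SimpleGraph V} {l γ h Δ : ℕ} {A : Finset (ℕ → V)}
    (hA : RichFamily G l γ h A) (hΔ : ∀ v, (nb G v).card ≤ Δ) (hΔ1 : 1 ≤ Δ)
    (hl : 2 ≤ l) (hγ : 2 * (h * l * γ ^ 2) < γ ^ 5)
    {k h₀ : ℕ} (hlk : l ≤ k) (hh : h₀ + 3 * k + 2 < h) {w w' : V}
    (hY : h₀ * l * Δ ^ (l - 2) < (apexes A l w w').card) (U : Finset V) (hU : U.card ≤ h₀)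
    (hw : w ∉ U) (hw' : w' ∉ U) :
    ∃ p, PathSeq G (2 * k) p ∧ p 0 = w ∧ p (2 * k) = w' ∧ ∀ i, i ≤ 2 * k → p i ∉ U := by
  classical
  choose E hE hE' using fun (s : ℕ) (u : V) => exists_endpoints G hΔ s u
  let Z : Finset V := (U ×ˢ Finset.range (l - 1)).biUnion fun us => E us.2 us.1
  have hZ : Z.card ≤ h₀ * l * Δ ^ (l - 2) := by
    refine (Finset.card_biUnion_le_card_mul _ _ (Δ ^ (l - 2)) fun us hus => ?_).trans ?_
    · have := Finset.mem_range.1 (Finset.mem_product.1 hus).2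
      exact (hE _ _).trans (Nat.pow_le_pow_right hΔ1 (by omega))
    · rw [Finset.card_product, Finset.card_range]
      gcongr
      omega
  obtain ⟨y, hy, hyZ⟩ := Finset.exists_mem_notMem_of_card_lt_card (hZ.trans_lt hY)
  obtain ⟨-, P, hP, P', hP', h1, h1', h2, h2', hd⟩ := Finset.mem_filter.1 hy
  have key : ∀ Q ∈ A, Q 1 ∉ U → Q l = y → ∀ i, 0 < i → i ≤ l → Q i ∉ U := by
    intro Q hQ hQ1 hQl i hi hil hmem
    have hi2 : i ≠ 1 := fun h => hQ1 (h ▸ hmem)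
    refine hyZ (Finset.mem_biUnion.2 ⟨(Q i, l - i), Finset.mem_product.2
      ⟨hmem, Finset.mem_range.2 (by omega)⟩, ?_⟩)
    have := hE' (l - i) (Q i) (fun a => Q (i + a)) rfl
      fun a ha => (hA.path Q hQ).1 (i + a) (by omega)
    simpa [show i + (l - i) = l by omega, hQl] using this
  have hPU := key P hP (h1 ▸ hw) h2
  have hPU' := key P' hP' (h1' ▸ hw') h2'
  let U' := U ∪ ((Finset.range l).filter (0 < ·)).image P'
  have hU'c : U'.card ≤ U.card + l := by
    refine (Finset.card_union_le _ _).trans (Nat.add_le_add_left ?_ _)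
    refine Finset.card_image_le.trans ((Finset.card_filter_le _ _).trans ?_)
    simp
  have hPU2 : ∀ i, 0 < i → i ≤ l → P i ∉ U' := by
    intro i hi hil hmem
    rcases Finset.mem_union.1 hmem with h | h
    · exact hPU i hi hil h
    · obtain ⟨j, hj, hji⟩ := Finset.mem_image.1 h
      rw [Finset.mem_filter, Finset.mem_range] at hj
      rcases hil.lt_or_eq with hlt | rfl
      · exact hd i j hi hlt hj.2 hj.1 hji.symm
      · exact (hA.path P' hP').2 j i hj.1 le_rfl (by rw [hji, h2, h2'])
  obtain ⟨p, hp, hp0, hpl, hpU⟩ := hA.exists_long_path hl hγ (k - l + 1) U' P hP (by omega) hPU2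
  have hrev : PathSeq G (l - 1) (fun a => P' (1 + (l - 1 - a))) :=
    ((hA.path P' hP').sub (i := 1) (j := l - 1) (by omega)).reverse
  have happ := hp.append hrev (by
      rw [hpl, h2, ← h2']
      congr 1
      omega) (by
    intro i j hi hj hjl heq
    refine hpU i hi (Finset.mem_union_right _ (Finset.mem_image.2
      ⟨1 + (l - 1 - j), Finset.mem_filter.2 ⟨Finset.mem_range.2 (by omega), by omega⟩, ?_⟩))
    exact heq.symm)
  rw [show l - 1 + 2 * (k - l + 1) + (l - 1) = 2 * k by omega] at happ
  refine ⟨_, happ, ?_, ?_, ?_⟩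
  · simpa using hp0.trans h1
  · rw [if_neg (by omega), ← h1']
    congr 1
    omega
  · intro i hi
    split_ifs with h
    · exact fun hmem => hpU i h (Finset.mem_union_left _ hmem)
    · exact hPU' _ (by omega) (by omega)

/-! ### Selecting the branch vertices -/

open Classical in
/-- Pairs of internally disjoint members of `A` with common ends, whose second vertices have few
apexes, are rare: such a pair is determined by its first three vertices `w, x, w'` around `x`, an
apex, and two tails, and a tail with prescribed ends can be chosen in at most `γ` ways. -/
theorem RichFamily.sum_light_le {G : SimpleGraph V} {l γ h Δ c : ℕ} {A : Finset (ℕ → V)}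
    (hA : RichFamily G l γ h A) (hΔ : ∀ v, (nb G v).card ≤ Δ) (hl : 2 ≤ l)
    (hcount : Fintype.card V * Δ ^ l ≤ A.card * γ) :
    ∑ P ∈ A, (A.filter fun P' => (P' 0 = P 0 ∧ P' l = P l) ∧
      (∀ i j, 0 < i → i < l → 0 < j → j < l → P i ≠ P' j) ∧
      (apexes A l (P 1) (P' 1)).card ≤ c * Δ ^ (l - 2)).card ≤ c * γ ^ 3 * A.card := by
  rw [← Finset.card_sigma]
  set F := A.sigma fun P => A.filter fun P' => (P' 0 = P 0 ∧ P' l = P l) ∧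
      (∀ i j, 0 < i → i < l → 0 < j → j < l → P i ≠ P' j) ∧
      (apexes A l (P 1) (P' 1)).card ≤ c * Δ ^ (l - 2) with hF
  have hmem : ∀ z ∈ F, z.1 ∈ A ∧ z.2 ∈ A ∧ (z.2 0 = z.1 0 ∧ z.2 l = z.1 l) ∧
      (∀ i j, 0 < i → i < l → 0 < j → j < l → z.1 i ≠ z.2 j) ∧
      (apexes A l (z.1 1) (z.2 1)).card ≤ c * Δ ^ (l - 2) := by
    intro z hz
    rw [hF, Finset.mem_sigma, Finset.mem_filter] at hz
    exact hz
  let T : Finset (Σ _ : V, V × V) := Finset.univ.sigma fun x => nb G x ×ˢ nb G x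
  have hT : T.card ≤ Fintype.card V * Δ ^ 2 := by
    rw [Finset.card_sigma, ← Finset.card_univ, ← smul_eq_mul]
    refine Finset.sum_le_card_nsmul _ _ _ fun x _ => ?_
    rw [Finset.card_product, pow_two]
    exact Nat.mul_le_mul (hΔ x) (hΔ x)
  have hFT : F.card ≤ (γ ^ 2 * (c * Δ ^ (l - 2))) * T.card := by
    refine Finset.card_le_mul_card_image_of_maps_to
      (f := fun z : (Σ _ : ℕ → V, ℕ → V) => (⟨z.1 0, z.1 1, z.2 1⟩ : Σ _ : V, V × V))
      (fun z hz => ?_) _ fun b _ => ?_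
    · obtain ⟨h1, h2, h3, -⟩ := hmem z hz
      simp only [T, Finset.mem_sigma, Finset.mem_univ, true_and, Finset.mem_product, nb,
        Finset.mem_filter]
      exact ⟨(hA.path _ h1).1 0 (by omega), h3.1 ▸ (hA.path _ h2).1 0 (by omega)⟩
    · obtain ⟨x, w, w'⟩ := b
      have hfib : ∀ z ∈ F.filter fun z => (⟨z.1 0, z.1 1, z.2 1⟩ : Σ _ : V, V × V) = ⟨x, w, w'⟩,
          z ∈ F ∧ z.1 0 = x ∧ z.1 1 = w ∧ z.2 1 = w' := by
        intro z hz
        rw [Finset.mem_filter] at hz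
        simpa using hz
      by_cases hlight : (apexes A l w w').card ≤ c * Δ ^ (l - 2)
      · refine le_trans ?_ (Nat.mul_le_mul_left _ hlight)
        refine Finset.card_le_mul_card_image_of_maps_to (f := fun z => z.1 l)
          (fun z hz => ?_) _ fun y _ => ?_
        · obtain ⟨hz, h0, h1, h1'⟩ := hfib z hz
          obtain ⟨hz1, hz2, hz3, hz4, -⟩ := hmem z hz
          exact Finset.mem_filter.2 ⟨Finset.mem_univ _, _, hz1, _, hz2, h1, h1', rfl, hz3.2, hz4⟩
        · have hc : ((((A.filter fun q => q 1 = w ∧ q l = y).image tl) ×ˢ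
              ((A.filter fun q => q 1 = w' ∧ q l = y).image tl)).card) ≤ γ ^ 2 := by
            rw [Finset.card_product, pow_two]
            exact Nat.mul_le_mul (hA.tails _ _) (hA.tails _ _)
          refine le_trans ?_ hc
          refine Finset.card_le_card_of_injOn (fun z => (tl z.1, tl z.2)) (fun z hz => ?_) ?_
          · obtain ⟨hz, hy⟩ := Finset.mem_filter.1 hz
            obtain ⟨hz, h0, h1, h1'⟩ := hfib z hz
            obtain ⟨hz1, hz2, hz3, -⟩ := hmem z hz
            refine Finset.mem_product.2 ⟨Finset.mem_image_of_mem _ ?_,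
              Finset.mem_image_of_mem _ ?_⟩
            · exact Finset.mem_filter.2 ⟨hz1, h1, hy⟩
            · exact Finset.mem_filter.2 ⟨hz2, h1', hz3.2.trans hy⟩
          · rintro ⟨a, a'⟩ ha ⟨b, b'⟩ hb hab
            obtain ⟨ha, ha0, -⟩ := hfib _ (Finset.mem_filter.1 ha).1
            obtain ⟨hb, hb0, -⟩ := hfib _ (Finset.mem_filter.1 hb).1
            have ha' := (hmem _ ha).2.2.1.1
            have hb' := (hmem _ hb).2.2.1.1
            simp only [Prod.mk.injEq] at hab ha0 hb0 ha' hb'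
            have e1 : a = b := by
              funext i
              cases i with
              | zero => rw [ha0, hb0]
              | succ i => exact congrFun hab.1 i
            have e2 : a' = b' := by
              funext i
              cases i with
              | zero => rw [ha', hb', ha0, hb0]
              | succ i => exact congrFun hab.2 i
            rw [e1, e2]
      · rw [Finset.card_eq_zero.2]
        · exact Nat.zero_le _
        · refine Finset.eq_empty_of_forall_notMem fun z hz => hlight ?_
          obtain ⟨hz, -, h1, h1'⟩ := hfib z hz
          have := (hmem z hz).2.2.2.2
          rwa [h1, h1'] at this
  calc F.card ≤ (γ ^ 2 * (c * Δ ^ (l - 2))) * T.card := hFT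
    _ ≤ (γ ^ 2 * (c * Δ ^ (l - 2))) * (Fintype.card V * Δ ^ 2) := Nat.mul_le_mul_left _ hT
    _ = c * γ ^ 2 * (Fintype.card V * (Δ ^ (l - 2) * Δ ^ 2)) := by ring
    _ = c * γ ^ 2 * (Fintype.card V * Δ ^ l) := by rw [← pow_add, Nat.sub_add_cancel hl]
    _ ≤ c * γ ^ 2 * (A.card * γ) := Nat.mul_le_mul_left _ hcount
    _ = c * γ ^ 3 * A.card := by ring

/-- There are `t` internally disjoint members of a rich family whose second vertices pairwise have
many apexes: for some pair of ends, almost all pairs of members with these ends qualify. -/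
theorem RichFamily.exists_selection {G : SimpleGraph V} {l γ h Δ c : ℕ} {A : Finset (ℕ → V)}
    (hA : RichFamily G l γ h A) (hΔ : ∀ v, (nb G v).card ≤ Δ) (hl : 2 ≤ l)
    (hcount : Fintype.card V * Δ ^ l ≤ A.card * γ) (hne : A.Nonempty) (t : ℕ)
    (hγ : 4 * t * (l ^ 2 + 2 * c + 1) ≤ γ) :
    ∃ f : Fin t → ℕ → V, (∀ a, f a ∈ A) ∧ ∀ a b, a < b →
      (∀ i j, 0 < i → i < l → 0 < j → j < l → f a i ≠ f b j) ∧
      c * Δ ^ (l - 2) < (apexes A l (f a 1) (f b 1)).card := by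
  classical
  have hsum := hA.sum_light_le (c := c) hΔ hl hcount
  set dg : (ℕ → V) → ℕ := fun P => (A.filter fun P' => (P' 0 = P 0 ∧ P' l = P l) ∧
      (∀ i j, 0 < i → i < l → 0 < j → j < l → P i ≠ P' j) ∧
      (apexes A l (P 1) (P' 1)).card ≤ c * Δ ^ (l - 2)).card with hdg
  let β : (ℕ → V) → V × V := fun q => (q 0, q l)
  -- By averaging, some class of members with common ends has few light pairs.
  obtain ⟨b, hb, hbsum⟩ : ∃ b ∈ A.image β, ∑ P ∈ A.filter (fun q => β q = b), dg P ≤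
      c * γ ^ 3 * (A.filter fun q => β q = b).card := by
    refine Finset.exists_le_of_sum_le (hne.image _) ?_
    rw [← Finset.mul_sum, ← Finset.card_eq_sum_card_image β A,
      Finset.sum_fiberwise_of_maps_to (s := A) (t := A.image β) (g := β)
        (fun q hq => Finset.mem_image_of_mem β hq) dg]
    exact hsum
  obtain ⟨q, hq, rfl⟩ := Finset.mem_image.1 hb
  set S := A.filter fun q' => β q' = β q with hS
  have hScard : γ ^ 5 ≤ 2 * S.card := by
    have := hA.ends q hq
    simpa [hS, β, Prod.ext_iff] using this
  have hSends : ∀ P ∈ S, P ∈ A ∧ P 0 = q 0 ∧ P l = q l := by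
    intro P hP
    simpa [hS, β, Prod.ext_iff] using hP
  let S' := S.filter fun P => dg P ≤ 2 * (c * γ ^ 3)
  have hS' : S.card ≤ 2 * S'.card := by
    have h1 := Finset.card_filter_add_card_filter_not (s := S) fun P => dg P ≤ 2 * (c * γ ^ 3)
    have h2 : (S.filter fun P => ¬ dg P ≤ 2 * (c * γ ^ 3)).card * (2 * (c * γ ^ 3) + 1) ≤
        c * γ ^ 3 * S.card := by
      refine le_trans ?_ ((Finset.sum_le_sum_of_subset (Finset.filter_subset
        (fun P => ¬ dg P ≤ 2 * (c * γ ^ 3)) S)).trans hbsum)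
      rw [← smul_eq_mul]
      refine Finset.card_nsmul_le_sum _ _ _ fun P hP => ?_
      have := (Finset.mem_filter.1 hP).2
      omega
    change S.card ≤ 2 * (S.filter fun P => dg P ≤ 2 * (c * γ ^ 3)).card
    generalize (S.filter fun P => ¬ dg P ≤ 2 * (c * γ ^ 3)).card = u at *
    generalize (S.filter fun P => dg P ≤ 2 * (c * γ ^ 3)).card = v at *
    by_contra! hlt
    nlinarith [Nat.zero_le (c * γ ^ 3)]
  let R : (ℕ → V) → (ℕ → V) → Prop := fun P P' =>
    (∃ i j, 0 < i ∧ i < l ∧ 0 < j ∧ j < l ∧ P i = P' j) ∨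
      (apexes A l (P 1) (P' 1)).card ≤ c * Δ ^ (l - 2)
  have hdeg : ∀ P ∈ S', (S'.filter (R P)).card ≤ l * l * γ ^ 2 + 2 * (c * γ ^ 3) := by
    intro P hP
    obtain ⟨hPS, hPd⟩ := Finset.mem_filter.1 hP
    obtain ⟨hPA, hP0, hPl⟩ := hSends P hPS
    let I := (Finset.range l).filter (0 < ·)
    have hI : I.card ≤ l := (Finset.card_filter_le _ _).trans (by simp)
    have hsub : S'.filter (R P) ⊆ ((I ×ˢ I).biUnion fun ij =>
          A.filter fun P' => P' 0 = P 0 ∧ P' l = P l ∧ P' ij.2 = P ij.1) ∪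
        A.filter fun P' => (P' 0 = P 0 ∧ P' l = P l) ∧
          (∀ i j, 0 < i → i < l → 0 < j → j < l → P i ≠ P' j) ∧
          (apexes A l (P 1) (P' 1)).card ≤ c * Δ ^ (l - 2) := by
      intro P' hP'
      obtain ⟨hP'S', hR⟩ := Finset.mem_filter.1 hP'
      obtain ⟨hP'A, hP'0, hP'l⟩ := hSends P' (Finset.mem_filter.1 hP'S').1
      by_cases hx : ∃ i j, 0 < i ∧ i < l ∧ 0 < j ∧ j < l ∧ P i = P' j
      · obtain ⟨i, j, hi, hil, hj, hjl, hij⟩ := hx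
        refine Finset.mem_union_left _ (Finset.mem_biUnion.2 ⟨(i, j), ?_, ?_⟩)
        · simp [I, hi, hil, hj, hjl]
        · exact Finset.mem_filter.2 ⟨hP'A, hP'0.trans hP0.symm, hP'l.trans hPl.symm, hij.symm⟩
      · have hR' := hR.resolve_left hx
        refine Finset.mem_union_right _ (Finset.mem_filter.2
          ⟨hP'A, ⟨hP'0.trans hP0.symm, hP'l.trans hPl.symm⟩, ?_, hR'⟩)
        exact fun i j hi hil hj hjl hij => hx ⟨i, j, hi, hil, hj, hjl, hij⟩
    refine (Finset.card_le_card hsub).trans ((Finset.card_union_le _ _).trans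
      (Nat.add_le_add ?_ hPd))
    refine (Finset.card_biUnion_le_card_mul _ _ (γ ^ 2) fun ij hij => ?_).trans ?_
    · simp only [I, Finset.mem_product, Finset.mem_filter, Finset.mem_range] at hij
      exact hA.through _ _ _ _ hij.2.2 hij.2.1
    · rw [Finset.card_product]
      gcongr
  obtain ⟨f, hf, hR⟩ := exists_indep R (l * l * γ ^ 2 + 2 * (c * γ ^ 3)) t S'
      (fun P hP => by convert hdeg P hP) (by
    rcases Nat.eq_zero_or_pos t with rfl | ht
    · simp
    have hγ1 : 1 ≤ γ := le_trans (by nlinarith) hγ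
    have h1 : l * l * γ ^ 2 + 2 * (c * γ ^ 3) + 1 ≤ (l ^ 2 + 2 * c + 1) * γ ^ 4 := by
      have a1 : γ ^ 2 ≤ γ ^ 4 := Nat.pow_le_pow_right hγ1 (by norm_num)
      have a2 : γ ^ 3 ≤ γ ^ 4 := Nat.pow_le_pow_right hγ1 (by norm_num)
      have a3 : 1 ≤ γ ^ 4 := Nat.one_le_pow _ _ hγ1
      nlinarith [Nat.mul_le_mul_left (l * l) a1, Nat.mul_le_mul_left c a2]
    have h2 : 4 * (t * (l * l * γ ^ 2 + 2 * (c * γ ^ 3) + 1)) ≤ γ ^ 5 :=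
      calc 4 * (t * (l * l * γ ^ 2 + 2 * (c * γ ^ 3) + 1))
          ≤ 4 * (t * ((l ^ 2 + 2 * c + 1) * γ ^ 4)) := by gcongr
        _ = (4 * t * (l ^ 2 + 2 * c + 1)) * γ ^ 4 := by ring
        _ ≤ γ * γ ^ 4 := by gcongr
        _ = γ ^ 5 := by ring
    linarith)
  refine ⟨f, fun a => (hSends _ (Finset.mem_filter.1 (hf a)).1).1, fun a b hab => ?_⟩
  have := hR a b hab
  simp only [R, not_or, not_exists, not_and, not_le] at this
  exact ⟨fun i j hi hil hj hjl => this.1 i j hi hil hj hjl, this.2⟩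

/-! ### The subdivision -/

/-- A number exceeding everything that has to be avoided while embedding `F^{2k-1}`. -/
def avoidBound (t k : ℕ) (m : Fin t → Fin t → ℕ) : ℕ :=
  t + (2 * k + 1) * Fintype.card (Σ a : Fin t, Σ b : Fin t, Fin (m a b))

/-- How large the multiplicity parameter `γ` has to be. -/
def gammaBound (t k : ℕ) (m : Fin t → Fin t → ℕ) : ℕ :=
  4 * t * (k ^ 2 + 2 * (avoidBound t k m * k) + 1) + 2 * ((avoidBound t k m + 3 * k + 3) * k) + 1

open Classical in
/-- A large set of `l`-paths in which every occurring pair of ends is joined by many members, while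
subpaths are essentially determined by their ends, yields the subdivision `F^{2k-1}`. -/
theorem contains_of_many_paths {G : SimpleGraph V} {l γ Δ k t : ℕ} (m : Fin t → Fin t → ℕ)
    (A₀ : Finset (ℕ → V)) (hpad : ∀ q ∈ A₀, PadSeq l q) (hpath : ∀ q ∈ A₀, PathSeq G l q)
    (hends : ∀ q ∈ A₀, γ ^ 5 ≤ (A₀.filter fun q' => q' 0 = q 0 ∧ q' l = q l).card)
    (hthrough : ∀ x y u j, 0 < j → j < l →
      (A₀.filter fun q => q 0 = x ∧ q l = y ∧ q j = u).card ≤ γ ^ 2)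
    (htails : ∀ w y, ((A₀.filter fun q => q 1 = w ∧ q l = y).image tl).card ≤ γ)
    (hΔ : ∀ v, (nb G v).card ≤ Δ) (hne : A₀.Nonempty)
    (hcount : 4 * (Fintype.card V * Δ ^ l) ≤ A₀.card * γ)
    (hl : 2 ≤ l) (hlk : l ≤ k) (hγ : gammaBound t k m ≤ γ)
    (hΔγ : (avoidBound t k m + 3 * k + 3) * γ ≤ Δ) : ContainsMultiSubdiv G t m (2 * k) := by
  set h₀ := avoidBound t k m with hh₀
  set h := h₀ + 3 * k + 3 with hh
  have hγ1 : 1 ≤ γ := le_trans (by unfold gammaBound; omega) hγ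
  have hΔ1 : 1 ≤ Δ := le_trans (by nlinarith) hΔγ
  have hγ5 : 2 * (h * l * γ ^ 2) < γ ^ 5 := by
    have h1 : 2 * (h * l) < γ := by
      have : h * l ≤ h * k := Nat.mul_le_mul_left _ hlk
      unfold gammaBound at hγ
      rw [← hh₀, ← hh] at hγ
      omega
    calc 2 * (h * l * γ ^ 2) = 2 * (h * l) * γ ^ 2 := by ring
      _ < γ * γ ^ 2 := Nat.mul_lt_mul_of_pos_right h1 (by positivity)
      _ = γ ^ 3 := by ring
      _ ≤ γ ^ 5 := Nat.pow_le_pow_right hγ1 (by norm_num)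
  have hγt : 4 * t * (l ^ 2 + 2 * (h₀ * l) + 1) ≤ γ := by
    refine le_trans ?_ hγ
    unfold gammaBound
    rw [← hh₀]
    refine le_trans (Nat.mul_le_mul_left _ ?_) (le_trans (Nat.le_add_right _ _)
      (Nat.le_add_right _ _))
    have : l ^ 2 ≤ k ^ 2 := Nat.pow_le_pow_left hlk 2
    have : h₀ * l ≤ h₀ * k := Nat.mul_le_mul_left _ hlk
    omega
  -- There are at most `n Δ ^ (l - 1)` tails.
  have htl : (A₀.image tl).card ≤ Fintype.card V * Δ ^ (l - 1) := by
    have hsub : A₀.image tl ⊆ Finset.univ.biUnion fun v => walkF G (l - 1) v := by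
      intro p hp
      obtain ⟨q, hq, rfl⟩ := Finset.mem_image.1 hp
      refine Finset.mem_biUnion.2 ⟨tl q 0, Finset.mem_univ _, mem_walkF G _ _ ?_ ?_⟩
      · intro i hi
        simp only [tl]
        rw [Nat.sub_add_cancel (by omega)]
        exact hpad q hq _ (by omega)
      · exact fun i hi => (hpath q hq).1 (i + 1) (by omega)
    refine (Finset.card_le_card hsub).trans ?_
    rw [← Finset.card_univ]
    exact Finset.card_biUnion_le_card_mul _ _ _ fun v _ => card_walkF G hΔ _ v
  obtain ⟨A, hAA₀, hAc, hα, hβ⟩ := exists_clean A₀ tl (fun q => (q 0, q l)) h (γ ^ 5) (by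
      have h1 : h * (A₀.image tl).card * γ ≤ Fintype.card V * Δ ^ l :=
        calc h * (A₀.image tl).card * γ ≤ h * (Fintype.card V * Δ ^ (l - 1)) * γ := by gcongr
          _ = Fintype.card V * (Δ ^ (l - 1) * (h * γ)) := by ring
          _ ≤ Fintype.card V * (Δ ^ (l - 1) * Δ) := by gcongr
          _ = Fintype.card V * Δ ^ l := by rw [← pow_succ, Nat.sub_add_cancel (by omega)]
      refine Nat.le_of_mul_le_mul_right (c := γ) ?_ hγ1
      nlinarith) (fun q hq => by simpa [Prod.ext_iff] using hends q hq)
  have hA : RichFamily G l γ h A :=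
    { pad := fun q hq => hpad q (hAA₀ hq)
      path := fun q hq => hpath q (hAA₀ hq)
      heads := hα
      ends := fun q hq => by simpa [Prod.ext_iff] using hβ q hq
      through := fun x y u j hj hjl => (Finset.card_le_card
        (Finset.filter_subset_filter _ hAA₀)).trans (hthrough x y u j hj hjl)
      tails := fun w y => (Finset.card_le_card (Finset.image_subset_image
        (Finset.filter_subset_filter _ hAA₀))).trans (htails w y) }
  have hAne : A.Nonempty := by
    rw [← Finset.card_pos]
    have := Finset.card_pos.2 hne
    omega
  obtain ⟨f, hf, hfd⟩ := hA.exists_selection (c := h₀ * l) hΔ hl (by nlinarith) hAne t hγt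
  have hφne : ∀ a b, a < b → f a 1 ≠ f b 1 := fun a b hab =>
    (hfd a b hab).1 1 1 one_pos (by omega) one_pos (by omega)
  have hφ : Function.Injective fun a => f a 1 := by
    intro a b hab
    rcases lt_trichotomy a b with hlt | rfl | hlt
    · exact absurd hab (hφne a b hlt)
    · rfl
    · exact absurd hab.symm (hφne b a hlt)
  let U₀ : Finset V := Finset.univ.image fun a => f a 1
  have hU₀ : U₀.card ≤ t := Finset.card_image_le.trans (by simp)
  -- Only the pairs `a < b` carry edges, so the family is indexed by the triples with `a < b`.
  obtain ⟨π, h1, h2, h3⟩ := exists_disjoint_family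
    (E := {e : Σ a : Fin t, Σ b : Fin t, Fin (m a b) // e.1 < e.2.1})
    (fun e q => PathSeq G (2 * k) q ∧ q 0 = f e.1.1 1 ∧ q (2 * k) = f e.1.2.1 1)
    (2 * k) U₀ (by
      rintro ⟨⟨a, b, i⟩, hab⟩ U hU hUc
      dsimp only at hab ⊢
      have hUc' : U.card ≤ h₀ := by
        have hE := Fintype.card_subtype_le
          fun e : Σ a : Fin t, Σ b : Fin t, Fin (m a b) => e.1 < e.2.1
        have := Nat.mul_le_mul_left (2 * k + 1) hE
        rw [hh₀, avoidBound]
        omega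
      obtain ⟨p, hp, hp0, hpk, hpU⟩ := hA.exists_connection (k := k) (h₀ := h₀) (w := f a 1)
        (w' := f b 1) hΔ hΔ1 hl hγ5 hlk (by omega) (hfd a b hab).2
        ((U.erase (f a 1)).erase (f b 1))
        ((Finset.card_erase_le.trans Finset.card_erase_le).trans hUc')
        (by simp) (by simp)
      refine ⟨p, ⟨hp, hp0, hpk⟩, fun i hi his hiU => hpU i his.le ?_⟩
      refine Finset.mem_erase.2 ⟨?_, Finset.mem_erase.2 ⟨?_, hiU⟩⟩
      · rw [← hpk]
        exact hp.2 i (2 * k) his le_rfl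
      · rw [← hp0]
        exact (hp.2 0 i hi his.le).symm)
  refine ⟨fun a => f a 1,
    fun a b c => if hab : a < b then π ⟨⟨a, b, c⟩, hab⟩ else fun _ => f a 1, hφ, ?_, ?_, ?_⟩
  · intro a b hab c
    simp only [dif_pos hab]
    exact h1 ⟨⟨a, b, c⟩, hab⟩
  · intro a b hab c i hi his d hd
    simp only [dif_pos hab] at hd
    refine h2 ⟨⟨a, b, c⟩, hab⟩ i hi his ?_
    rw [hd]
    exact Finset.mem_image_of_mem _ (Finset.mem_univ d)
  · intro a b hab a' b' hab' c c' hne' i i' hi his hi' his'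
    simp only [dif_pos hab, dif_pos hab']
    refine h3 ⟨⟨a, b, c⟩, hab⟩ ⟨⟨a', b', c'⟩, hab'⟩ (fun heq => hne' ?_) i i' hi his hi' his'
    cases heq
    rfl

/-! ### Good and admissible paths -/

theorem PathSeq.congr {G : SimpleGraph V} {l : ℕ} {p p' : ℕ → V} (h : ∀ i, i ≤ l → p i = p' i)
    (hp : PathSeq G l p) : PathSeq G l p' := by
  refine ⟨fun i hi => ?_, fun i j hij hj => ?_⟩
  · rw [← h i (by omega), ← h (i + 1) (by omega)]
    exact hp.1 i hi
  · rw [← h i (by omega), ← h j hj]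
    exact hp.2 i j hij hj

theorem good_iff_admissible {G : SimpleGraph V} {L : ℝ} {l : ℕ} {p : ℕ → V} :
    Good G L l p ↔ Admissible G L l p ∧
      (Set.ncard {q : ℕ → V | q 0 = p 0 ∧ q l = p l ∧ PadSeq l q ∧ Admissible G L l q} : ℝ) ≤
        fBound l L := by
  rw [Good]
  rfl

theorem Good.congr {G : SimpleGraph V} {L : ℝ} {l : ℕ} {p p' : ℕ → V}
    (h : ∀ i, i ≤ l → p i = p' i) (hp : Good G L l p) : Good G L l p' := by
  induction l using Nat.strong_induction_on generalizing p p' with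
  | _ l ih =>
    obtain ⟨⟨h1, h2⟩, h3⟩ := good_iff_admissible.1 hp
    refine good_iff_admissible.2 ⟨⟨h1.congr h, fun i j hij hj hne => ?_⟩, ?_⟩
    · exact ih (j - i) (by omega) (fun a ha => h (i + a) (by omega)) (h2 i j hij hj hne)
    · rwa [← h 0 (Nat.zero_le _), ← h l le_rfl]

theorem Admissible.congr {G : SimpleGraph V} {L : ℝ} {l : ℕ} {p p' : ℕ → V}
    (h : ∀ i, i ≤ l → p i = p' i) (hp : Admissible G L l p) : Admissible G L l p' :=
  ⟨hp.1.congr h, fun i j hij hj hne =>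
    (hp.2 i j hij hj hne).congr fun a ha => h (i + a) (by omega)⟩

/-- A path of positive length that is not good has a subpath that is admissible but not good: a
shortest subpath that is not good. -/
theorem exists_admissible_not_good {G : SimpleGraph V} {L : ℝ} {l : ℕ} {p : ℕ → V} (hl : 1 ≤ l)
    (hp : PathSeq G l p) (hbad : ¬ Good G L l p) :
    ∃ i j, i < j ∧ j ≤ l ∧ Admissible G L (j - i) (fun a => p (i + a)) ∧
      ¬ Good G L (j - i) (fun a => p (i + a)) := by
  induction l using Nat.strong_induction_on generalizing p with
  | _ l ih =>
    by_cases ha : Admissible G L l p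
    · exact ⟨0, l, hl, le_rfl, ha.congr fun i _ => by rw [zero_add],
        fun hg => hbad (hg.congr fun i _ => by rw [zero_add])⟩
    · obtain ⟨i, j, hij, hj, hne, hg⟩ : ∃ i j, i < j ∧ j ≤ l ∧ ¬ (i = 0 ∧ j = l) ∧
          ¬ Good G L (j - i) (fun a => p (i + a)) := by
        by_contra! hcon
        exact ha ⟨hp, fun i j hij hj hne => hcon i j hij hj (fun h0 hjl => hne ⟨h0, hjl⟩)⟩
      obtain ⟨i', j', hij', hj', ha', hg'⟩ :=
        ih (j - i) (by omega) (by omega) (hp.sub (by omega)) hg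
      have he : j' - i' = (i + j') - (i + i') := by omega
      refine ⟨i + i', i + j', by omega, by omega, ?_, ?_⟩
      · rw [← he]
        exact ha'.congr fun a _ => by rw [add_assoc]
      · rw [← he]
        exact fun hg => hg' (hg.congr fun a _ => by rw [add_assoc])

/-! ### The family of admissible paths that are not good -/

open Classical in
/-- The padded sequences tracing a walk of length `l`. -/
noncomputable def walks (G : SimpleGraph V) (l : ℕ) : Finset (ℕ → V) :=
  Finset.univ.biUnion (walkF G l)

open Classical in
theorem PathSeq.mem_walks {G : SimpleGraph V} {l : ℕ} {q : ℕ → V} (hq : PathSeq G l q)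
    (hpad : PadSeq l q) : q ∈ walks G l :=
  Finset.mem_biUnion.2 ⟨q 0, Finset.mem_univ _, mem_walkF G l q hpad hq.1⟩

open Classical in
/-- The padded admissible paths of length `l`. -/
noncomputable def admF (G : SimpleGraph V) (L : ℝ) (l : ℕ) : Finset (ℕ → V) :=
  (walks G l).filter fun q => PadSeq l q ∧ Admissible G L l q

theorem mem_admF {G : SimpleGraph V} {L : ℝ} {l : ℕ} {q : ℕ → V} :
    q ∈ admF G L l ↔ PadSeq l q ∧ Admissible G L l q := by
  simp only [admF, Finset.mem_filter, and_iff_right_iff_imp]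
  exact fun h => h.2.1.mem_walks h.1

open Classical in
/-- The padded paths of length `l` that are admissible but not good. -/
noncomputable def badF (G : SimpleGraph V) (L : ℝ) (l : ℕ) : Finset (ℕ → V) :=
  (admF G L l).filter fun q => ¬ Good G L l q

theorem mem_badF {G : SimpleGraph V} {L : ℝ} {l : ℕ} {q : ℕ → V} :
    q ∈ badF G L l ↔ PadSeq l q ∧ Admissible G L l q ∧ ¬ Good G L l q := by
  simp only [badF, Finset.mem_filter, mem_admF, and_assoc]

open Classical in
theorem good_iff_card {G : SimpleGraph V} {L : ℝ} {l : ℕ} {p : ℕ → V} :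
    Good G L l p ↔ Admissible G L l p ∧
      (((admF G L l).filter fun q => q 0 = p 0 ∧ q l = p l).card : ℝ) ≤ L ^ 5 ^ l := by
  rw [good_iff_admissible, fBound, ← Set.ncard_coe_finset]
  have : {q : ℕ → V | q 0 = p 0 ∧ q l = p l ∧ PadSeq l q ∧ Admissible G L l q} =
      ↑((admF G L l).filter fun q => q 0 = p 0 ∧ q l = p l) := by
    ext q
    simp only [Set.mem_ofPred_eq, Finset.coe_filter, mem_admF]
    tauto
  rw [this]

theorem card_good_le {G : SimpleGraph V} {L : ℝ} (hL : 1 ≤ L) {l : ℕ} {x y : V}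
    (S : Finset (ℕ → V)) (hS : ∀ q ∈ S, PadSeq l q ∧ Good G L l q ∧ q 0 = x ∧ q l = y) :
    (S.card : ℝ) ≤ L ^ 5 ^ l := by
  classical
  rcases S.eq_empty_or_nonempty with rfl | ⟨q, hq⟩
  · simp only [Finset.card_empty, Nat.cast_zero]
    positivity
  · obtain ⟨-, hg, hx, hy⟩ := hS q hq
    refine le_trans ?_ (good_iff_card.1 hg).2
    refine Nat.cast_le.2 (Finset.card_le_card fun q' hq' => ?_)
    obtain ⟨hp', hg', hx', hy'⟩ := hS q' hq'
    exact Finset.mem_filter.2 ⟨mem_admF.2 ⟨hp', (good_iff_card.1 hg').1⟩,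
      hx'.trans hx.symm, hy'.trans hy.symm⟩

/-- There is only one path of length `1` between two given vertices, so paths of length `1` are
good. -/
theorem badF_one {G : SimpleGraph V} {L : ℝ} (hL : 1 ≤ L) : badF G L 1 = ∅ := by
  classical
  refine Finset.eq_empty_of_forall_notMem fun q hq => ?_
  obtain ⟨-, ha, hg⟩ := mem_badF.1 hq
  refine hg (good_iff_card.2 ⟨ha, ?_⟩)
  have h1 : ((admF G L 1).filter fun q' => q' 0 = q 0 ∧ q' 1 = q 1).card ≤ 1 := by
    refine Finset.card_le_one.2 fun a ha b hb => ?_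
    obtain ⟨ha, ha0, ha1⟩ := Finset.mem_filter.1 ha
    obtain ⟨hb, hb0, hb1⟩ := Finset.mem_filter.1 hb
    funext i
    cases i with
    | zero => rw [ha0, hb0]
    | succ i =>
      rw [(mem_admF.1 ha).1 (i + 1) (by omega), (mem_admF.1 hb).1 (i + 1) (by omega), ha1, hb1]
  exact (Nat.cast_le.2 h1).trans (by simpa using one_le_pow₀ hL)

open Classical in
/-- If `q` is admissible but not good, so are all admissible paths with the same ends, and there
are more than `f(l, L)` of them. -/
theorem lt_card_badF_ends {G : SimpleGraph V} {L : ℝ} {l : ℕ} {q : ℕ → V} (hq : q ∈ badF G L l) :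
    L ^ 5 ^ l < (((badF G L l).filter fun q' => q' 0 = q 0 ∧ q' l = q l).card : ℝ) := by
  obtain ⟨-, ha, hg⟩ := mem_badF.1 hq
  rw [good_iff_card, not_and, not_le] at hg
  refine (hg ha).trans_le (Nat.cast_le.2 (Finset.card_le_card fun q' hq' => ?_))
  obtain ⟨ha', h0, hl⟩ := Finset.mem_filter.1 hq'
  refine Finset.mem_filter.2 ⟨mem_badF.2 ⟨(mem_admF.1 ha').1, (mem_admF.1 ha').2, ?_⟩, h0, hl⟩
  rw [good_iff_card, not_and, not_le, h0, hl]
  exact fun _ => hg ha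

open Classical in
/-- A member of `badF` through `u` at position `j` is determined by its two parts before and after
`u`, both of which are good. -/
theorem card_badF_through {G : SimpleGraph V} {L : ℝ} (hL : 1 ≤ L) {l : ℕ} (x y u : V) {j : ℕ}
    (hj : 0 < j) (hjl : j < l) :
    ((badF G L l).filter fun q => q 0 = x ∧ q l = y ∧ q j = u).card ≤
      ⌊L ^ 5 ^ (l - 1)⌋₊ ^ 2 := by
  set S := (badF G L l).filter fun q => q 0 = x ∧ q l = y ∧ q j = u with hS
  have hmem : ∀ q ∈ S, PadSeq l q ∧ Admissible G L l q ∧ q 0 = x ∧ q l = y ∧ q j = u := by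
    intro q hq
    obtain ⟨hq, h⟩ := Finset.mem_filter.1 hq
    exact ⟨(mem_badF.1 hq).1, (mem_badF.1 hq).2.1, h⟩
  have hmono : ∀ i, i ≤ l - 1 → L ^ 5 ^ i ≤ L ^ 5 ^ (l - 1) := fun i hi =>
    pow_le_pow_right₀ hL (Nat.pow_le_pow_right (by norm_num) hi)
  let g₁ : (ℕ → V) → ℕ → V := fun q a => q (min a j)
  let g₂ : (ℕ → V) → ℕ → V := fun q a => q (j + a)
  have h1 : (S.image g₁).card ≤ ⌊L ^ 5 ^ (l - 1)⌋₊ := by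
    refine Nat.le_floor ((card_good_le (G := G) hL (l := j) (x := x) (y := u) _ fun p hp => ?_).trans
      (hmono j (by omega)))
    obtain ⟨q, hq, rfl⟩ := Finset.mem_image.1 hp
    obtain ⟨hpad, ha, h0, hl, hu⟩ := hmem q hq
    refine ⟨fun i hi => by simp [g₁, hi], ?_, by simpa [g₁] using h0, by simpa [g₁] using hu⟩
    exact (ha.2 0 j hj hjl.le (by omega)).congr fun i hi => by
      simp only [g₁, zero_add]
      rw [min_eq_left (by omega)]
  have h2 : (S.image g₂).card ≤ ⌊L ^ 5 ^ (l - 1)⌋₊ := by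
    refine Nat.le_floor ((card_good_le (G := G) hL (l := l - j) (x := u) (y := y) _ fun p hp => ?_).trans
      (hmono (l - j) (by omega)))
    obtain ⟨q, hq, rfl⟩ := Finset.mem_image.1 hp
    obtain ⟨hpad, ha, h0, hl, hu⟩ := hmem q hq
    refine ⟨fun i hi => ?_, ha.2 j l hjl le_rfl (by omega), hu, ?_⟩
    · simp only [g₂]
      rw [hpad _ (by omega), hpad (j + (l - j)) (by omega)]
    · simp only [g₂]
      rw [show j + (l - j) = l by omega, hl]
  rw [pow_two]
  refine le_trans ?_ (Nat.mul_le_mul h1 h2)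
  rw [← Finset.card_product]
  refine Finset.card_le_card_of_injOn (fun q => (g₁ q, g₂ q)) (fun q hq => ?_) ?_
  · exact Finset.mem_product.2 ⟨Finset.mem_image_of_mem _ hq, Finset.mem_image_of_mem _ hq⟩
  · intro q _ q' _ h
    obtain ⟨e1, e2⟩ := Prod.mk.inj h
    funext i
    rcases le_total i j with hi | hi
    · simpa [g₁, hi] using congrFun e1 i
    · have := congrFun e2 (i - j)
      simp only [g₂] at this
      rwa [show j + (i - j) = i by omega] at this

open Classical in
theorem card_badF_tails {G : SimpleGraph V} {L : ℝ} (hL : 1 ≤ L) {l : ℕ} (hl : 2 ≤ l) (w y : V) :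
    (((badF G L l).filter fun q => q 1 = w ∧ q l = y).image tl).card ≤ ⌊L ^ 5 ^ (l - 1)⌋₊ := by
  refine Nat.le_floor (card_good_le (G := G) hL (l := l - 1) (x := w) (y := y) _ fun p hp => ?_)
  obtain ⟨q, hq, rfl⟩ := Finset.mem_image.1 hp
  obtain ⟨hq, h1, hy⟩ := Finset.mem_filter.1 hq
  obtain ⟨hpad, ha, -⟩ := mem_badF.1 hq
  refine ⟨fun i hi => ?_, ?_, h1, ?_⟩
  · simp only [tl]
    rw [hpad _ (by omega), hpad (l - 1 + 1) (by omega)]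
  · exact (ha.2 1 l (by omega) le_rfl (by omega)).congr fun i _ => by rw [tl, add_comm]
  · rw [tl, show l - 1 + 1 = l by omega, hy]

/-! ### Counting paths that are not good -/

/-- The padded segment `p i, …, p (i + l)` of `p`. -/
def seg (p : ℕ → V) (i l : ℕ) : ℕ → V := fun a => p (i + min a l)

open Classical in
/-- A path containing a prescribed segment is determined by the walks extending that segment to
the left and to the right. -/
theorem card_seg_mem_le {G : SimpleGraph V} {Δ k i j : ℕ} (hΔ : ∀ v, (nb G v).card ≤ Δ)
    (hij : i ≤ j) (hjk : j ≤ k) (A S : Finset (ℕ → V))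
    (hS : ∀ p ∈ S, PadSeq k p ∧ PathSeq G k p ∧ seg p i (j - i) ∈ A) :
    S.card ≤ A.card * (Δ ^ i * Δ ^ (k - j)) := by
  let T : Finset (Σ _ : ℕ → V, (ℕ → V) × (ℕ → V)) :=
    A.sigma fun q => walkF G i (q 0) ×ˢ walkF G (k - j) (q (j - i))
  have hT : T.card ≤ A.card * (Δ ^ i * Δ ^ (k - j)) := by
    rw [Finset.card_sigma, ← smul_eq_mul]
    refine Finset.sum_le_card_nsmul _ _ _ fun q _ => ?_
    rw [Finset.card_product]
    exact Nat.mul_le_mul (card_walkF G hΔ _ _) (card_walkF G hΔ _ _)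
  refine le_trans ?_ hT
  refine Finset.card_le_card_of_injOn
    (fun p => ⟨seg p i (j - i), fun a => p (i - a), fun a => p (j + a)⟩) (fun p hp => ?_) ?_
  · obtain ⟨hpad, hpath, hA⟩ := hS p hp
    simp only [T, Finset.coe_sigma, Set.mem_sigma_iff, Finset.mem_coe, Finset.mem_product]
    refine ⟨hA, ?_, ?_⟩
    · have := mem_walkF G i (fun a => p (i - a)) (fun a ha => by
        show p (i - a) = p (i - i)
        rw [Nat.sub_eq_zero_of_le ha, Nat.sub_self])
        (PathSeq.reverse (hpath.sub (i := 0) (j := i) (by omega) |>.congr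
          fun a _ => by rw [zero_add])).1
      simpa [seg] using this
    · have := mem_walkF G (k - j) (fun a => p (j + a)) (fun a ha => by
        show p (j + a) = p (j + (k - j))
        rw [hpad _ (by omega), hpad (j + (k - j)) (by omega)])
        (hpath.sub (by omega)).1
      have he : seg p i (j - i) (j - i) = p (j + 0) := by
        simp only [seg, min_self]
        congr 1
        omega
      rwa [he]
  · intro p _ p' _ h
    simp only [Sigma.mk.injEq, heq_eq_eq, Prod.mk.injEq] at h
    obtain ⟨e1, e2, e3⟩ := h
    funext b
    rcases le_total b i with hb | hb
    · have := congrFun e2 (i - b)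
      rwa [show i - (i - b) = b by omega] at this
    · rcases le_total b j with hb' | hb'
      · have := congrFun e1 (b - i)
        simp only [seg] at this
        rwa [show i + min (b - i) (j - i) = b by omega] at this
      · have := congrFun e3 (b - j)
        rwa [show j + (b - j) = b by omega] at this

open Classical in
/-- If there are few admissible paths of each length that are not good, then there are few paths
that are not good. -/
theorem card_not_good_le {G : SimpleGraph V} {L : ℝ} {Δ k : ℕ} (hL : 1 ≤ L) (hk : 1 ≤ k)
    (hΔ : ∀ v, (nb G v).card ≤ Δ)
    (hbad : ∀ l, 1 ≤ l → l ≤ k →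
      ((badF G L l).card : ℝ) * L ≤ 4 * (Fintype.card V * (Δ : ℝ) ^ l)) :
    ((Set.ncard {q : ℕ → V | PadSeq k q ∧ PathSeq G k q ∧ ¬ Good G L k q} : ℕ) : ℝ) * L ≤
      (k + 1) ^ 2 * (4 * (Fintype.card V * (Δ : ℝ) ^ k)) := by
  set N := (walks G k).filter fun q => PadSeq k q ∧ PathSeq G k q ∧ ¬ Good G L k q with hN
  have hNset : {q : ℕ → V | PadSeq k q ∧ PathSeq G k q ∧ ¬ Good G L k q} = ↑N := by
    ext q
    simp only [hN, Set.mem_ofPred_eq, Finset.coe_filter]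
    exact ⟨fun h => ⟨h.2.1.mem_walks h.1, h⟩, fun h => h.2⟩
  rw [hNset, Set.ncard_coe_finset]
  let I := (Finset.range (k + 1) ×ˢ Finset.range (k + 1)).filter fun ij => ij.1 < ij.2
  let C : ℕ × ℕ → Finset (ℕ → V) := fun ij =>
    N.filter fun q => seg q ij.1 (ij.2 - ij.1) ∈ badF G L (ij.2 - ij.1)
  have hI : I.card ≤ (k + 1) ^ 2 := by
    refine (Finset.card_filter_le _ _).trans ?_
    rw [Finset.card_product, Finset.card_range, pow_two]
  have hsub : N ⊆ I.biUnion C := by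
    intro q hq
    obtain ⟨-, hpad, hpath, hg⟩ := Finset.mem_filter.1 hq
    obtain ⟨i, j, hij, hj, ha, hb⟩ := exists_admissible_not_good hk hpath hg
    refine Finset.mem_biUnion.2 ⟨(i, j), ?_, Finset.mem_filter.2 ⟨hq, mem_badF.2 ⟨?_, ?_, ?_⟩⟩⟩
    · simp only [I, Finset.mem_filter, Finset.mem_product, Finset.mem_range]
      omega
    · intro a ha
      simp only [seg, min_self]
      rw [min_eq_right ha]
    · exact ha.congr fun a ha => by rw [seg, min_eq_left ha]
    · exact fun h => hb (h.congr fun a ha => by rw [seg, min_eq_left ha])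
  have hC : ∀ ij ∈ I, ((C ij).card : ℝ) * L ≤ 4 * (Fintype.card V * (Δ : ℝ) ^ k) := by
    rintro ⟨i, j⟩ hij
    simp only [I, Finset.mem_filter, Finset.mem_product, Finset.mem_range] at hij
    have h1 := card_seg_mem_le (k := k) hΔ hij.2.le (by omega) (badF G L (j - i)) (C (i, j))
      fun p hp => by
        obtain ⟨hpN, hs⟩ := Finset.mem_filter.1 hp
        obtain ⟨-, hpad, hpath, -⟩ := Finset.mem_filter.1 hpN
        exact ⟨hpad, hpath, hs⟩
    have h2 : ((C (i, j)).card : ℝ) ≤ (badF G L (j - i)).card * ((Δ : ℝ) ^ i * Δ ^ (k - j)) := by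
      exact_mod_cast h1
    have h3 := hbad (j - i) (by omega) (by omega)
    calc ((C (i, j)).card : ℝ) * L
        ≤ ((badF G L (j - i)).card * ((Δ : ℝ) ^ i * Δ ^ (k - j))) * L := by gcongr
      _ = ((badF G L (j - i)).card * L) * ((Δ : ℝ) ^ i * Δ ^ (k - j)) := by ring
      _ ≤ (4 * (Fintype.card V * (Δ : ℝ) ^ (j - i))) * ((Δ : ℝ) ^ i * Δ ^ (k - j)) := by gcongr
      _ = 4 * (Fintype.card V * ((Δ : ℝ) ^ (j - i) * Δ ^ i * Δ ^ (k - j))) := by ring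
      _ = 4 * (Fintype.card V * (Δ : ℝ) ^ k) := by
        rw [← pow_add, ← pow_add, show j - i + i + (k - j) = k by omega]
  calc (N.card : ℝ) * L ≤ (∑ ij ∈ I, ((C ij).card : ℝ)) * L := by
        gcongr
        exact_mod_cast (Finset.card_le_card hsub).trans Finset.card_biUnion_le
    _ = ∑ ij ∈ I, ((C ij).card : ℝ) * L := Finset.sum_mul _ _ _
    _ ≤ I.card • (4 * (Fintype.card V * (Δ : ℝ) ^ k)) := Finset.sum_le_card_nsmul _ _ _ hC
    _ = I.card * (4 * (Fintype.card V * (Δ : ℝ) ^ k)) := nsmul_eq_mul _ _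
    _ ≤ (k + 1) ^ 2 * (4 * (Fintype.card V * (Δ : ℝ) ^ k)) := by
        gcongr
        exact_mod_cast hI

/-- Under the absence of the subdivision there are few admissible paths that are not good. -/
theorem card_badF_le {G : SimpleGraph V} {L : ℝ} {Δ k l t : ℕ} (m : Fin t → Fin t → ℕ)
    (hfree : ¬ ContainsMultiSubdiv G t m (2 * k)) (hΔ : ∀ v, (nb G v).card ≤ Δ)
    (hL : ((gammaBound t k m + (avoidBound t k m + 3 * k + 3) + 2 : ℕ) : ℝ) ≤ L)
    (hΔL : L * L ^ 5 ^ (k - 1) ≤ Δ) (hl : 1 ≤ l) (hlk : l ≤ k) :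
    ((badF G L l).card : ℝ) * L ≤ 4 * (Fintype.card V * (Δ : ℝ) ^ l) := by
  classical
  push_cast at hL
  have hg0 : (0 : ℝ) ≤ gammaBound t k m := Nat.cast_nonneg _
  have ha0 : (0 : ℝ) ≤ avoidBound t k m := Nat.cast_nonneg _
  have hk0 : (0 : ℝ) ≤ k := Nat.cast_nonneg _
  have hL2 : 2 ≤ L := by linarith
  have hL1 : 1 ≤ L := by linarith
  by_contra! hlt
  have hne : (badF G L l).Nonempty := by
    rw [Finset.nonempty_iff_ne_empty]
    intro h
    rw [h, Finset.card_empty, Nat.cast_zero, zero_mul] at hlt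
    exact absurd hlt (not_lt.2 (by positivity))
  have hl2 : 2 ≤ l := by
    by_contra h
    obtain rfl : l = 1 := by omega
    rw [badF_one hL1] at hne
    exact Finset.not_nonempty_empty hne
  set γ := ⌊L ^ 5 ^ (l - 1)⌋₊ with hγ
  have hγle : (γ : ℝ) ≤ L ^ 5 ^ (l - 1) := Nat.floor_le (by positivity)
  -- The loss from rounding down is harmless because `L ^ 5 ^ (l - 1) ≥ L ^ 2 ≥ L + 1`.
  have hLγ : L ≤ γ := by
    have h1 : L ^ 2 ≤ L ^ 5 ^ (l - 1) := by
      refine pow_le_pow_right₀ hL1 ?_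
      calc 2 ≤ 5 ^ 1 := by norm_num
        _ ≤ 5 ^ (l - 1) := Nat.pow_le_pow_right (by norm_num) (by omega)
    have h2 := Nat.lt_floor_add_one (L ^ 5 ^ (l - 1))
    rw [← hγ] at h2
    nlinarith
  refine hfree (contains_of_many_paths (γ := γ) (Δ := Δ) (l := l) m (badF G L l)
    (fun q hq => (mem_badF.1 hq).1) (fun q hq => (mem_badF.1 hq).2.1.1) (fun q hq => ?_)
    (fun x y u j hj hjl => card_badF_through hL1 x y u hj hjl)
    (fun w y => card_badF_tails hL1 hl2 w y) hΔ hne ?_ hl2 hlk ?_ ?_)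
  · have h1 : (γ : ℝ) ^ 5 ≤ L ^ 5 ^ l := by
      calc (γ : ℝ) ^ 5 ≤ (L ^ 5 ^ (l - 1)) ^ 5 := by gcongr
        _ = L ^ 5 ^ l := by
          rw [← pow_mul, ← pow_succ, Nat.sub_add_cancel hl]
    exact_mod_cast h1.trans (lt_card_badF_ends hq).le
  · have h1 : ((badF G L l).card : ℝ) * L ≤ (badF G L l).card * γ := by gcongr
    exact_mod_cast hlt.le.trans h1
  · have h1 : (gammaBound t k m : ℝ) ≤ γ := by linarith
    exact_mod_cast h1
  · have h1 : ((avoidBound t k m : ℝ) + 3 * k + 3) * γ ≤ Δ := by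
      refine le_trans ?_ hΔL
      have h2 : L ^ 5 ^ (l - 1) ≤ L ^ 5 ^ (k - 1) :=
        pow_le_pow_right₀ hL1 (Nat.pow_le_pow_right (by norm_num) (by omega))
      exact mul_le_mul (by linarith) (hγle.trans h2) (Nat.cast_nonneg _) (by linarith)
    exact_mod_cast h1

theorem card_nb_le_maxDeg (G : SimpleGraph V) (v : V) : (nb G v).card ≤ maxDeg G := by
  classical
  have h : (nb G v).card = (G.neighborSet v).ncard := by
    rw [← Set.ncard_coe_finset]
    congr 1
    ext w
    simp [nb]
  rw [h]
  refine le_csSup ⟨Fintype.card V, ?_⟩ ⟨v, rfl⟩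
  rintro d ⟨w, rfl⟩
  rw [← Nat.card_eq_fintype_card]
  exact Set.ncard_le_card _

/-! ### The theorem -/

/-- **Lemma 3.1.** With `H = F^{2k-1}`: there is `L0` (depending only on
`|V(H)|, k, K`) such that for `L ≥ L0` and `n` large, if `G` is an `H`-free
`K`-almost-regular graph on `n` vertices with minimum degree `δ ≥ L^{100^k·|V(H)|}`, then
the number of paths of length `k` that are not `L`-good is at most
`4(k+1)²K^k · n·δ^k / L`. -/
theorem count_not_good_paths_of_length_k
    (t : ℕ) (m : Fin t → Fin t → ℕ)
    (hsymm : ∀ a b, m a b = m b a) (hirr : ∀ a, m a a = 0)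
    (k K : ℕ) (hk : 1 ≤ k) (hK : 1 ≤ K) :
    ∃ (L0 : ℝ) (n0 : ℕ), 1 < L0 ∧
      ∀ n : ℕ, n0 ≤ n → ∀ L : ℝ, L0 ≤ L → ∀ G : SimpleGraph (Fin n),
        ¬ ContainsMultiSubdiv G t m (2 * k) →
        maxDeg G ≤ K * minDeg G →
        L ^ (100 ^ k * nH t k m) ≤ (minDeg G : ℝ) →
        (Set.ncard {q : ℕ → Fin n | PadSeq k q ∧ PathSeq G k q ∧ ¬ Good G L k q} : ℝ) ≤
          4 * (k + 1) ^ 2 * K ^ k * n * (minDeg G : ℝ) ^ k / L := by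
  refine ⟨((gammaBound t k m + (avoidBound t k m + 3 * k + 3) + 2 : ℕ) : ℝ), 0,
    by exact_mod_cast (by omega : 1 < gammaBound t k m + (avoidBound t k m + 3 * k + 3) + 2), ?_⟩
  intro n _ L hL G hfree hmax hmin
  have hL1 : 1 ≤ L := by
    refine le_trans ?_ hL
    exact_mod_cast (by omega : 1 ≤ gammaBound t k m + (avoidBound t k m + 3 * k + 3) + 2)
  have ht : 1 ≤ t := by
    by_contra h
    obtain rfl : t = 0 := by omega
    exact hfree ⟨Fin.elim0, fun a => a.elim0, fun a => a.elim0, fun a => a.elim0,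
      fun a => a.elim0, fun a => a.elim0⟩
  have hΔ : ∀ v, (nb G v).card ≤ K * minDeg G := fun v => (card_nb_le_maxDeg G v).trans hmax
  have hΔL : L * L ^ 5 ^ (k - 1) ≤ ((K * minDeg G : ℕ) : ℝ) := by
    have h1 : 5 ^ (k - 1) + 1 ≤ 100 ^ k * nH t k m := by
      calc 5 ^ (k - 1) + 1 ≤ 5 ^ (k - 1) * 5 := by
            have := Nat.one_le_pow (k - 1) 5 (by norm_num)
            omega
        _ = 5 ^ k := by rw [← pow_succ, Nat.sub_add_cancel hk]
        _ ≤ 100 ^ k := Nat.pow_le_pow_left (by norm_num) k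
        _ ≤ 100 ^ k * nH t k m := Nat.le_mul_of_pos_right _ (by unfold nH; omega)
    calc L * L ^ 5 ^ (k - 1) = L ^ (5 ^ (k - 1) + 1) := (pow_succ' _ _).symm
      _ ≤ L ^ (100 ^ k * nH t k m) := pow_le_pow_right₀ hL1 h1
      _ ≤ minDeg G := hmin
      _ ≤ ((K * minDeg G : ℕ) : ℝ) := by exact_mod_cast Nat.le_mul_of_pos_left _ hK
  have key := card_not_good_le hL1 hk hΔ fun l hl hlk => card_badF_le m hfree hΔ hL hΔL hl hlk
  rw [le_div_iff₀ (by linarith)]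
  refine key.trans_eq ?_
  rw [Fintype.card_fin]
  push_cast
  ring
end
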